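/- There is an absolute constant c > 0 such that for every completely multiplicative function f : ℕ → [−1,1] and every real x ≥ 3, one has L_f(x) ≥ −c/(log x)^{1−2/π}. -/

import Mathlib

/-!
All sums are studied on the logarithmic scale `v = log x`: `logConv a ρ v` denotes
`∑_{n ≤ e^v} a(n)/n · ρ(v - log n)`, so that `L_f(e^v)` is `logConv f 1 v`.

*Reduction.* Since `1 * f ≥ 0`, one has `logConv (1 * f) q ≥ 0` for every kernel `q ≥ 0`. The
kernel `q = smoothKernel` is a mixture of two differences of exponentials, the mixing parameter
being adjusted by means of Euler's constant so that `r = 1_{v ≥ 0} - logConv 1 q` is `O(e^{-v})`, is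
Lipschitz on `[v, ∞)` with constant `O(e^{-v})` for `v ≥ 0`, and has a Laplace transform
`r̂(s) = 1/s - ζ(1+s) q̂(s)` that vanishes at `s = 0`. Hence `L_f(e^X) ≥ E(X)` with
`E = logConv f r` (`IsCM.remainderSum_le_Lsum`), and it suffices to show `|E(X)| ≪ X^{2/π - 1}`.

*The transform of `E`* is `F(1+s) r̂(s)`, with `F` the Dirichlet series of `f`. From
`log |F(1+σ+it)| = ∑_p f(p) p^{-1-σ} cos(t log p) + O(1)` and `f(p) cos θ ≤ |cos θ|`, the Fourier
expansion of `|cos|` bounds `log |F|` by a combination of values of `log |ζ(1+σ+2int)|`. The mean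
value `2/π` of `|cos|` is the coefficient of `log (1/σ)`, and the other coefficients have absolute
sum `2/π`, whence `F(1+σ+it) r̂(σ+it) ≪ σ^{-2/π} (1+|t|)^{-(1-3/(2π))}`. The bound for `log |ζ|`
near the 1-line comes from the 3-4-1 inequality.

*Mean values.* As `f log = (Λ f) * f`, one has `v E(v) = logConv (Λ f) E v + O(1)`
(`IsCM.mul_remainderSum`). By Plancherel the mean square of `logConv (Λ f) E` with weight `e^{-2σv}`
is an integral over `t` of `|∑ Λ(n) f(n) n^{-1-s}|² |F(1+s) r̂(s)|²`. Chebyshev's bound and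
Plancherel give mean squares `O(1/σ)` for the first factor over each unit window of `t`, and the
square of the second factor is summable over the windows because `2 - 3/π > 1`; the result is
`O(σ^{-4/π-1})`. Passing from second to first moments on dyadic blocks yields
`∫_0^X |E| ≪ X^{2/π}`.

*Pointwise bound.* In `X |E(X)| ≤ ∑_d Λ(d)/d |E(X - log d)| + O(1)` the terms with
`log d ≤ X^{2/π} + 1` contribute `O(X^{2/π})` by Mertens. In the others `E` is replaced by its
average over a window of length `η = X^{-(1-2/π)}`, and a Brun–Titchmarsh bound for `Λ` in windows
of length `η` (deduced here from Selberg's symmetry formula) bounds the sum by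
`∫_0^X |E| + O(X^{2/π})`.
-/
open Finset

noncomputable def Lsum (h : ℕ → ℝ) (x : ℝ) : ℝ := ∑ n ∈ Finset.Icc 1 ⌊x⌋₊, h n / n

def IsCM (f : ℕ → ℝ) : Prop := f 1 = 1 ∧ ∀ m n : ℕ, f (m * n) = f m * f n

/-! ### Plancherel's theorem -/

section Plancherel

open MeasureTheory FourierTransform SchwartzMap

open scoped ContDiff

variable {V F : Type*} [NormedAddCommGroup V] [InnerProductSpace ℝ V] [FiniteDimensional ℝ V]
  [MeasurableSpace V] [BorelSpace V] [NormedAddCommGroup F] [InnerProductSpace ℂ F]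
  [CompleteSpace F] {φ : V → F}

theorem fourier_ae_eq_fourier_toLp (h1 : Integrable φ) (h2 : MemLp φ 2) :
    𝓕 φ =ᵐ[volume] (𝓕 (h2.toLp φ) : Lp (α := V) F 2) := by
  have hcont : Continuous (𝓕 φ) :=
    VectorFourier.fourierIntegral_continuous Real.continuous_fourierChar continuous_inner h1
  refine ae_eq_of_integral_contDiff_smul_eq hcont.locallyIntegrable
    ((Lp.memLp _).locallyIntegrable (by norm_num)) fun g hg hgs ↦ ?_
  let G : 𝓢(V, ℂ) := HasCompactSupport.toSchwartzMap (f := fun x ↦ (g x : ℂ))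
    (hgs.comp_left (g := fun x : ℝ ↦ (x : ℂ)) (by simp)) (Complex.ofRealCLM.contDiff.comp hg)
  have swap_Lp : ∫ x, (𝓕 G) x • h2.toLp φ x =
      ∫ x, G x • (𝓕 (h2.toLp φ) : Lp F 2 (volume : Measure V)) x := by
    have key := DFunLike.congr_fun (Lp.fourier_toTemperedDistribution_eq (h2.toLp φ)) G
    erw [TemperedDistribution.fourier_apply, Lp.toTemperedDistribution_apply (μ := volume),
      Lp.toTemperedDistribution_apply (μ := volume)] at key
    exact key
  have swap_integral : ∫ x, 𝓕 G x • φ x = ∫ x, G x • 𝓕 φ x := by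
    rw [SchwartzMap.fourier_coe]
    have flip := VectorFourier.integral_fourierIntegral_smul_eq_flip (L := innerₗ V) (μ := volume)
      (ν := volume) Real.continuous_fourierChar continuous_inner G.integrable h1
    rwa [flip_innerₗ] at flip
  calc ∫ x, g x • 𝓕 φ x = ∫ x, G x • 𝓕 φ x := rfl
    _ = ∫ x, (𝓕 G) x • h2.toLp φ x := by
        rw [← swap_integral]
        refine integral_congr_ae ?_
        filter_upwards [h2.coeFn_toLp] with x hx
        rw [hx]
    _ = ∫ x, g x • (𝓕 (h2.toLp φ) : Lp F 2 (volume : Measure V)) x := swap_Lp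

theorem memLp_two_fourier (h1 : Integrable φ) (h2 : MemLp φ 2) : MemLp (𝓕 φ) 2 :=
  (memLp_congr_ae (fourier_ae_eq_fourier_toLp h1 h2)).2 (Lp.memLp _)

theorem integral_norm_fourier_sq (h1 : Integrable φ) (h2 : MemLp φ 2) :
    ∫ ξ, ‖𝓕 φ ξ‖ ^ 2 = ∫ v, ‖φ v‖ ^ 2 := by
  have norm_sq_eq (g : Lp F 2 (volume : Measure V)) : ‖g‖ ^ 2 = ∫ v, ‖g v‖ ^ 2 := by
    rw [← @inner_self_eq_norm_sq ℂ, L2.inner_def, ← integral_re (L2.integrable_inner _ _)]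
    simp only [inner_self_eq_norm_sq]
  calc ∫ ξ, ‖𝓕 φ ξ‖ ^ 2 = ‖𝓕 (h2.toLp φ)‖ ^ 2 := by
        rw [norm_sq_eq]
        refine integral_congr_ae ?_
        filter_upwards [fourier_ae_eq_fourier_toLp h1 h2] with x hx
        rw [hx]
    _ = ∫ v, ‖φ v‖ ^ 2 := by
        rw [Lp.norm_fourier_eq, norm_sq_eq]
        refine integral_congr_ae ?_
        filter_upwards [h2.coeFn_toLp] with x hx
        rw [hx]

end Plancherel

section AngularFourier

open MeasureTheory FourierTransform

variable {φ : ℝ → ℂ}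

theorem integral_mul_exp_eq_fourier (φ : ℝ → ℂ) (t : ℝ) :
    ∫ v, φ v * Complex.exp (-(Complex.I * t * v)) = 𝓕 φ (t * (2 * Real.pi)⁻¹) := by
  rw [Real.fourier_real_eq_integral_exp_smul]
  refine integral_congr_ae (.of_forall fun v ↦ ?_)
  have : (Real.pi : ℂ) ≠ 0 := by exact_mod_cast Real.pi_ne_zero
  simp only [smul_eq_mul, mul_comm (φ v)]
  congr 2
  push_cast
  field_simp

theorem integrable_norm_sq_integral_mul_exp (h1 : Integrable φ) (h2 : MemLp φ 2) :
    Integrable fun t : ℝ ↦ ‖∫ v, φ v * Complex.exp (-(Complex.I * t * v))‖ ^ 2 := by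
  simp only [integral_mul_exp_eq_fourier]
  exact ((memLp_two_fourier h1 h2).integrable_norm_pow two_ne_zero).comp_mul_right'
    (by positivity)

theorem integral_norm_sq_integral_mul_exp (h1 : Integrable φ) (h2 : MemLp φ 2) :
    ∫ t : ℝ, ‖∫ v, φ v * Complex.exp (-(Complex.I * t * v))‖ ^ 2 =
      2 * Real.pi * ∫ v, ‖φ v‖ ^ 2 := by
  simp only [integral_mul_exp_eq_fourier]
  rw [Measure.integral_comp_mul_right (fun ξ ↦ ‖𝓕 φ ξ‖ ^ 2), integral_norm_fourier_sq h1 h2,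
    smul_eq_mul, inv_inv, abs_of_pos (by positivity)]

end AngularFourier

/-! ### Chebyshev and Mertens estimates -/

section Mertens

open Real

open scoped ArithmeticFunction.vonMangoldt ArithmeticFunction.Moebius Chebyshev

theorem mul_log_sub_log_le {a b : ℝ} (ha : 0 < a) (hb : 0 < b) :
    b * (log a - log b) ≤ a - b := by
  rw [← log_div ha.ne' hb.ne']
  calc b * log (a / b) ≤ b * (a / b - 1) := by gcongr; exact log_le_sub_one_of_pos (by positivity)
    _ = a - b := by field_simp

theorem sum_sum_Icc_floor_div {M : Type*} [AddCommMonoid M] (x : ℝ) (G : ℕ → ℕ → M) :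
    ∑ d ∈ Icc 1 ⌊x⌋₊, ∑ m ∈ Icc 1 ⌊x / d⌋₊, G d m =
      ∑ n ∈ Icc 1 ⌊x⌋₊, ∑ p ∈ n.divisorsAntidiagonal, G p.1 p.2 := by
  rw [sum_sigma', sum_sigma']
  refine sum_bij' (fun a _ ↦ ⟨a.1 * a.2, (a.1, a.2)⟩) (fun b _ ↦ ⟨b.2.1, b.2.2⟩) ?_ ?_ ?_ ?_ ?_
  · rintro ⟨d, m⟩ h
    simp only [mem_sigma, mem_Icc, Nat.floor_div_natCast] at h
    obtain ⟨⟨hd, -⟩, hm, hle⟩ := h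
    have hpos : 0 < d * m := Nat.mul_pos hd hm
    simp only [mem_sigma, mem_Icc, Nat.mem_divisorsAntidiagonal]
    exact ⟨⟨hpos, by rwa [mul_comm, ← Nat.le_div_iff_mul_le hd]⟩, trivial, hpos.ne'⟩
  · rintro ⟨n, d, m⟩ h
    simp only [mem_sigma, mem_Icc, Nat.mem_divisorsAntidiagonal] at h
    obtain ⟨⟨hn, hle⟩, rfl, -⟩ := h
    have hd : 0 < d := Nat.pos_of_mul_pos_right hn
    have hm : 0 < m := Nat.pos_of_mul_pos_left hn
    simp only [mem_sigma, mem_Icc, Nat.floor_div_natCast]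
    exact ⟨⟨hd, (Nat.le_mul_of_pos_right d hm).trans hle⟩, hm,
      by rwa [Nat.le_div_iff_mul_le hd, mul_comm]⟩
  · exact fun _ _ ↦ rfl
  · rintro ⟨n, d, m⟩ h
    simp only [mem_sigma, Nat.mem_divisorsAntidiagonal] at h
    obtain ⟨-, rfl, -⟩ := h
    rfl
  · exact fun _ _ ↦ rfl

theorem sum_log_mem_Icc {N : ℕ} (hN : 1 ≤ N) :
    ∑ n ∈ Icc 1 N, log n ∈ Set.Icc (N * log N - N + 1) (N * log N - N + 1 + log N) := by
  induction N, hN using Nat.le_induction with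
  | base => simp
  | succ N hN ih =>
    have hN0 : (0 : ℝ) < N := by exact_mod_cast hN
    have up := mul_log_sub_log_le (a := N + 1) (by positivity) hN0
    have down := mul_log_sub_log_le (b := N + 1) hN0 (by positivity)
    rw [sum_Icc_succ_top (by lia)]
    push_cast
    constructor <;> linarith [ih.1, ih.2]

theorem abs_sum_log_sub_le {x : ℝ} (hx : 1 ≤ x) :
    |∑ n ∈ Icc 1 ⌊x⌋₊, log n - (x * log x - x)| ≤ 1 + log x := by
  have hN : 1 ≤ ⌊x⌋₊ := Nat.le_floor (by simpa using hx)
  have hN1 : (1 : ℝ) ≤ ⌊x⌋₊ := by exact_mod_cast hN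
  have floor_le : (⌊x⌋₊ : ℝ) ≤ x := Nat.floor_le (by linarith)
  have lt_floor : x < ⌊x⌋₊ + 1 := Nat.lt_floor_add_one x
  obtain ⟨lower, upper⟩ := sum_log_mem_Icc hN
  have up := mul_log_sub_log_le (a := x) (b := ⌊x⌋₊) (by linarith) (by linarith)
  have down := mul_log_sub_log_le (a := ⌊x⌋₊) (b := x) (by linarith) (by linarith)
  have log_floor_le : log ⌊x⌋₊ ≤ log x := log_le_log (by linarith) floor_le
  rw [abs_le]
  constructor <;> nlinarith [log_nonneg hN1]

theorem sum_log_eq_sum_psi (x : ℝ) :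
    ∑ n ∈ Icc 1 ⌊x⌋₊, log n = ∑ m ∈ Icc 1 ⌊x⌋₊, ψ (x / m) := by
  refine .trans (sum_congr rfl fun n _ ↦ ?_) (sum_sum_Icc_floor_div x fun _ m ↦ Λ m).symm
  rw [← ArithmeticFunction.vonMangoldt_sum, Nat.sum_divisorsAntidiagonal' (f := fun _ m ↦ Λ m)]

theorem sum_log_eq_sum_vonMangoldt_mul_floor (x : ℝ) :
    ∑ n ∈ Icc 1 ⌊x⌋₊, log n = ∑ d ∈ Icc 1 ⌊x⌋₊, Λ d * ⌊x / d⌋₊ := by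
  calc ∑ n ∈ Icc 1 ⌊x⌋₊, log n = ∑ n ∈ Icc 1 ⌊x⌋₊, ∑ p ∈ n.divisorsAntidiagonal, Λ p.1 := by
        refine sum_congr rfl fun n _ ↦ ?_
        rw [← ArithmeticFunction.vonMangoldt_sum,
          Nat.sum_divisorsAntidiagonal (f := fun d _ ↦ Λ d)]
    _ = ∑ d ∈ Icc 1 ⌊x⌋₊, Λ d * ⌊x / d⌋₊ := by
        rw [← sum_sum_Icc_floor_div x fun d _ ↦ Λ d]
        simp [mul_comm]

theorem exists_abs_sum_vonMangoldt_div_sub_log_le : ∃ C : ℝ, 0 < C ∧ ∀ x : ℝ, 1 ≤ x →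
    |∑ d ∈ Icc 1 ⌊x⌋₊, Λ d / d - log x| ≤ C := by
  refine ⟨log 4 + 4 + 3, by positivity, fun x hx ↦ ?_⟩
  have hx0 : 0 < x := by linarith
  have sum_log := abs_le.1 (abs_sum_log_sub_le hx)
  rw [sum_log_eq_sum_vonMangoldt_mul_floor] at sum_log
  have upper : ∑ d ∈ Icc 1 ⌊x⌋₊, Λ d * ⌊x / d⌋₊ ≤ x * ∑ d ∈ Icc 1 ⌊x⌋₊, Λ d / d := by
    rw [mul_sum]
    refine sum_le_sum fun d _ ↦ ?_
    calc Λ d * ⌊x / d⌋₊ ≤ Λ d * (x / d) := by gcongr; exact Nat.floor_le (by positivity)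
      _ = x * (Λ d / d) := by ring
  have lower : x * ∑ d ∈ Icc 1 ⌊x⌋₊, Λ d / d - ψ x ≤ ∑ d ∈ Icc 1 ⌊x⌋₊, Λ d * ⌊x / d⌋₊ := by
    rw [mul_sum, show ψ x = ∑ d ∈ Icc 1 ⌊x⌋₊, Λ d from rfl, ← sum_sub_distrib]
    refine sum_le_sum fun d _ ↦ ?_
    calc x * (Λ d / d) - Λ d = Λ d * (x / d - 1) := by ring
      _ ≤ Λ d * ⌊x / d⌋₊ := by gcongr; linarith [Nat.lt_floor_add_one (x / d)]
  have chebyshev := Chebyshev.psi_le_const_mul_self hx0.le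
  have log_le := log_le_sub_one_of_pos hx0
  rw [abs_le]
  constructor <;> refine le_of_mul_le_mul_left ?_ hx0 <;> linarith [sum_log.1, sum_log.2]

theorem abs_sum_one_div_sub_log_sub_eulerMascheroniConstant_le {x : ℝ} (hx : 1 ≤ x) :
    |∑ n ∈ Icc 1 ⌊x⌋₊, (1 : ℝ) / n - log x - eulerMascheroniConstant| ≤ 1 / x := by
  have hx0 : 0 < x := by linarith
  have hN : 1 ≤ ⌊x⌋₊ := Nat.le_floor (by simpa using hx)
  have floor_le : (⌊x⌋₊ : ℝ) ≤ x := Nat.floor_le (by linarith)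
  have lt_floor : x < ⌊x⌋₊ + 1 := Nat.lt_floor_add_one x
  generalize ⌊x⌋₊ = N at *
  have sum_eq : ∑ n ∈ Icc 1 N, (1 : ℝ) / n = harmonic N := by
    rw [harmonic_eq_sum_Icc]; push_cast; simp
  have γ_gt := eulerMascheroniSeq_lt_eulerMascheroniConstant N
  have γ_lt := eulerMascheroniConstant_lt_eulerMascheroniSeq' (N + 1)
  rw [eulerMascheroniSeq] at γ_gt
  rw [eulerMascheroniSeq', if_neg (by lia), harmonic_succ] at γ_lt
  push_cast at γ_lt
  have log_succ_le : log (N + 1) - log x ≤ 1 / x := by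
    have := mul_log_sub_log_le (a := (N : ℝ) + 1) (by positivity) hx0
    rw [le_div_iff₀ hx0]
    linarith
  have log_le_succ : log x ≤ log (N + 1) := log_le_log hx0 lt_floor.le
  have inv_succ_le : ((N : ℝ) + 1)⁻¹ ≤ 1 / x := by
    rw [one_div]
    exact inv_anti₀ hx0 lt_floor.le
  rw [sum_eq, abs_le]
  constructor <;> linarith

end Mertens

/-! ### Selberg's formula and primes in short intervals -/

section Selberg

open Real

open scoped ArithmeticFunction.vonMangoldt ArithmeticFunction.Moebius Chebyshev

theorem sum_divisorsAntidiagonal_moebius_fst (n : ℕ) :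
    ∑ p ∈ n.divisorsAntidiagonal, (μ p.1 : ℝ) = if n = 1 then 1 else 0 := by
  rw [Nat.sum_divisorsAntidiagonal (f := fun d _ ↦ (μ d : ℝ))]
  have := congrArg (fun F ↦ F n) ArithmeticFunction.moebius_mul_coe_zeta
  simp only [ArithmeticFunction.coe_mul_zeta_apply, ArithmeticFunction.one_apply] at this
  exact_mod_cast this

theorem sum_divisorsAntidiagonal_moebius_mul_log (n : ℕ) :
    ∑ p ∈ n.divisorsAntidiagonal, (μ p.1 : ℝ) * log p.2 = Λ n := by
  rw [← ArithmeticFunction.moebius_mul_log_eq_vonMangoldt, ArithmeticFunction.mul_apply]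
  simp

/-- The Tatuzawa–Iseki identity. -/
theorem sum_moebius_mul_log_mul_sum (h : ℝ → ℝ) {x : ℝ} (hx : 1 ≤ x) :
    ∑ d ∈ Icc 1 ⌊x⌋₊, (μ d : ℝ) * log (x / d) * ∑ m ∈ Icc 1 ⌊x / d⌋₊, h (x / d / m) =
      h x * log x + ∑ n ∈ Icc 1 ⌊x⌋₊, Λ n * h (x / n) := by
  have hx0 : x ≠ 0 := by linarith
  have hN : 1 ≤ ⌊x⌋₊ := Nat.le_floor (by simpa using hx)
  simp only [mul_sum]
  rw [sum_sum_Icc_floor_div x fun d m ↦ (μ d : ℝ) * log (x / d) * h (x / d / m)]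
  have inner_sum : ∀ n ∈ Icc 1 ⌊x⌋₊,
      ∑ p ∈ n.divisorsAntidiagonal, (μ p.1 : ℝ) * log (x / p.1) * h (x / p.1 / p.2) =
        (if n = 1 then h x * log x else 0) + Λ n * h (x / n) := by
    intro n hn
    have hn0 : (n : ℝ) ≠ 0 := by exact_mod_cast (Nat.one_le_iff_ne_zero.1 (mem_Icc.1 hn).1)
    have split : ∀ p ∈ n.divisorsAntidiagonal,
        (μ p.1 : ℝ) * log (x / p.1) * h (x / p.1 / p.2) =
          μ p.1 * (log (x / n) * h (x / n)) + μ p.1 * log p.2 * h (x / n) := by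
      intro p hp
      have hp' : (n : ℝ) = p.1 * p.2 := by exact_mod_cast (Nat.mem_divisorsAntidiagonal.1 hp).1.symm
      have h1 : (p.1 : ℝ) ≠ 0 := left_ne_zero_of_mul (hp' ▸ hn0)
      have h2 : (p.2 : ℝ) ≠ 0 := right_ne_zero_of_mul (hp' ▸ hn0)
      rw [div_div, ← hp', log_div hx0 h1, log_div hx0 hn0, hp', log_mul h1 h2]
      ring
    rw [sum_congr rfl split, sum_add_distrib, ← sum_mul, ← sum_mul,
      sum_divisorsAntidiagonal_moebius_fst, sum_divisorsAntidiagonal_moebius_mul_log]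
    split_ifs with h1
    · subst h1
      simp [mul_comm]
    · simp
  rw [sum_congr rfl inner_sum, sum_add_distrib, sum_ite_eq' (Icc 1 ⌊x⌋₊) 1,
    if_pos (by simp [hN])]

theorem sum_one_div_sqrt_le (N : ℕ) : ∑ d ∈ Icc 1 N, 1 / √(d : ℝ) ≤ 2 * √(N : ℝ) := by
  induction N with
  | zero => simp
  | succ N ih =>
    rw [sum_Icc_succ_top (by lia)]
    push_cast
    have hs : √((N : ℝ) + 1) ^ 2 = N + 1 := sq_sqrt (by positivity)
    have ht : √(N : ℝ) ^ 2 = N := sq_sqrt (by positivity)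
    have : 1 / √((N : ℝ) + 1) ≤ 2 * (√((N : ℝ) + 1) - √(N : ℝ)) := by
      rw [div_le_iff₀ (by positivity)]
      nlinarith [sq_nonneg (√((N : ℝ) + 1) - √(N : ℝ))]
    linarith

theorem sum_sqrt_div_le {x : ℝ} (hx : 0 ≤ x) : ∑ d ∈ Icc 1 ⌊x⌋₊, √(x / d) ≤ 2 * x := by
  calc ∑ d ∈ Icc 1 ⌊x⌋₊, √(x / d) = √x * ∑ d ∈ Icc 1 ⌊x⌋₊, 1 / √(d : ℝ) := by
        rw [mul_sum]
        exact sum_congr rfl fun d _ ↦ by rw [sqrt_div hx]; ring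
    _ ≤ √x * (2 * √x) := by
        gcongr
        exact (sum_one_div_sqrt_le _).trans (by gcongr; exact Nat.floor_le hx)
    _ = 2 * x := by linear_combination 2 * mul_self_sqrt hx

theorem log_mul_log_add_four_le {z : ℝ} (hz : 1 ≤ z) : log z * (log z + 4) ≤ 32 * √z := by
  have log_eq : log z = 4 * log (√(√z)) := by
    rw [log_sqrt (by positivity), log_sqrt (by positivity)]; ring
  have log_le := log_le_sub_one_of_pos (show 0 < √(√z) by positivity)
  have sq_eq : √(√z) ^ 2 = √z := sq_sqrt (by positivity)
  have one_le : 1 ≤ √(√z) := by rwa [one_le_sqrt, one_le_sqrt]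
  nlinarith [log_nonneg hz]

theorem abs_sum_moebius_mul_log_mul_sum_le {h : ℝ → ℝ}
    (hh : ∀ z : ℝ, 1 ≤ z → |∑ m ∈ Icc 1 ⌊z⌋₊, h (z / m)| ≤ log z + 4) {x : ℝ} (hx : 0 ≤ x) :
    |∑ d ∈ Icc 1 ⌊x⌋₊, (μ d : ℝ) * log (x / d) * ∑ m ∈ Icc 1 ⌊x / d⌋₊, h (x / d / m)| ≤
      64 * x := by
  calc _ ≤ ∑ d ∈ Icc 1 ⌊x⌋₊, 32 * √(x / d) := by
        refine (abs_sum_le_sum_abs _ _).trans (sum_le_sum fun d hd ↦ ?_)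
        obtain ⟨hd1, hd2⟩ := mem_Icc.1 hd
        have hd0 : (0 : ℝ) < d := by exact_mod_cast hd1
        have hz : 1 ≤ x / d := by
          rw [le_div_iff₀ hd0, one_mul]
          exact (Nat.le_floor_iff hx).1 hd2
        have hlog : 0 ≤ log (x / d) := log_nonneg hz
        have hμ : |(μ d : ℝ)| ≤ 1 := by exact_mod_cast ArithmeticFunction.abs_moebius_le_one
        rw [abs_mul, abs_mul, abs_of_nonneg hlog]
        calc _ ≤ 1 * log (x / d) * (log (x / d) + 4) := by gcongr; exact hh _ hz
          _ ≤ 32 * √(x / d) := by rw [one_mul]; exact log_mul_log_add_four_le hz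
    _ = 32 * ∑ d ∈ Icc 1 ⌊x⌋₊, √(x / d) := by rw [mul_sum]
    _ ≤ 64 * x := by linarith [sum_sqrt_div_le hx]

/-- The error term `ψ(y) - y` of the prime number theorem, shifted by the constant for which
its sums `∑_{m ≤ z} psiError (z / m)` are only `O(log z)`. -/
noncomputable def psiError (y : ℝ) : ℝ := ψ y - y + (eulerMascheroniConstant + 1)

theorem abs_sum_psiError_le {z : ℝ} (hz : 1 ≤ z) :
    |∑ m ∈ Icc 1 ⌊z⌋₊, psiError (z / m)| ≤ log z + 4 := by
  have hz0 : 0 < z := by linarith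
  have sum_eq : ∑ m ∈ Icc 1 ⌊z⌋₊, psiError (z / m) = ∑ n ∈ Icc 1 ⌊z⌋₊, log n
      - z * ∑ m ∈ Icc 1 ⌊z⌋₊, (1 : ℝ) / m + (eulerMascheroniConstant + 1) * ⌊z⌋₊ := by
    simp only [psiError, sum_log_eq_sum_psi, sum_add_distrib, sum_sub_distrib, mul_sum]
    simp only [div_eq_mul_inv, one_mul, sum_const, Nat.card_Icc, add_tsub_cancel_right,
      nsmul_eq_mul]
    ring
  have log_bound := abs_le.1 (abs_sum_log_sub_le hz)
  have harmonic_bound : |z * (∑ m ∈ Icc 1 ⌊z⌋₊, (1 : ℝ) / m - log z - eulerMascheroniConstant)|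
      ≤ 1 := by
    rw [abs_mul, abs_of_pos hz0, ← le_div_iff₀' hz0]
    exact abs_sum_one_div_sub_log_sub_eulerMascheroniConstant_le hz
  have floor_le : (⌊z⌋₊ : ℝ) ≤ z := Nat.floor_le hz0.le
  have lt_floor : z < ⌊z⌋₊ + 1 := Nat.lt_floor_add_one z
  have γ_gt := one_half_lt_eulerMascheroniConstant
  have γ_lt := eulerMascheroniConstant_lt_two_thirds
  rw [sum_eq]
  rw [abs_le] at harmonic_bound ⊢
  constructor <;> nlinarith

theorem sum_vonMangoldt_mul_psiError (x : ℝ) :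
    ∑ n ∈ Icc 1 ⌊x⌋₊, Λ n * psiError (x / n) = ∑ n ∈ Icc 1 ⌊x⌋₊, Λ n * ψ (x / n)
      - x * ∑ n ∈ Icc 1 ⌊x⌋₊, Λ n / n + (eulerMascheroniConstant + 1) * ψ x := by
  rw [show ψ x = ∑ d ∈ Icc 1 ⌊x⌋₊, Λ d from rfl, mul_sum, mul_sum, ← sum_sub_distrib,
    ← sum_add_distrib]
  exact sum_congr rfl fun n _ ↦ by simp only [psiError]; ring

/-- Selberg's symmetry formula. -/
theorem exists_abs_psi_mul_log_add_sum_sub_le : ∃ C : ℝ, 0 < C ∧ ∀ x : ℝ, 1 ≤ x →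
    |ψ x * log x + ∑ n ∈ Icc 1 ⌊x⌋₊, Λ n * ψ (x / n) - 2 * x * log x| ≤ C * x := by
  obtain ⟨M, hM, mertens⟩ := exists_abs_sum_vonMangoldt_div_sub_log_le
  refine ⟨64 + M + 2 * (1 + (log 4 + 4)), by positivity, fun x hx ↦ ?_⟩
  have hx0 : 0 < x := by linarith
  have identity := sum_moebius_mul_log_mul_sum psiError hx
  have error := abs_sum_moebius_mul_log_mul_sum_le (fun _ ↦ abs_sum_psiError_le) hx0.le
  rw [identity, sum_vonMangoldt_mul_psiError, psiError] at error
  have main : |x * (∑ n ∈ Icc 1 ⌊x⌋₊, Λ n / n - log x)| ≤ x * M := by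
    rw [abs_mul, abs_of_pos hx0]
    gcongr
    exact mertens x hx
  have chebyshev := Chebyshev.psi_le_const_mul_self hx0.le
  have psi_nonneg := Chebyshev.psi_nonneg x
  have log_nonneg := log_nonneg hx
  have log_le := log_le_sub_one_of_pos hx0
  have γ_gt := one_half_lt_eulerMascheroniConstant
  have γ_lt := eulerMascheroniConstant_lt_two_thirds
  rw [abs_le] at error main ⊢
  constructor <;> nlinarith

theorem monotone_sum_vonMangoldt_mul_psi :
    Monotone fun x : ℝ ↦ ∑ n ∈ Icc 1 ⌊x⌋₊, Λ n * ψ (x / n) := by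
  intro x y hxy
  calc ∑ n ∈ Icc 1 ⌊x⌋₊, Λ n * ψ (x / n) ≤ ∑ n ∈ Icc 1 ⌊x⌋₊, Λ n * ψ (y / n) := by
        refine sum_le_sum fun n _ ↦ ?_
        gcongr
    _ ≤ ∑ n ∈ Icc 1 ⌊y⌋₊, Λ n * ψ (y / n) :=
        sum_le_sum_of_subset_of_nonneg (Icc_subset_Icc le_rfl (Nat.floor_mono hxy)) fun n _ _ ↦
          mul_nonneg ArithmeticFunction.vonMangoldt_nonneg (Chebyshev.psi_nonneg _)

theorem exp_le_one_add_two_mul {η : ℝ} (h0 : 0 ≤ η) (h1 : η ≤ 1) : exp η ≤ 1 + 2 * η := by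
  have := abs_exp_sub_one_le (x := η) (by rwa [abs_of_nonneg h0])
  rw [abs_of_nonneg h0] at this
  linarith [le_abs_self (exp η - 1)]

/-- In Selberg's formula the sum over `n` is monotone, so the term `ψ x * log x` cannot grow faster
than the main term. -/
theorem exists_psi_mul_exp_sub_psi_le : ∃ C : ℝ, 0 < C ∧ ∀ D η : ℝ, 1 < D → 1 / log D ≤ η →
    η ≤ 1 → ψ (D * exp η) - ψ D ≤ C * η * D := by
  obtain ⟨C, hC, selberg⟩ := exists_abs_psi_mul_log_add_sum_sub_le
  refine ⟨4 * C + 24, by linarith, fun D η hD hη hη1 ↦ ?_⟩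
  have hD0 : 0 < D := by linarith
  have hlog : 0 < log D := log_pos hD
  have hη0 : 0 < η := lt_of_lt_of_le (by positivity) hη
  have one_le : 1 ≤ η * log D := by rwa [div_le_iff₀ hlog] at hη
  have exp_le : exp η ≤ 1 + 2 * η := exp_le_one_add_two_mul hη0.le hη1
  have le_mul_exp : D ≤ D * exp η := le_mul_of_one_le_right hD0.le (one_le_exp hη0.le)
  have log_mul_exp : log (D * exp η) = log D + η := by
    rw [log_mul hD0.ne' (exp_pos _).ne', log_exp]
  have lower := (abs_le.1 (selberg D hD.le)).1
  have upper := (abs_le.1 (selberg (D * exp η) (by linarith))).2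
  have mono := monotone_sum_vonMangoldt_mul_psi le_mul_exp
  beta_reduce at mono
  rw [log_mul_exp] at upper
  have main_term : D * exp η * (log D + η) - D * log D ≤ 2 * η * D * log D + 3 * D * η := by
    calc _ = D * (exp η - 1) * log D + D * exp η * η := by ring
      _ ≤ D * (2 * η) * log D + D * 3 * η := by gcongr <;> linarith
      _ = _ := by ring
  have mul_log_le : (ψ (D * exp η) - ψ D) * log D ≤
      2 * (2 * η * D * log D + 3 * D * η) + 4 * C * D := by
    have psi_mul_nonneg := mul_nonneg (Chebyshev.psi_nonneg (D * exp η)) hη0.le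
    have : C * (D * exp η) ≤ C * (D * 3) := by gcongr; linarith
    linarith
  have absorb : (4 * C + 6 * η) * D ≤ (4 * C + 6) * D * (η * log D) := by
    calc (4 * C + 6 * η) * D ≤ (4 * C + 6) * D := by gcongr; linarith
      _ ≤ _ := le_mul_of_one_le_right (by positivity) one_le
  refine le_of_mul_le_mul_right ?_ hlog
  nlinarith [mul_pos (mul_pos hη0 hD0) hlog]

/-- A bound of Brun–Titchmarsh type. -/
theorem exists_sum_Ioc_vonMangoldt_div_le : ∃ C : ℝ, 0 < C ∧ ∀ D η : ℝ, 1 < D → 1 / log D ≤ η →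
    η ≤ 1 → ∑ d ∈ Ioc ⌊D⌋₊ ⌊D * exp η⌋₊, Λ d / d ≤ C * η := by
  obtain ⟨C, hC, psi_sub_le⟩ := exists_psi_mul_exp_sub_psi_le
  refine ⟨C, hC, fun D η hD hη hη1 ↦ ?_⟩
  have hD0 : 0 < D := by linarith
  have hη0 : 0 ≤ η := (one_div_nonneg.2 (log_nonneg hD.le)).trans hη
  have le_mul_exp : D ≤ D * exp η := le_mul_of_one_le_right hD0.le (one_le_exp hη0)
  have sum_eq : ∑ d ∈ Ioc ⌊D⌋₊ ⌊D * exp η⌋₊, Λ d = ψ (D * exp η) - ψ D := by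
    rw [eq_sub_iff_add_eq, add_comm]
    exact sum_Ioc_consecutive _ (Nat.zero_le _) (Nat.floor_mono le_mul_exp)
  calc ∑ d ∈ Ioc ⌊D⌋₊ ⌊D * exp η⌋₊, Λ d / d ≤ ∑ d ∈ Ioc ⌊D⌋₊ ⌊D * exp η⌋₊, Λ d / D := by
        refine sum_le_sum fun d hd ↦ ?_
        have := (Nat.floor_lt hD0.le).1 (mem_Ioc.1 hd).1
        gcongr
    _ = (ψ (D * exp η) - ψ D) / D := by rw [← sum_div, sum_eq]
    _ ≤ C * η := by rw [div_le_iff₀ hD0]; exact psi_sub_le D η hD hη hη1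

end Selberg

/-! ### The Riemann zeta function near the line `Re s = 1` -/

section ZetaTruncation

open Complex Filter Topology

theorem norm_ofReal_cpow_neg_sub_le {s : ℂ} (hs : 0 < s.re) {a x y : ℝ} (ha : 0 < a)
    (hx : a ≤ x) (hy : a ≤ y) :
    ‖(y : ℂ) ^ (-s) - (x : ℂ) ^ (-s)‖ ≤ ‖s‖ * a ^ (-s.re - 1) * ‖y - x‖ := by
  have hs0 : -s ≠ 0 := neg_ne_zero.2 fun h ↦ by simp [h] at hs
  refine (convex_Ici a).norm_image_sub_le_of_norm_hasDerivWithin_le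
    (fun z hz ↦ (hasDerivAt_ofReal_cpow_const (ha.trans_le hz).ne' hs0).hasDerivWithinAt)
    (fun z hz ↦ ?_) hx hy
  rw [norm_mul, norm_neg, norm_cpow_eq_rpow_re_of_pos (ha.trans_le hz)]
  gcongr
  exact Real.rpow_le_rpow_of_nonpos ha hz (by simp; linarith)

theorem norm_natCast_add_one_cpow_neg_sub_le {s : ℂ} (hs : 1 < s.re) {n : ℕ} (hn : 1 ≤ n)
    {y : ℝ} (hy : y ∈ Set.Icc (n : ℝ) (n + 1)) :
    ‖((n + 1 : ℝ) : ℂ) ^ (-s) - (y : ℂ) ^ (-s)‖ ≤ ‖s‖ * (1 / (n : ℝ) ^ 2) := by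
  have hn1 : (1 : ℝ) ≤ n := by exact_mod_cast hn
  have hn0 : (0 : ℝ) < n := one_pos.trans_le hn1
  have hpow : (n : ℝ) ^ (-s.re - 1) ≤ 1 / (n : ℝ) ^ 2 := by
    rw [one_div, ← Real.rpow_natCast, ← Real.rpow_neg hn0.le]
    exact Real.rpow_le_rpow_of_exponent_le hn1 (by push_cast; linarith)
  have hle : ‖(n : ℝ) + 1 - y‖ ≤ 1 := by
    rw [Real.norm_eq_abs, abs_le]
    constructor <;> linarith [hy.1, hy.2]
  calc _ ≤ ‖s‖ * (n : ℝ) ^ (-s.re - 1) * ‖(n : ℝ) + 1 - y‖ :=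
        norm_ofReal_cpow_neg_sub_le (one_pos.trans hs) hn0 hy.1 (by linarith)
    _ ≤ ‖s‖ * (1 / (n : ℝ) ^ 2) * 1 := by gcongr
    _ = ‖s‖ * (1 / (n : ℝ) ^ 2) := mul_one _

/-- The integral of `x ^ (-s)` over `(n, ∞)` for `1 < Re s`, in closed form. -/
noncomputable def tailIntegral (s : ℂ) (n : ℕ) : ℂ := (n : ℂ) ^ (1 - s) / (s - 1)

theorem norm_tailIntegral (s : ℂ) {n : ℕ} (hn : 0 < n) :
    ‖tailIntegral s n‖ = (n : ℝ) ^ (1 - s.re) / ‖s - 1‖ := by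
  simp [tailIntegral, norm_natCast_cpow_of_pos hn]

theorem tendsto_tailIntegral {s : ℂ} (hs : 1 < s.re) :
    Tendsto (tailIntegral s) atTop (𝓝 0) := by
  have h := ((tendsto_rpow_neg_atTop (sub_pos.2 hs)).comp
    tendsto_natCast_atTop_atTop).div_const ‖s - 1‖
  rw [zero_div] at h
  refine squeeze_zero_norm' ?_ h
  filter_upwards [eventually_gt_atTop 0] with n hn
  rw [norm_tailIntegral s hn, Function.comp_apply, neg_sub]

theorem norm_one_div_cpow_sub_tailIntegral_sub_le {s : ℂ} (hs : 1 < s.re) {n : ℕ} (hn : 1 ≤ n) :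
    ‖1 / ((n : ℂ) + 1) ^ s - (tailIntegral s n - tailIntegral s (n + 1))‖ ≤
      ‖s‖ * (1 / (n : ℝ) ^ 2) := by
  have hn0 : (0 : ℝ) < n := by exact_mod_cast hn
  have hs1 : s - 1 ≠ 0 := fun h ↦ by simp [sub_eq_zero.1 h] at hs
  let f (y : ℝ) : ℂ := y * ((n + 1 : ℝ) : ℂ) ^ (-s) + (y : ℂ) ^ (1 - s) / (s - 1)
  have hderiv : ∀ y ∈ Set.Icc (n : ℝ) (n + 1),
      HasDerivAt f (((n + 1 : ℝ) : ℂ) ^ (-s) - (y : ℂ) ^ (-s)) y := by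
    intro y hy
    have hlin := ofRealCLM.hasDerivAt.mul_const (((n + 1 : ℝ) : ℂ) ^ (-s)) (x := y)
    have hpow := (hasDerivAt_ofReal_cpow_const (hn0.trans_le hy.1).ne'
      (sub_ne_zero.2 (sub_ne_zero.1 hs1).symm)).div_const (s - 1)
    refine (hlin.add hpow).congr_deriv ?_
    rw [show (1 - s - 1 : ℂ) = -s by ring, show (1 - s : ℂ) = -(s - 1) by ring]
    simp only [ofRealCLM_apply, ofReal_one]
    field_simp
    ring
  have hmean := (convex_Icc (n : ℝ) (n + 1)).norm_image_sub_le_of_norm_hasDerivWithin_le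
    (fun y hy ↦ (hderiv y hy).hasDerivWithinAt)
    (fun y hy ↦ norm_natCast_add_one_cpow_neg_sub_le hs hn hy) (Set.left_mem_Icc.2 (by linarith))
    (Set.right_mem_Icc.2 (by linarith))
  rw [add_sub_cancel_left, norm_one, mul_one] at hmean
  refine le_of_eq_of_le (congrArg norm ?_) hmean
  simp only [f, tailIntegral, cpow_neg]
  push_cast
  ring

theorem summable_one_div_natCast_add_sq (N : ℕ) :
    Summable fun k : ℕ ↦ 1 / ((k + N : ℕ) : ℝ) ^ 2 :=
  (summable_nat_add_iff (f := fun k : ℕ ↦ 1 / (k : ℝ) ^ 2) N).2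
    (Real.summable_one_div_nat_pow.2 one_lt_two)

theorem tsum_one_div_natCast_add_sq_le {N : ℕ} (hN : 1 ≤ N) :
    ∑' k : ℕ, 1 / ((k + N : ℕ) : ℝ) ^ 2 ≤ 2 / (N : ℝ) := by
  refine (summable_one_div_natCast_add_sq N).tsum_le_of_sum_range_le fun n ↦ ?_
  obtain ⟨M, rfl⟩ := Nat.exists_eq_add_of_le' hN
  have h := sum_Ioo_inv_sq_le (α := ℝ) M (n + (M + 1))
  rw [← Ico_succ_left_eq_Ioo, sum_Ico_eq_sum_range, Order.succ_eq_add_one,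
    Nat.add_sub_cancel_right] at h
  simpa only [one_div, Nat.cast_succ, add_comm (M + 1)] using h

theorem norm_riemannZeta_sub_sum_range_le {s : ℂ} (hs : 1 < s.re) {N : ℕ} (hN : 1 ≤ N) :
    ‖riemannZeta s - ∑ n ∈ range N, 1 / ((n : ℂ) + 1) ^ s‖ ≤ 1 / ‖s - 1‖ + ‖s‖ * (2 / N) := by
  let a (k : ℕ) : ℂ := 1 / ((k : ℂ) + 1) ^ s
  let d (k : ℕ) : ℂ := tailIntegral s (k + N) - tailIntegral s (k + 1 + N)
  have hsum : Summable a := by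
    simpa [a] using (summable_nat_add_iff (f := fun n : ℕ ↦ 1 / (n : ℂ) ^ s) 1).2
      (summable_one_div_nat_cpow.2 hs)
  have hterm (k : ℕ) : ‖a (k + N) - d k‖ ≤ ‖s‖ * (1 / ((k + N : ℕ) : ℝ) ^ 2) := by
    have h := norm_one_div_cpow_sub_tailIntegral_sub_le hs (n := k + N) (by lia)
    rwa [add_right_comm k N 1] at h
  have hasum := (summable_nat_add_iff N).2 hsum
  have hdiff : Summable fun k ↦ a (k + N) - d k :=
    .of_norm_bounded ((summable_one_div_natCast_add_sq N).mul_left _) hterm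
  have hd : HasSum d (tailIntegral s N) := by
    have hsummable : Summable d := by simpa using hasum.sub hdiff
    rw [hsummable.hasSum_iff_tendsto_nat]
    have htel (n : ℕ) : ∑ k ∈ range n, d k = tailIntegral s N - tailIntegral s (n + N) := by
      simpa only [zero_add] using sum_range_sub' (fun k ↦ tailIntegral s (k + N)) n
    simpa only [htel, sub_zero] using
      tendsto_const_nhds.sub ((tendsto_add_atTop_iff_nat N).2 (tendsto_tailIntegral hs))
  have hzeta : riemannZeta s - ∑ n ∈ range N, a n =
      tailIntegral s N + ∑' k, (a (k + N) - d k) := by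
    rw [zeta_eq_tsum_one_div_nat_add_one_cpow hs, ← hsum.sum_add_tsum_nat_add N,
      add_sub_cancel_left, hasum.tsum_sub hd.summable, hd.tsum_eq, add_sub_cancel]
  rw [hzeta]
  refine (norm_add_le _ _).trans (add_le_add ?_ ?_)
  · rw [norm_tailIntegral s hN]
    gcongr
    exact Real.rpow_le_one_of_one_le_of_nonpos (by exact_mod_cast hN) (by linarith)
  · refine (tsum_of_norm_bounded
      ((summable_one_div_natCast_add_sq N).mul_left _).hasSum hterm).trans ?_
    rw [tsum_mul_left]
    gcongr
    exact tsum_one_div_natCast_add_sq_le hN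

end ZetaTruncation

section ZetaBounds

open Complex Filter

theorem riemannZeta₁_eq_sub_one_mul {s : ℂ} (hs : s ≠ 1) :
    riemannZeta₁ s = (s - 1) * riemannZeta s := by
  rw [riemannZeta_eq_inv_sub_mul hs, mul_inv_cancel_left₀ (sub_ne_zero.2 hs)]

theorem one_add_ofReal_add_I_mul_ne_one {σ : ℝ} (hσ : σ ≠ 0) (u : ℝ) :
    (1 + σ + I * u : ℂ) ≠ 1 := fun h ↦ hσ (by simpa using congrArg re h)

theorem exists_norm_riemannZeta₁_mem_Icc (R : ℝ) : ∃ C : ℝ, 1 ≤ C ∧ ∀ σ u : ℝ,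
    0 ≤ σ → σ ≤ 1 → |u| ≤ R → ‖riemannZeta₁ (1 + σ + I * u)‖ ∈ Set.Icc C⁻¹ C := by
  let f (p : ℝ × ℝ) : ℂ := riemannZeta₁ (1 + p.1 + I * p.2)
  let K : Set (ℝ × ℝ) := Set.Icc 0 1 ×ˢ Set.Icc (-R) R
  have hf : Continuous f := differentiable_riemannZeta₁.continuous.comp (by fun_prop)
  have hK : IsCompact K := isCompact_Icc.prod isCompact_Icc
  have hne : ∀ p ∈ K, f p ≠ 0 := by
    rintro ⟨σ, u⟩ ⟨⟨hσ, -⟩, -⟩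
    simp only [f]
    by_cases hs : (1 + σ + I * u : ℂ) = 1
    · simp [hs]
    · rw [riemannZeta₁_eq_sub_one_mul hs]
      exact mul_ne_zero (sub_ne_zero.2 hs) (riemannZeta_ne_zero_of_one_le_re (by simpa using hσ))
  obtain ⟨A, hA⟩ := hK.exists_bound_of_continuousOn hf.continuousOn
  obtain ⟨B, hB⟩ := hK.exists_bound_of_continuousOn (hf.continuousOn.inv₀ hne)
  refine ⟨max 1 (max A B), le_max_left _ _, fun σ u h0 h1 hu ↦ ?_⟩
  have hmem : ((σ, u) : ℝ × ℝ) ∈ K := ⟨⟨h0, h1⟩, abs_le.1 hu⟩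
  have hinv := hB _ hmem
  rw [Pi.inv_apply, norm_inv] at hinv
  exact ⟨inv_le_of_inv_le₀ (norm_pos_iff.2 (hne _ hmem))
    (hinv.trans ((le_max_right _ _).trans (le_max_right _ _))),
    (hA _ hmem).trans ((le_max_left _ _).trans (le_max_right _ _))⟩

theorem exists_norm_riemannZeta_one_add_le : ∃ C : ℝ, 1 ≤ C ∧ ∀ σ : ℝ, 0 < σ → σ ≤ 1 →
    ‖riemannZeta (1 + σ)‖ ≤ C / σ := by
  obtain ⟨C, hC, h⟩ := exists_norm_riemannZeta₁_mem_Icc 0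
  refine ⟨C, hC, fun σ h0 h1 ↦ ?_⟩
  have hle := (h σ 0 h0.le h1 (by simp)).2
  rw [ofReal_zero, mul_zero, add_zero, riemannZeta₁_eq_sub_one_mul (by simp [h0.ne']),
    add_sub_cancel_left, norm_mul, norm_real, Real.norm_of_nonneg h0.le] at hle
  rwa [le_div_iff₀' h0]

theorem exists_abs_log_norm_riemannZeta_le_of_abs_le (R : ℝ) : ∃ C : ℝ, ∀ σ u : ℝ,
    0 < σ → σ ≤ 1 → u ≠ 0 → |u| ≤ R →
    |Real.log ‖riemannZeta (1 + σ + I * u)‖| ≤ Real.posLog (1 / |u|) + C := by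
  obtain ⟨C, hC, h⟩ := exists_norm_riemannZeta₁_mem_Icc R
  refine ⟨Real.log C + Real.posLog (1 + R), fun σ u h0 h1 hu hR ↦ ?_⟩
  obtain ⟨hlow, hupp⟩ := h σ u h0.le h1 hR
  have hu0 : 0 < |u| := abs_pos.2 hu
  have hC0 : 0 < C := one_pos.trans_le hC
  have him : |u| ≤ ‖(σ + I * u : ℂ)‖ := by simpa using abs_im_le_norm (σ + I * u : ℂ)
  have hnorm : ‖(σ + I * u : ℂ)‖ ≤ 1 + R := by
    refine (norm_add_le _ _).trans ?_
    simpa [abs_of_pos h0] using add_le_add h1 hR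
  have hn0 : 0 < ‖(σ + I * u : ℂ)‖ := hu0.trans_le him
  have hz0 : 0 < ‖riemannZeta (1 + σ + I * u)‖ :=
    norm_pos_iff.2 (riemannZeta_ne_zero_of_one_le_re (by simp [h0.le]))
  rw [riemannZeta₁_eq_sub_one_mul (one_add_ofReal_add_I_mul_ne_one h0.ne' u), norm_mul,
    show (1 + σ + I * u - 1 : ℂ) = σ + I * u by ring] at hlow hupp
  have hloglow := Real.log_le_log (inv_pos.2 hC0) hlow
  have hlogupp := Real.log_le_log (mul_pos hn0 hz0) hupp
  rw [Real.log_mul hn0.ne' hz0.ne'] at hloglow hlogupp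
  rw [Real.log_inv] at hloglow
  have hpos : Real.log ‖(σ + I * u : ℂ)‖ ≤ Real.posLog (1 + R) :=
    (Real.log_le_log hn0 hnorm).trans (le_max_right _ _)
  have hneg : -Real.log ‖(σ + I * u : ℂ)‖ ≤ Real.posLog (1 / |u|) := by
    refine (neg_le_neg (Real.log_le_log hu0 him)).trans ?_
    rw [← Real.log_inv, ← one_div]
    exact le_max_right _ _
  rw [abs_le]
  constructor <;> linarith [Real.posLog_nonneg (x := 1 / |u|), Real.posLog_nonneg (x := 1 + R)]

theorem sum_range_one_div_add_one_le (N : ℕ) :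
    ∑ n ∈ range N, 1 / ((n : ℝ) + 1) ≤ 1 + Real.log N := by
  simpa [harmonic] using harmonic_le_one_add_log N

theorem log_natCeil_sq_le {u : ℝ} (hu : 1 ≤ |u|) :
    Real.log (⌈u ^ 2⌉₊ : ℝ) ≤ 1 + 2 * Real.log |u| := by
  have hu2 : 1 ≤ u ^ 2 := by rwa [one_le_sq_iff_one_le_abs]
  have hceil : (⌈u ^ 2⌉₊ : ℝ) ≤ 2 * u ^ 2 := by
    linarith [Nat.ceil_lt_add_one (sq_nonneg u)]
  calc Real.log (⌈u ^ 2⌉₊ : ℝ) ≤ Real.log (2 * u ^ 2) := by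
        gcongr
    _ = Real.log 2 + 2 * Real.log |u| := by
        rw [Real.log_mul two_ne_zero (by positivity), ← sq_abs, Real.log_pow, Nat.cast_two]
    _ ≤ 1 + 2 * Real.log |u| := by linarith [Real.log_two_lt_d9]

variable {σ σ₀ u : ℝ}

theorem norm_riemannZeta_sub_sum_range_natCeil_sq_le (h0 : 0 < σ) (h1 : σ ≤ 1)
    (hu : 1 ≤ |u|) :
    ‖riemannZeta (1 + σ + I * u) -
      ∑ n ∈ range ⌈u ^ 2⌉₊, 1 / ((n : ℂ) + 1) ^ (1 + σ + I * u : ℂ)‖ ≤ 7 / |u| := by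
  have hu0 : 0 < |u| := one_pos.trans_le hu
  have hu2 : 0 < u ^ 2 := by positivity [abs_pos.1 hu0]
  have hsub : |u| ≤ ‖(1 + σ + I * u - 1 : ℂ)‖ := by
    simpa using abs_im_le_norm (1 + σ + I * u - 1 : ℂ)
  have hnorm : ‖(1 + σ + I * u : ℂ)‖ ≤ 3 * |u| := by
    calc ‖(1 + σ + I * u : ℂ)‖ ≤ ‖(1 : ℂ)‖ + ‖(σ : ℂ)‖ + ‖I * u‖ := norm_add₃_le
      _ = 1 + σ + |u| := by simp [abs_of_pos h0]
      _ ≤ 3 * |u| := by linarith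
  calc _ ≤ 1 / ‖(1 + σ + I * u - 1 : ℂ)‖ + ‖(1 + σ + I * u : ℂ)‖ * (2 / (⌈u ^ 2⌉₊ : ℝ)) :=
        norm_riemannZeta_sub_sum_range_le (by simp [h0]) (Nat.one_le_ceil_iff.2 hu2)
    _ ≤ 1 / |u| + 3 * |u| * (2 / u ^ 2) := by
        gcongr
        exact Nat.le_ceil _
    _ = 7 / |u| := by rw [← sq_abs]; field_simp; norm_num

theorem norm_one_div_natCast_add_one_cpow (σ u : ℝ) (n : ℕ) :
    ‖1 / ((n : ℂ) + 1) ^ (1 + σ + I * u : ℂ)‖ = ((n : ℝ) + 1) ^ (-(1 + σ)) := by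
  rw [norm_div, norm_one, ← Nat.cast_succ, norm_natCast_cpow_of_pos n.succ_pos,
    Real.rpow_neg (by positivity), one_div]
  simp

theorem norm_one_div_natCast_add_one_cpow_le (h0 : 0 ≤ σ) (u : ℝ) (n : ℕ) :
    ‖1 / ((n : ℂ) + 1) ^ (1 + σ + I * u : ℂ)‖ ≤ 1 / ((n : ℝ) + 1) := by
  rw [norm_one_div_natCast_add_one_cpow, one_div, ← Real.rpow_neg_one]
  exact Real.rpow_le_rpow_of_exponent_le (by simp) (by linarith)

theorem norm_riemannZeta_le_add_log (h0 : 0 < σ) (h1 : σ ≤ 1) (hu : 1 ≤ |u|) :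
    ‖riemannZeta (1 + σ + I * u)‖ ≤ 9 + 2 * Real.log |u| := by
  have htrunc := norm_riemannZeta_sub_sum_range_natCeil_sq_le h0 h1 hu
  have hsum : ‖∑ n ∈ range ⌈u ^ 2⌉₊, 1 / ((n : ℂ) + 1) ^ (1 + σ + I * u : ℂ)‖ ≤
      1 + Real.log (⌈u ^ 2⌉₊ : ℝ) :=
    (norm_sum_le_of_le _ fun n _ ↦ norm_one_div_natCast_add_one_cpow_le h0.le u n).trans
      (sum_range_one_div_add_one_le _)
  have hdiv : 7 / |u| ≤ 7 := div_le_self (by norm_num) hu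
  linarith [log_natCeil_sq_le hu, norm_le_norm_add_norm_sub' (riemannZeta (1 + σ + I * u))
    (∑ n ∈ range ⌈u ^ 2⌉₊, 1 / ((n : ℂ) + 1) ^ (1 + σ + I * u : ℂ))]

theorem norm_one_div_cpow_sub_one_div_cpow_le (h0 : 0 ≤ σ) (h : σ ≤ σ₀) (u : ℝ) (n : ℕ) :
    ‖1 / ((n : ℂ) + 1) ^ (1 + σ + I * u : ℂ) - 1 / ((n : ℂ) + 1) ^ (1 + σ₀ + I * u : ℂ)‖ ≤
      σ₀ * Real.log (n + 1) * (1 / ((n : ℝ) + 1)) := by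
  have hn : (0 : ℝ) < (n : ℝ) + 1 := by positivity
  have hn1 : (1 : ℝ) ≤ (n : ℝ) + 1 := by simp
  have hfactor : 1 / ((n : ℂ) + 1) ^ (1 + σ + I * u : ℂ) -
      1 / ((n : ℂ) + 1) ^ (1 + σ₀ + I * u : ℂ) =
      ((1 - ((n : ℝ) + 1) ^ (σ - σ₀) : ℝ) : ℂ) * (1 / ((n : ℂ) + 1) ^ (1 + σ + I * u : ℂ)) := by
    push_cast [ofReal_cpow hn.le]
    rw [sub_mul, one_mul, one_div, one_div, ← cpow_neg, ← cpow_neg,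
      ← cpow_add _ _ (Nat.cast_add_one_ne_zero n)]
    ring_nf
  have hle : ‖1 - ((n : ℝ) + 1) ^ (σ - σ₀)‖ ≤ σ₀ * Real.log (n + 1) := by
    have hlog : 0 ≤ σ * Real.log (n + 1) := mul_nonneg h0 (Real.log_nonneg hn1)
    rw [Real.norm_of_nonneg (sub_nonneg.2
      (Real.rpow_le_one_of_one_le_of_nonpos hn1 (sub_nonpos.2 h))), Real.rpow_def_of_pos hn]
    linarith [Real.add_one_le_exp (Real.log ((n : ℝ) + 1) * (σ - σ₀))]
  rw [hfactor, norm_mul, norm_real]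
  exact mul_le_mul hle (norm_one_div_natCast_add_one_cpow_le h0 u n) (norm_nonneg _)
    ((norm_nonneg _).trans hle)

theorem norm_sum_range_one_div_cpow_sub_le (h0 : 0 ≤ σ) (h : σ ≤ σ₀) (u : ℝ) {N : ℕ} :
    ‖∑ n ∈ range N, 1 / ((n : ℂ) + 1) ^ (1 + σ + I * u : ℂ) -
      ∑ n ∈ range N, 1 / ((n : ℂ) + 1) ^ (1 + σ₀ + I * u : ℂ)‖ ≤
      σ₀ * Real.log N * (1 + Real.log N) := by
  have hσ₀ : 0 ≤ σ₀ := h0.trans h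
  rw [← sum_sub_distrib]
  calc _ ≤ ∑ n ∈ range N, σ₀ * Real.log N * (1 / ((n : ℝ) + 1)) := by
        refine norm_sum_le_of_le _ fun n hn ↦
          (norm_one_div_cpow_sub_one_div_cpow_le h0 h u n).trans ?_
        gcongr
        exact_mod_cast mem_range.1 hn
    _ ≤ σ₀ * Real.log N * (1 + Real.log N) := by
        rw [← mul_sum]
        gcongr
        exact sum_range_one_div_add_one_le N

theorem norm_riemannZeta_sub_riemannZeta_le (h0 : 0 < σ) (h : σ ≤ σ₀) (h1 : σ₀ ≤ 1)
    (hu : 1 ≤ |u|) :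
    ‖riemannZeta (1 + σ + I * u) - riemannZeta (1 + σ₀ + I * u)‖ ≤
      14 / |u| + σ₀ * (2 + 2 * Real.log |u|) ^ 2 := by
  have hσ₀ : 0 < σ₀ := h0.trans_le h
  have htrunc := norm_riemannZeta_sub_sum_range_natCeil_sq_le h0 (h.trans h1) hu
  have htrunc₀ := norm_riemannZeta_sub_sum_range_natCeil_sq_le hσ₀ h1 hu
  have hsum := norm_sum_range_one_div_cpow_sub_le h0.le h u (N := ⌈u ^ 2⌉₊)
  have hlog := log_natCeil_sq_le hu
  have hlog0 : 0 ≤ Real.log (⌈u ^ 2⌉₊ : ℝ) := Real.log_natCast_nonneg _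
  have hprod : σ₀ * Real.log (⌈u ^ 2⌉₊ : ℝ) * (1 + Real.log (⌈u ^ 2⌉₊ : ℝ)) ≤
      σ₀ * (2 + 2 * Real.log |u|) ^ 2 := by
    rw [mul_assoc]
    gcongr
    nlinarith
  calc _ ≤ 7 / |u| + σ₀ * Real.log (⌈u ^ 2⌉₊ : ℝ) * (1 + Real.log (⌈u ^ 2⌉₊ : ℝ)) + 7 / |u| := by
        refine (norm_sub_le_norm_sub_add_norm_sub _ _ _).trans
          (add_le_add ((norm_sub_le_norm_sub_add_norm_sub _ _ _).trans
            (add_le_add htrunc hsum)) ?_)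
        rwa [norm_sub_rev]
    _ ≤ 14 / |u| + σ₀ * (2 + 2 * Real.log |u|) ^ 2 := by
        rw [show 14 / |u| = 7 / |u| + 7 / |u| by ring]
        linarith

theorem one_le_norm_riemannZeta_pow_three_mul (h0 : 0 < σ) (u : ℝ) :
    1 ≤ ‖riemannZeta (1 + σ)‖ ^ 3 * ‖riemannZeta (1 + σ + I * u)‖ ^ 4 *
      ‖riemannZeta (1 + σ + I * (2 * u : ℝ))‖ := by
  have h := DirichletCharacter.norm_LFunction_product_ge_one (N := 1) 1 h0 u
  rw [one_pow, DirichletCharacter.LFunctionTrivChar, DirichletCharacter.LFunction_modOne_eq,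
    norm_mul, norm_mul, norm_pow, norm_pow] at h
  rwa [show (1 + σ + I * (2 * u : ℝ) : ℂ) = 1 + σ + 2 * I * u by push_cast; ring]

theorem exists_pow_three_le_mul_norm_riemannZeta_pow_four : ∃ C : ℝ, ∀ σ u : ℝ, 0 < σ → σ ≤ 1 →
    1 ≤ |u| → σ ^ 3 ≤ C * (11 + 2 * Real.log |u|) * ‖riemannZeta (1 + σ + I * u)‖ ^ 4 := by
  obtain ⟨C, hC, hζ⟩ := exists_norm_riemannZeta_one_add_le
  refine ⟨C ^ 3, fun σ u h0 h1 hu ↦ ?_⟩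
  have : 0 < C := one_pos.trans_le hC
  have hdouble : ‖riemannZeta (1 + σ + I * (2 * u : ℝ))‖ ≤ 11 + 2 * Real.log |u| := by
    have h := norm_riemannZeta_le_add_log h0 h1 (u := 2 * u) (by rw [abs_mul, abs_two]; linarith)
    rw [abs_mul, abs_two, Real.log_mul two_ne_zero (one_pos.trans_le hu).ne'] at h
    linarith [Real.log_two_lt_d9]
  calc σ ^ 3 ≤ σ ^ 3 * (‖riemannZeta (1 + σ)‖ ^ 3 * ‖riemannZeta (1 + σ + I * u)‖ ^ 4 *
        ‖riemannZeta (1 + σ + I * (2 * u : ℝ))‖) :=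
        le_mul_of_one_le_right (by positivity) (one_le_norm_riemannZeta_pow_three_mul h0 u)
    _ ≤ σ ^ 3 * ((C / σ) ^ 3 * ‖riemannZeta (1 + σ + I * u)‖ ^ 4 *
        (11 + 2 * Real.log |u|)) := by
        gcongr
        exact hζ σ h0 h1
    _ = C ^ 3 * (11 + 2 * Real.log |u|) * ‖riemannZeta (1 + σ + I * u)‖ ^ 4 := by field_simp

theorem eventually_mul_add_log_pow_le_rpow (a b c : ℝ) {r : ℝ} (hr : 0 < r) (k : ℕ) :
    ∀ᶠ U : ℝ in atTop, a * (b + c * Real.log U) ^ k ≤ U ^ r := by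
  have hr' : 0 < r / (k + 1) := by positivity
  have htop := tendsto_rpow_atTop hr'
  have hlittle : (fun U : ℝ ↦ b + c * Real.log U) =o[atTop] fun U : ℝ ↦ U ^ (r / (k + 1)) :=
    (Asymptotics.isLittleO_const_left.2 (.inr (tendsto_norm_atTop_atTop.comp htop))).add
      ((isLittleO_log_rpow_atTop hr').const_mul_left c)
  filter_upwards [hlittle.bound one_pos, htop.eventually_ge_atTop |a|, eventually_gt_atTop 0]
    with U hU ha hU0
  rw [one_mul, Real.norm_eq_abs, Real.norm_of_nonneg (Real.rpow_nonneg hU0.le _)] at hU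
  calc a * (b + c * Real.log U) ^ k ≤ |a * (b + c * Real.log U) ^ k| := le_abs_self _
    _ = |a| * |b + c * Real.log U| ^ k := by rw [abs_mul, abs_pow]
    _ ≤ U ^ (r / (k + 1)) * (U ^ (r / (k + 1))) ^ k := by gcongr
    _ = U ^ r := by
      rw [← pow_succ', ← Real.rpow_mul_natCast hU0.le, Nat.cast_succ,
        div_mul_cancel₀ _ k.cast_add_one_ne_zero]

theorem eventually_two_mul_rpow_le_norm_riemannZeta : ∀ᶠ U : ℝ in atTop, ∀ σ u : ℝ, |u| = U →
    U ^ (-(9 / 10) : ℝ) ≤ σ → σ ≤ 1 →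
    2 * U ^ (-(3 / 4) : ℝ) ≤ ‖riemannZeta (1 + σ + I * u)‖ := by
  obtain ⟨C, hC⟩ := exists_pow_three_le_mul_norm_riemannZeta_pow_four
  filter_upwards [eventually_ge_atTop 1,
    eventually_mul_add_log_pow_le_rpow (16 * C) 11 2 (show (0 : ℝ) < 3 / 10 by norm_num) 1]
    with U hU1 hU σ u hu hσ h1
  have hU0 : 0 < U := one_pos.trans_le hU1
  have hσ0 : 0 < σ := (Real.rpow_pos_of_pos hU0 _).trans_le hσ
  rw [pow_one] at hU
  refine le_of_pow_le_pow_left₀ four_ne_zero (norm_nonneg _) ?_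
  calc (2 * U ^ (-(3 / 4) : ℝ)) ^ 4
      = U ^ (-(3 / 10) : ℝ) * (16 * (U ^ (-(9 / 10) : ℝ)) ^ 3) := by
        rw [mul_pow, ← Real.rpow_mul_natCast hU0.le, ← Real.rpow_mul_natCast hU0.le,
          mul_left_comm, ← Real.rpow_add hU0]
        norm_num
    _ ≤ U ^ (-(3 / 10) : ℝ) * (16 * σ ^ 3) := by gcongr
    _ ≤ U ^ (-(3 / 10) : ℝ) * (16 * (C * (11 + 2 * Real.log U) *
        ‖riemannZeta (1 + σ + I * u)‖ ^ 4)) := by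
        gcongr
        exact hu ▸ hC σ u hσ0 h1 (hu ▸ hU1)
    _ = U ^ (-(3 / 10) : ℝ) * (16 * C * (11 + 2 * Real.log U)) *
        ‖riemannZeta (1 + σ + I * u)‖ ^ 4 := by ring
    _ ≤ U ^ (-(3 / 10) : ℝ) * U ^ (3 / 10 : ℝ) * ‖riemannZeta (1 + σ + I * u)‖ ^ 4 := by gcongr
    _ = ‖riemannZeta (1 + σ + I * u)‖ ^ 4 := by
        rw [← Real.rpow_add hU0, neg_add_cancel, Real.rpow_zero, one_mul]

/-- The exponent `3 / 4` is what remains of the 3-4-1 inequality; any exponent below `π / 4` would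
serve here, as it keeps the bound for the transform of the kernel square integrable. -/
theorem eventually_rpow_le_norm_riemannZeta : ∀ᶠ U : ℝ in atTop, ∀ σ u : ℝ, |u| = U →
    0 < σ → σ ≤ 1 → U ^ (-(3 / 4) : ℝ) ≤ ‖riemannZeta (1 + σ + I * u)‖ := by
  filter_upwards [eventually_ge_atTop 1, eventually_two_mul_rpow_le_norm_riemannZeta,
    eventually_mul_add_log_pow_le_rpow 2 2 2 (show (0 : ℝ) < 3 / 20 by norm_num) 2,
    (tendsto_rpow_atTop (show (0 : ℝ) < 1 / 4 by norm_num)).eventually_ge_atTop 28]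
    with U hU1 hfar hlog hpow σ u hu h0 h1
  have hU0 : 0 < U := one_pos.trans_le hU1
  set σ₀ := U ^ (-(9 / 10) : ℝ)
  have hσ₀1 : σ₀ ≤ 1 := Real.rpow_le_one_of_one_le_of_nonpos hU1 (by norm_num)
  have : 0 < σ₀ := Real.rpow_pos_of_pos hU0 _
  have hpos : 0 < U ^ (-(3 / 4) : ℝ) := Real.rpow_pos_of_pos hU0 _
  rcases le_total σ₀ σ with h | h
  · linarith [hfar σ u hu h h1]
  have hfirst : 14 / U ≤ U ^ (-(3 / 4) : ℝ) / 2 := by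
    have hsplit : U ^ (-(3 / 4) : ℝ) = U ^ (1 / 4 : ℝ) / U := by
      rw [← Real.rpow_sub_one hU0.ne']
      norm_num
    rw [hsplit, div_div, div_le_div_iff₀ hU0 (by positivity)]
    nlinarith
  have hsecond : σ₀ * (2 + 2 * Real.log U) ^ 2 ≤ U ^ (-(3 / 4) : ℝ) / 2 := by
    calc σ₀ * (2 + 2 * Real.log U) ^ 2 ≤ σ₀ * (U ^ (3 / 20 : ℝ) / 2) := by gcongr; linarith
      _ = U ^ (-(3 / 4) : ℝ) / 2 := by
        rw [← mul_div_assoc, ← Real.rpow_add hU0]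
        norm_num
  have hdiff := norm_riemannZeta_sub_riemannZeta_le h0 h hσ₀1 (hu ▸ hU1 : 1 ≤ |u|)
  rw [norm_sub_rev, hu] at hdiff
  linarith [hfar σ₀ u hu le_rfl hσ₀1,
    norm_sub_norm_le (riemannZeta (1 + σ₀ + I * u)) (riemannZeta (1 + σ + I * u))]

theorem exists_abs_log_norm_riemannZeta_le : ∃ C : ℝ, 0 < C ∧ ∀ σ u : ℝ, 0 < σ → σ ≤ 1 → u ≠ 0 →
    |Real.log ‖riemannZeta (1 + σ + I * u)‖| ≤
      Real.posLog (1 / |u|) + 3 / 4 * Real.posLog |u| + C := by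
  obtain ⟨R, hR⟩ := eventually_atTop.1 (((eventually_ge_atTop 1).and
    eventually_rpow_le_norm_riemannZeta).and
    (eventually_mul_add_log_pow_le_rpow 1 9 2 (show (0 : ℝ) < 3 / 4 by norm_num) 1))
  obtain ⟨C, hC⟩ := exists_abs_log_norm_riemannZeta_le_of_abs_le R
  refine ⟨max C 1, lt_max_of_lt_right one_pos, fun σ u h0 h1 hu ↦ ?_⟩
  have hpos := Real.posLog_nonneg (x := 1 / |u|)
  have hposu := Real.posLog_nonneg (x := |u|)
  rcases le_total |u| R with hle | hle
  · linarith [hC σ u h0 h1 hu hle, le_max_left C 1]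
  obtain ⟨⟨hu1, hlow⟩, hupp⟩ := hR |u| hle
  have hu0 : 0 < |u| := abs_pos.2 hu
  have hpow (r : ℝ) : 0 < |u| ^ r := Real.rpow_pos_of_pos hu0 r
  have hz := hlow σ u rfl h0 h1
  have hloglow := Real.log_le_log (hpow _) hz
  have hlogupp := Real.log_le_log ((hpow _).trans_le hz)
    ((norm_riemannZeta_le_add_log h0 h1 hu1).trans (by simpa using hupp))
  rw [Real.log_rpow hu0] at hloglow hlogupp
  have hlog : Real.log |u| ≤ Real.posLog |u| := le_max_right _ _
  rw [abs_le]
  constructor <;> linarith [le_max_right C 1]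

end ZetaBounds

/-! ### Fourier expansion of the absolute value of the cosine -/

section AbsCos

open Complex

/-- The `n`-th Fourier coefficient of the `π`-periodic function `|cos|` with respect to
`exp (2 * I * n * x)`; the factor `cos (n * π)` is the sign `(-1) ^ n`. -/
noncomputable def absCosCoeff (n : ℤ) : ℝ :=
  2 / Real.pi * Real.cos (n * Real.pi) / (1 - 4 * n ^ 2)

variable {n : ℤ}

theorem one_le_abs_intCast (hn : n ≠ 0) : 1 ≤ |(n : ℝ)| := by
  exact_mod_cast Int.one_le_abs hn

theorem abs_absCosCoeff (hn : n ≠ 0) :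
    |absCosCoeff n| = 2 / Real.pi / (4 * (n : ℝ) ^ 2 - 1) := by
  have hn2 : 1 ≤ (n : ℝ) ^ 2 := one_le_sq_iff_one_le_abs _ |>.2 (one_le_abs_intCast hn)
  rw [absCosCoeff, abs_div, abs_mul, Real.abs_cos_int_mul_pi, mul_one,
    abs_of_pos (by positivity), abs_of_neg (by linarith), neg_sub]

theorem abs_absCosCoeff_le (hn : n ≠ 0) : |absCosCoeff n| ≤ 1 / (n : ℝ) ^ 2 := by
  have hn2 : 1 ≤ (n : ℝ) ^ 2 := one_le_sq_iff_one_le_abs _ |>.2 (one_le_abs_intCast hn)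
  rw [abs_absCosCoeff hn]
  gcongr
  · exact (div_le_one Real.pi_pos).2 (by linarith [Real.pi_gt_three])
  · linarith

theorem summable_abs_absCosCoeff : Summable fun n : ℤ ↦ |absCosCoeff n| := by
  rw [← Finset.summable_compl_iff {(0 : ℤ)}]
  refine .of_norm_bounded ((Finset.summable_compl_iff {(0 : ℤ)}).2
    (Real.summable_one_div_int_pow.2 one_lt_two)) fun n ↦ ?_
  rw [Real.norm_eq_abs, abs_abs]
  exact abs_absCosCoeff_le (by simpa using n.2)

theorem log_abs_two_mul_nonneg (hn : n ≠ 0) : 0 ≤ Real.log |2 * (n : ℝ)| :=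
  Real.log_nonneg (by rw [abs_mul, abs_two]; linarith [one_le_abs_intCast hn])

theorem summable_abs_absCosCoeff_mul_log :
    Summable fun n : ℤ ↦ |absCosCoeff n| * Real.log |2 * (n : ℝ)| := by
  have hsum : Summable fun n : ℤ ↦ 4 * |(n : ℝ)| ^ (-(3 / 2) : ℝ) :=
    (Real.summable_abs_int_rpow (by norm_num)).mul_left _
  refine hsum.of_norm_bounded fun n ↦ ?_
  rcases eq_or_ne n 0 with rfl | hn
  · simp [Real.zero_rpow]
  have hn1 := one_le_abs_intCast hn
  have hn0 : 0 < |(n : ℝ)| := one_pos.trans_le hn1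
  have hlog : Real.log |2 * (n : ℝ)| ≤ 4 * |(n : ℝ)| ^ (1 / 2 : ℝ) := by
    rw [abs_mul, abs_two, Real.log_mul two_ne_zero hn0.ne']
    linarith [Real.log_le_rpow_div hn0.le (show (0 : ℝ) < 1 / 2 by norm_num),
      Real.one_le_rpow hn1 (show (0 : ℝ) ≤ 1 / 2 by norm_num), Real.log_two_lt_d9]
  rw [norm_mul, Real.norm_eq_abs, abs_abs, Real.norm_of_nonneg (log_abs_two_mul_nonneg hn)]
  calc |absCosCoeff n| * Real.log |2 * (n : ℝ)|
      ≤ 1 / (n : ℝ) ^ 2 * (4 * |(n : ℝ)| ^ (1 / 2 : ℝ)) := by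
        gcongr
        · exact log_abs_two_mul_nonneg hn
        · exact abs_absCosCoeff_le hn
    _ = 4 * |(n : ℝ)| ^ (-(3 / 2) : ℝ) := by
        rw [← sq_abs, show (-(3 / 2) : ℝ) = 1 / 2 - (2 : ℕ) by norm_num,
          Real.rpow_sub_natCast hn0.ne']
        ring

theorem hasDerivAt_exp_mul_cos_primitive {a : ℂ} (ha : a ^ 2 ≠ -1) (z : ℂ) :
    HasDerivAt (fun z : ℂ ↦ exp (a * z) * (a * cos z + sin z) / (a ^ 2 + 1))
      (exp (a * z) * cos z) z := by
  have hne : a ^ 2 + 1 ≠ 0 := fun h ↦ ha (eq_neg_of_add_eq_zero_left h)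
  have hexp : HasDerivAt (fun z : ℂ ↦ exp (a * z)) (exp (a * z) * a) z := by
    simpa using ((hasDerivAt_id z).const_mul a).cexp
  have htrig : HasDerivAt (fun z : ℂ ↦ a * cos z + sin z) (a * -sin z + cos z) z :=
    ((hasDerivAt_cos z).const_mul a).add (hasDerivAt_sin z)
  refine ((hexp.mul htrig).div_const _).congr_deriv ?_
  rw [div_eq_iff hne]
  ring

theorem integral_exp_mul_abs_cos (n : ℤ) :
    ∫ x in (-(Real.pi / 2))..(Real.pi / 2), exp (-(2 * n * I) * x) * (|Real.cos x| : ℝ) =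
      Real.pi * absCosCoeff n := by
  have hsq : (-(2 * n * I)) ^ 2 = ((-(4 * n ^ 2) : ℤ) : ℂ) := by
    push_cast
    linear_combination (4 * n ^ 2 : ℂ) * I_sq
  have hne : (-(2 * n * I)) ^ 2 ≠ -1 := by
    rw [hsq]
    norm_cast
    lia
  have hcongr : Set.EqOn (fun x : ℝ ↦ exp (-(2 * n * I) * x) * (|Real.cos x| : ℝ))
      (fun x : ℝ ↦ exp (-(2 * n * I) * x) * cos x)
      (Set.uIcc (-(Real.pi / 2)) (Real.pi / 2)) := fun x hx ↦ by
    rw [Set.uIcc_of_le (by linarith [Real.pi_pos])] at hx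
    simp only [abs_of_nonneg (Real.cos_nonneg_of_mem_Icc hx), ofReal_cos]
  have hcont : Continuous fun x : ℝ ↦ exp (-(2 * n * I) * x) * cos x := by fun_prop
  rw [intervalIntegral.integral_congr hcongr, intervalIntegral.integral_eq_sub_of_hasDerivAt
    (fun x _ ↦ (hasDerivAt_exp_mul_cos_primitive hne x).comp_ofReal)
    (hcont.intervalIntegrable _ _), hsq, absCosCoeff]
  push_cast
  rw [cos_neg, sin_neg, cos_pi_div_two, sin_pi_div_two, Complex.cos,
    show -(2 * n * I) * (Real.pi / 2 : ℂ) = -(n * Real.pi) * I by ring,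
    show -(2 * n * I) * (-(Real.pi / 2) : ℂ) = (n * Real.pi) * I by ring]
  field

theorem hasSum_abs_cos (x : ℝ) :
    HasSum (fun n : ℤ ↦ absCosCoeff n * Real.cos (2 * n * x)) |Real.cos x| := by
  have : Fact (0 < Real.pi) := ⟨Real.pi_pos⟩
  have hper : Function.Periodic (fun x : ℝ ↦ ((|Real.cos x| : ℝ) : ℂ)) Real.pi := fun x ↦ by
    simp [Real.cos_add_pi]
  let f : C(AddCircle Real.pi, ℂ) :=
    ⟨hper.lift, Continuous.quotient_liftOn' (by fun_prop) _⟩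
  have hf (x : ℝ) : f x = (|Real.cos x| : ℝ) := hper.lift_coe x
  have hfourier (n : ℤ) (x : ℝ) :
      fourier n (x : AddCircle Real.pi) = exp ((2 * n * x : ℝ) * I) := by
    rw [fourier_coe_apply]
    congr 1
    push_cast
    field
  have hcoeff (n : ℤ) : fourierCoeff f n = absCosCoeff n := by
    rw [fourierCoeff_eq_intervalIntegral f n (-(Real.pi / 2)),
      show -(Real.pi / 2) + Real.pi = Real.pi / 2 by ring]
    have hint := integral_exp_mul_abs_cos n
    have hcongr (x : ℝ) : fourier (-n) (x : AddCircle Real.pi) • f x =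
        exp (-(2 * n * I) * x) * (|Real.cos x| : ℝ) := by
      rw [hfourier, hf, smul_eq_mul]
      congr 2
      push_cast
      ring
    simp only [hcongr, hint, real_smul]
    push_cast
    field
  have hsum : Summable (fourierCoeff f) := by
    refine .of_norm ?_
    simpa only [hcoeff, norm_real, Real.norm_eq_abs] using summable_abs_absCosCoeff
  have h := hasSum_re (has_pointwise_sum_fourier_series_of_summable hsum (x : AddCircle Real.pi))
  simpa only [hf, hcoeff, hfourier, smul_eq_mul, re_ofReal_mul, exp_ofReal_mul_I_re,
    ofReal_re] using h

/-- The nonconstant coefficients have absolute sum `2 / π`, the mean value of `|cos|`: this is the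
expansion at `π / 2`, where all of them have the same sign. -/
theorem hasSum_abs_absCosCoeff :
    HasSum (fun n : ℤ ↦ if n = 0 then 0 else |absCosCoeff n|) (2 / Real.pi) := by
  have h := (hasSum_ite_eq (0 : ℤ) (2 / Real.pi)).sub (hasSum_abs_cos (Real.pi / 2))
  rw [Real.cos_pi_div_two, abs_zero, sub_zero] at h
  refine h.congr_fun fun n ↦ ?_
  have hcos : Real.cos (n * Real.pi) * Real.cos (n * Real.pi) = 1 := by
    rw [← abs_mul_abs_self, Real.abs_cos_int_mul_pi, one_mul]
  have hterm : absCosCoeff n * Real.cos (2 * n * (Real.pi / 2)) =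
      2 / Real.pi / (1 - 4 * (n : ℝ) ^ 2) := by
    rw [absCosCoeff, show 2 * (n : ℝ) * (Real.pi / 2) = n * Real.pi by ring, div_mul_eq_mul_div,
      mul_assoc, hcos, mul_one]
  rw [hterm]
  split_ifs with hn
  · simp [hn]
  · rw [abs_absCosCoeff hn, ← neg_sub, div_neg, zero_sub]

end AbsCos

/-! ### Euler products and the extremal sum over primes -/

section EulerProduct

open Complex

theorem norm_neg_log_one_sub_sub_self_le {w : ℂ} (hw : ‖w‖ ≤ 1 / 2) :
    ‖-log (1 - w) - w‖ ≤ ‖w‖ ^ 2 := by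
  have htaylor := norm_log_one_add_sub_self_le (z := -w) (by rw [norm_neg]; linarith)
  rw [norm_neg, ← sub_eq_add_neg, sub_neg_eq_add] at htaylor
  have hinv : (1 - ‖w‖)⁻¹ ≤ 2 := by
    rw [inv_le_comm₀ (by linarith) two_pos]
    linarith
  calc ‖-log (1 - w) - w‖ = ‖log (1 - w) + w‖ := by rw [← norm_neg]; ring_nf
    _ ≤ ‖w‖ ^ 2 * (1 - ‖w‖)⁻¹ / 2 := htaylor
    _ ≤ ‖w‖ ^ 2 * 2 / 2 := by gcongr
    _ = ‖w‖ ^ 2 := by ring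

theorem abs_log_norm_tsum_sub_tsum_primes_le {g : ℕ →*₀ ℂ} (hg : Summable fun n ↦ ‖g n‖)
    (hle : ∀ n, ‖g n‖ ≤ 1 / n) :
    |Real.log ‖∑' n, g n‖ - ∑' p : Nat.Primes, (g p).re| ≤ ∑' n : ℕ, 1 / (n : ℝ) ^ 2 := by
  have hinj := Nat.Primes.coe_nat_injective
  have hsq : Summable fun n : ℕ ↦ 1 / (n : ℝ) ^ 2 := Real.summable_one_div_nat_pow.2 one_lt_two
  have hsqp : Summable fun p : Nat.Primes ↦ 1 / (p : ℝ) ^ 2 := hsq.comp_injective hinj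
  have hgp : Summable fun p : Nat.Primes ↦ g p := (hg.comp_injective hinj).of_norm
  have hhalf (p : Nat.Primes) : ‖g p‖ ≤ 1 / 2 := (hle p).trans <| by
    gcongr
    exact_mod_cast p.2.two_le
  have hterm (p : Nat.Primes) : ‖-log (1 - g p) - g p‖ ≤ 1 / (p : ℝ) ^ 2 :=
    (norm_neg_log_one_sub_sub_self_le (hhalf p)).trans <|
      (pow_le_pow_left₀ (norm_nonneg _) (hle p) 2).trans_eq (one_div_pow _ 2)
  have hlog : Summable fun p : Nat.Primes ↦ -log (1 - g p) := by
    simpa only [sub_add_cancel] using (Summable.of_norm_bounded hsqp hterm).add hgp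
  rw [← EulerProduct.exp_tsum_primes_log_eq_tsum hg, norm_exp, Real.log_exp, ← re_tsum hgp,
    ← sub_re, ← hlog.tsum_sub hgp]
  calc |(∑' p : Nat.Primes, (-log (1 - g p) - g p)).re|
      ≤ ‖∑' p : Nat.Primes, (-log (1 - g p) - g p)‖ := abs_re_le_norm _
    _ ≤ ∑' p : Nat.Primes, 1 / (p : ℝ) ^ 2 := tsum_of_norm_bounded hsqp.hasSum hterm
    _ ≤ ∑' n : ℕ, 1 / (n : ℝ) ^ 2 :=
      hsqp.tsum_le_tsum_of_inj _ hinj (fun _ _ ↦ by positivity) (fun _ ↦ le_rfl) hsq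

theorem norm_LSeries_term_le {a : ℕ → ℂ} {n : ℕ} (ha : ‖a n‖ ≤ 1) (s : ℂ) :
    ‖LSeries.term a s n‖ ≤ (n : ℝ) ^ (-s.re) := by
  rw [LSeries.norm_term_eq, Real.rpow_neg (by positivity)]
  split_ifs
  · positivity
  · exact div_le_of_le_mul₀ (by positivity) (by positivity) <| by
      rwa [inv_mul_cancel₀ (by positivity)]

theorem tsum_natCast_rpow_neg {x : ℝ} (hx : 1 < x) :
    ∑' n : ℕ, (n : ℝ) ^ (-x) = ‖riemannZeta x‖ := by
  have hterm (n : ℕ) : 1 / (n : ℂ) ^ (x : ℂ) = ((n : ℝ) ^ (-x) : ℝ) := by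
    rw [ofReal_cpow (by positivity), one_div, ← cpow_neg]
    push_cast
    rfl
  rw [zeta_eq_tsum_one_div_nat_cpow (by simpa using hx), tsum_congr hterm, ← ofReal_tsum,
    norm_real, Real.norm_of_nonneg (tsum_nonneg fun n ↦ by positivity)]

theorem exists_norm_LSeries_le :
    ∃ C : ℝ, 1 ≤ C ∧ ∀ a : ℕ → ℂ, (∀ n, ‖a n‖ ≤ 1) → ∀ s : ℂ, 1 < s.re → s.re ≤ 2 →
      ‖LSeries a s‖ ≤ C / (s.re - 1) := by
  obtain ⟨C, hC, hzeta⟩ := exists_norm_riemannZeta_one_add_le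
  refine ⟨C, hC, fun a ha s h1 h2 ↦ ?_⟩
  have hsum : Summable fun n : ℕ ↦ (n : ℝ) ^ (-s.re) := Real.summable_nat_rpow.2 (by linarith)
  calc ‖LSeries a s‖ ≤ ∑' n : ℕ, (n : ℝ) ^ (-s.re) :=
        tsum_of_norm_bounded hsum.hasSum fun n ↦ norm_LSeries_term_le (ha n) s
    _ = ‖riemannZeta (1 + (s.re - 1 : ℝ))‖ := by
        rw [tsum_natCast_rpow_neg h1]
        push_cast
        ring_nf
    _ ≤ C / (s.re - 1) := hzeta _ (by linarith) (by linarith)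

variable {f : ℕ → ℝ}

theorem norm_ofReal_apply_le (hb : ∀ n, f n ∈ Set.Icc (-1) 1) (n : ℕ) : ‖(f n : ℂ)‖ ≤ 1 := by
  rw [norm_real]
  exact abs_le.2 (hb n)

/-- The summand `n ↦ f(n) n⁻ˢ` of the Dirichlet series of a completely multiplicative function, as a
monoid-with-zero homomorphism; `s ≠ 0` makes it vanish at `0`, whatever the value of `f 0`. -/
noncomputable def IsCM.summandHom (hf : IsCM f) {s : ℂ} (hs : s ≠ 0) : ℕ →*₀ ℂ where
  toFun n := f n * (n : ℂ) ^ (-s)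
  map_zero' := by simp [hs]
  map_one' := by simp [hf.1]
  map_mul' m n := by
    rw [hf.2, Nat.cast_mul, natCast_mul_natCast_cpow]
    push_cast
    ring

theorem IsCM.abs_log_norm_LSeries_sub_tsum_primes_le (hf : IsCM f)
    (hb : ∀ n, f n ∈ Set.Icc (-1) 1) {s : ℂ} (hs : 1 < s.re) :
    |Real.log ‖LSeries (fun n ↦ f n) s‖ - ∑' p : Nat.Primes, f p * ((p : ℂ) ^ (-s)).re| ≤
      ∑' n : ℕ, 1 / (n : ℝ) ^ 2 := by
  have hs0 : s ≠ 0 := ne_zero_of_one_lt_re hs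
  have hterm (n : ℕ) : hf.summandHom hs0 n = LSeries.term (fun n ↦ f n) s n := by
    rw [LSeries.term_of_ne_zero' hs0, div_eq_mul_inv, ← cpow_neg]
    rfl
  have hre (p : Nat.Primes) : f p * ((p : ℂ) ^ (-s)).re = (hf.summandHom hs0 p).re :=
    (re_ofReal_mul _ _).symm
  have hle (n : ℕ) : ‖hf.summandHom hs0 n‖ ≤ (n : ℝ) ^ (-s.re) := by
    rw [hterm]
    exact norm_LSeries_term_le (norm_ofReal_apply_le hb n) s
  have hsum : Summable fun n : ℕ ↦ (n : ℝ) ^ (-s.re) := Real.summable_nat_rpow.2 (by linarith)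
  rw [LSeries, ← tsum_congr hterm, tsum_congr hre]
  refine abs_log_norm_tsum_sub_tsum_primes_le
    (hsum.of_nonneg_of_le (fun _ ↦ norm_nonneg _) hle) fun n ↦ (hle n).trans ?_
  rcases n.eq_zero_or_pos with rfl | hn
  · rw [Nat.cast_zero, Real.zero_rpow (by linarith), div_zero]
  · rw [one_div, ← Real.rpow_neg_one]
    exact Real.rpow_le_rpow_of_exponent_le (by exact_mod_cast hn) (by linarith)

theorem re_natCast_cpow_neg {n : ℕ} (hn : n ≠ 0) (σ u : ℝ) :
    ((n : ℂ) ^ (-(1 + σ + I * u))).re = (n : ℝ) ^ (-(1 + σ)) * Real.cos (u * Real.log n) := by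
  have hexponent : (Real.log n : ℂ) * (-(1 + σ + I * u)) =
      (Real.log n * (-(1 + σ)) : ℝ) + (-(u * Real.log n) : ℝ) * I := by
    push_cast
    ring
  rw [cpow_def_of_ne_zero (by exact_mod_cast hn), ← natCast_log, hexponent, exp_add,
    ← ofReal_exp, re_ofReal_mul, exp_ofReal_mul_I_re, Real.cos_neg,
    Real.rpow_def_of_pos (by positivity)]

/-- The sum `∑ₚ p^{-(1+σ)} cos (u log p)` over primes; up to `O(1)` it is `log |ζ(1 + σ + iu)|`. -/
noncomputable def primeCosSum (σ u : ℝ) : ℝ :=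
  ∑' p : Nat.Primes, (p : ℝ) ^ (-(1 + σ)) * Real.cos (u * Real.log p)

variable {σ : ℝ}

theorem abs_log_norm_riemannZeta_sub_primeCosSum_le (hσ : 0 < σ) (u : ℝ) :
    |Real.log ‖riemannZeta (1 + σ + I * u)‖ - primeCosSum σ u| ≤ ∑' n : ℕ, 1 / (n : ℝ) ^ 2 := by
  have hcm : IsCM fun _ ↦ 1 := ⟨rfl, fun _ _ ↦ (one_mul 1).symm⟩
  have hre : 1 < (1 + σ + I * u : ℂ).re := by simpa using hσ
  have hlog := hcm.abs_log_norm_LSeries_sub_tsum_primes_le (fun _ ↦ by norm_num) hre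
  have hone : (fun _ : ℕ ↦ ((1 : ℝ) : ℂ)) = 1 := funext fun _ ↦ ofReal_one
  have hprime (p : Nat.Primes) := re_natCast_cpow_neg p.2.ne_zero σ u
  simpa only [hone, LSeries_one_eq_riemannZeta hre, one_mul, hprime,
    primeCosSum] using hlog

theorem summable_primes_rpow_neg (hσ : 0 < σ) :
    Summable fun p : Nat.Primes ↦ ((p : ℕ) : ℝ) ^ (-(1 + σ)) :=
  (Real.summable_nat_rpow.2 (by linarith)).comp_injective Nat.Primes.coe_nat_injective

theorem summable_primes_rpow_neg_mul (hσ : 0 < σ) {c : ℕ → ℝ} (hc : ∀ n, |c n| ≤ 1) :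
    Summable fun p : Nat.Primes ↦ (p : ℝ) ^ (-(1 + σ)) * c p := by
  refine (summable_primes_rpow_neg hσ).of_norm_bounded fun p ↦ ?_
  rw [norm_mul, Real.norm_of_nonneg (by positivity)]
  exact mul_le_of_le_one_right (by positivity) (hc p)

theorem hasSum_absCosCoeff_mul_primeCosSum (hσ : 0 < σ) (t : ℝ) :
    HasSum (fun n : ℤ ↦ absCosCoeff n * primeCosSum σ (2 * n * t))
      (∑' p : Nat.Primes, (p : ℝ) ^ (-(1 + σ)) * |Real.cos (t * Real.log p)|) := by
  let F : Nat.Primes × ℤ → ℝ := fun q ↦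
    (q.1 : ℝ) ^ (-(1 + σ)) * (absCosCoeff q.2 * Real.cos (2 * q.2 * (t * Real.log q.1)))
  have hF : Summable F := by
    refine .of_norm_bounded ((summable_primes_rpow_neg hσ).mul_of_nonneg summable_abs_absCosCoeff
      (fun p ↦ by positivity) fun n ↦ abs_nonneg _) fun ⟨p, n⟩ ↦ ?_
    rw [Real.norm_eq_abs, abs_mul, abs_mul, abs_of_nonneg (by positivity)]
    gcongr
    exact mul_le_of_le_one_right (abs_nonneg _) (Real.abs_cos_le_one _)
  have hrow (n : ℤ) : absCosCoeff n * primeCosSum σ (2 * n * t) = ∑' p, F (p, n) := by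
    rw [primeCosSum, ← tsum_mul_left]
    refine tsum_congr fun p ↦ ?_
    rw [mul_assoc (2 * (n : ℝ)) t]
    ring
  have hcol (p : Nat.Primes) :
      (p : ℝ) ^ (-(1 + σ)) * |Real.cos (t * Real.log p)| = ∑' n, F (p, n) := by
    simp only [F, tsum_mul_left, (hasSum_abs_cos _).tsum_eq]
  rw [funext hrow, tsum_congr hcol, hF.tsum_comm.symm]
  exact hF.prod_symm.prod.hasSum

theorem tsum_primes_mul_cos_le (hb : ∀ n, f n ∈ Set.Icc (-1) 1) (hσ : 0 < σ) (t : ℝ) :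
    ∑' p : Nat.Primes, f p * ((p : ℝ) ^ (-(1 + σ)) * Real.cos (t * Real.log p)) ≤
      ∑' p : Nat.Primes, (p : ℝ) ^ (-(1 + σ)) * |Real.cos (t * Real.log p)| := by
  have hcos (n : ℕ) : |f n * Real.cos (t * Real.log n)| ≤ |Real.cos (t * Real.log n)| := by
    rw [abs_mul]
    exact mul_le_of_le_one_left (abs_nonneg _) (abs_le.2 (hb n))
  have hcos_one (n : ℕ) := Real.abs_cos_le_one (t * Real.log n)
  simp_rw [mul_left_comm (f _)]
  refine Summable.tsum_le_tsum (fun p ↦ ?_)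
    (summable_primes_rpow_neg_mul hσ fun n ↦ (hcos n).trans (hcos_one n))
    (summable_primes_rpow_neg_mul hσ fun n ↦ (abs_abs _).trans_le (hcos_one n))
  gcongr
  exact (le_abs_self _).trans (hcos p)

theorem exists_primeCosSum_zero_le :
    ∃ C : ℝ, 0 < C ∧ ∀ σ : ℝ, 0 < σ → σ ≤ 1 → primeCosSum σ 0 ≤ Real.log (1 / σ) + C := by
  obtain ⟨C, hC, hzeta⟩ := exists_norm_riemannZeta_one_add_le
  have hlogC : 0 ≤ Real.log C := Real.log_nonneg hC
  have : 0 ≤ ∑' n : ℕ, 1 / (n : ℝ) ^ 2 := tsum_nonneg fun n ↦ by positivity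
  refine ⟨1 + Real.log C + ∑' n : ℕ, 1 / (n : ℝ) ^ 2, by positivity, fun σ h0 h1 ↦ ?_⟩
  have hprime := (abs_le.1 (abs_log_norm_riemannZeta_sub_primeCosSum_le h0 0)).1
  rw [ofReal_zero, mul_zero, add_zero] at hprime
  have hlog : Real.log ‖riemannZeta (1 + σ)‖ ≤ Real.log (C / σ) :=
    Real.log_le_log (norm_pos_iff.2 <| riemannZeta_ne_zero_of_one_le_re (by simpa using h0.le))
      (hzeta σ h0 h1)
  rw [div_eq_mul_one_div, Real.log_mul (by positivity) (by positivity)] at hlog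
  linarith

theorem exists_abs_primeCosSum_le :
    ∃ C : ℝ, 0 < C ∧ ∀ σ u : ℝ, 0 < σ → σ ≤ 1 → u ≠ 0 →
      |primeCosSum σ u| ≤ Real.posLog (1 / |u|) + 3 / 4 * Real.posLog |u| + C := by
  obtain ⟨C, hC, hzeta⟩ := exists_abs_log_norm_riemannZeta_le
  have : 0 ≤ ∑' n : ℕ, 1 / (n : ℝ) ^ 2 := tsum_nonneg fun n ↦ by positivity
  refine ⟨C + ∑' n : ℕ, 1 / (n : ℝ) ^ 2, by positivity, fun σ u h0 h1 hu ↦ ?_⟩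
  have hprime := abs_log_norm_riemannZeta_sub_primeCosSum_le h0 u
  have htri := abs_sub_abs_le_abs_sub (primeCosSum σ u) (Real.log ‖riemannZeta (1 + σ + I * u)‖)
  rw [abs_sub_comm (primeCosSum σ u)] at htri
  linarith [hzeta σ u h0 h1 hu]

theorem exists_abs_primeCosSum_two_mul_intCast_mul_le :
    ∃ C : ℝ, 0 < C ∧ ∀ (n : ℤ) (σ t : ℝ), n ≠ 0 → 0 < σ → σ ≤ 1 → t ≠ 0 →
      |primeCosSum σ (2 * n * t)| ≤
        Real.posLog (1 / |t|) + 3 / 4 * Real.posLog |t| + C + Real.log |2 * (n : ℝ)| := by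
  obtain ⟨C, hC, hbound⟩ := exists_abs_primeCosSum_le
  refine ⟨C, hC, fun n σ t hn h0 h1 ht ↦ ?_⟩
  have h2n : 1 ≤ |2 * (n : ℝ)| := by
    rw [abs_mul, abs_two]
    linarith [one_le_abs_intCast hn]
  have hinv : Real.posLog (1 / |2 * n * t|) ≤ Real.posLog (1 / |t|) := by
    refine Real.posLog_le_posLog (by positivity) (one_div_le_one_div_of_le (abs_pos.2 ht) ?_)
    rw [abs_mul]
    exact le_mul_of_one_le_left (abs_nonneg t) h2n
  have hmul : Real.posLog |2 * n * t| ≤ Real.log |2 * (n : ℝ)| + Real.posLog |t| := by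
    rw [abs_mul]
    exact Real.posLog_mul.trans_eq (by rw [Real.posLog_eq_log (by rwa [abs_abs])])
  linarith [hbound σ (2 * n * t) h0 h1 (by positivity), log_abs_two_mul_nonneg hn]

theorem exists_tsum_primes_abs_cos_le :
    ∃ C : ℝ, 0 < C ∧ ∀ σ t : ℝ, 0 < σ → σ ≤ 1 → t ≠ 0 →
      ∑' p : Nat.Primes, (p : ℝ) ^ (-(1 + σ)) * |Real.cos (t * Real.log p)| ≤ 2 / Real.pi *
        (Real.log (1 / σ) + Real.posLog (1 / |t|) + 3 / 4 * Real.posLog |t|) + C := by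
  obtain ⟨C₀, hC₀, hzero⟩ := exists_primeCosSum_zero_le
  obtain ⟨C₁, hC₁, hne⟩ := exists_abs_primeCosSum_two_mul_intCast_mul_le
  let T := ∑' n : ℤ, |absCosCoeff n| * Real.log |2 * (n : ℝ)|
  have hT : 0 ≤ T := tsum_nonneg fun n ↦ by
    rcases eq_or_ne n 0 with rfl | hn
    · simp
    · exact mul_nonneg (abs_nonneg _) (log_abs_two_mul_nonneg hn)
  refine ⟨2 / Real.pi * (C₀ + C₁) + T, by positivity, fun σ t h0 h1 ht ↦ ?_⟩
  set B := Real.posLog (1 / |t|) + 3 / 4 * Real.posLog |t| + C₁ with hB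
  have hterm (n : ℤ) : absCosCoeff n * primeCosSum σ (2 * n * t) ≤
      (if n = 0 then 2 / Real.pi * primeCosSum σ 0 else 0) +
        ((if n = 0 then 0 else |absCosCoeff n|) * B +
          |absCosCoeff n| * Real.log |2 * (n : ℝ)|) := by
    rcases eq_or_ne n 0 with rfl | hn
    · simp [absCosCoeff]
    rw [if_neg hn, if_neg hn, zero_add, ← mul_add]
    refine (le_abs_self _).trans ?_
    rw [abs_mul]
    gcongr
    exact hne n σ t hn h0 h1 ht
  have hmajorant := (hasSum_ite_eq (0 : ℤ) (2 / Real.pi * primeCosSum σ 0)).add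
    ((hasSum_abs_absCosCoeff.mul_right B).add summable_abs_absCosCoeff_mul_log.hasSum)
  calc ∑' p : Nat.Primes, (p : ℝ) ^ (-(1 + σ)) * |Real.cos (t * Real.log p)|
      ≤ 2 / Real.pi * primeCosSum σ 0 + (2 / Real.pi * B + T) :=
        hasSum_le hterm (hasSum_absCosCoeff_mul_primeCosSum h0 t) hmajorant
    _ ≤ 2 / Real.pi * (Real.log (1 / σ) + C₀) + (2 / Real.pi * B + T) := by
        gcongr
        exact hzero σ h0 h1
    _ = _ := by rw [hB]; ring

-- The extremal case is `f p = sign (cos (t log p))`; `2 / π` is the mean value of `|cos|`.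
theorem exists_norm_LSeries_le_exp :
    ∃ C : ℝ, 0 < C ∧ ∀ f : ℕ → ℝ, IsCM f → (∀ n, f n ∈ Set.Icc (-1) 1) →
      ∀ σ t : ℝ, 0 < σ → σ ≤ 1 → t ≠ 0 → ‖LSeries (fun n ↦ f n) (1 + σ + I * t)‖ ≤
        Real.exp (2 / Real.pi *
          (Real.log (1 / σ) + Real.posLog (1 / |t|) + 3 / 4 * Real.posLog |t|) + C) := by
  obtain ⟨C, hC, hcos⟩ := exists_tsum_primes_abs_cos_le
  have : 0 ≤ ∑' n : ℕ, 1 / (n : ℝ) ^ 2 := tsum_nonneg fun n ↦ by positivity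
  refine ⟨C + ∑' n : ℕ, 1 / (n : ℝ) ^ 2, by positivity, fun f hf hb σ t h0 h1 ht ↦ ?_⟩
  have hre : 1 < (1 + σ + I * t : ℂ).re := by simpa using h0
  have hlog := (abs_le.1 (hf.abs_log_norm_LSeries_sub_tsum_primes_le hb hre)).2
  simp_rw [fun p : Nat.Primes ↦ re_natCast_cpow_neg p.2.ne_zero σ t] at hlog
  refine (Real.le_exp_log _).trans (Real.exp_le_exp.2 ?_)
  linarith [tsum_primes_mul_cos_le hb h0 t, hcos σ t h0 h1 ht]

end EulerProduct

/-! ### Convolution on the logarithmic scale -/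

section LogConv

variable {𝕜 : Type*} [Field 𝕜]

/-- Convolution on the logarithmic scale: `v` stands for `log x`, so that `Lsum a x` is
`logConv a 1 (log x)`. -/
noncomputable def logConv (a : ℕ → 𝕜) (ρ : ℝ → 𝕜) (v : ℝ) : 𝕜 :=
  ∑ n ∈ Icc 1 ⌊Real.exp v⌋₊, a n / n * ρ (v - Real.log n)

theorem exp_sub_log_natCast {n : ℕ} (hn : n ≠ 0) (v : ℝ) :
    Real.exp (v - Real.log n) = Real.exp v / n := by
  rw [Real.exp_sub, Real.exp_log (by positivity)]

theorem mem_Icc_floor_exp {v : ℝ} {n : ℕ} :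
    n ∈ Icc 1 ⌊Real.exp v⌋₊ ↔ 1 ≤ n ∧ 0 ≤ v - Real.log n := by
  rw [mem_Icc, Nat.le_floor_iff (Real.exp_pos v).le]
  refine and_congr_right fun hn ↦ ?_
  rw [sub_nonneg, Real.log_le_iff_le_exp (by exact_mod_cast hn)]

theorem logConv_logConv [CharZero 𝕜] (a b : ℕ → 𝕜) (ρ : ℝ → 𝕜) (v : ℝ) :
    logConv a (logConv b ρ) v =
      logConv (fun n ↦ ∑ p ∈ n.divisorsAntidiagonal, a p.1 * b p.2) ρ v := by
  have hexpand : logConv a (logConv b ρ) v = ∑ d ∈ Icc 1 ⌊Real.exp v⌋₊,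
      ∑ m ∈ Icc 1 ⌊Real.exp v / d⌋₊, a d / d * (b m / m * ρ (v - Real.log (d * m))) := by
    refine sum_congr rfl fun d hd ↦ ?_
    have hd0 : d ≠ 0 := Nat.one_le_iff_ne_zero.1 (mem_Icc.1 hd).1
    rw [logConv, mul_sum, exp_sub_log_natCast hd0]
    refine sum_congr rfl fun m hm ↦ ?_
    have hm0 : m ≠ 0 := Nat.one_le_iff_ne_zero.1 (mem_Icc.1 hm).1
    rw [Real.log_mul (by positivity) (by positivity), sub_sub]
  rw [hexpand, sum_sum_Icc_floor_div (Real.exp v) fun d m ↦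
    a d / d * (b m / m * ρ (v - Real.log (d * m))), logConv]
  refine sum_congr rfl fun n _ ↦ ?_
  rw [sum_div, sum_mul]
  refine sum_congr rfl fun p hp ↦ ?_
  rw [← (Nat.mem_divisorsAntidiagonal.1 hp).1]
  push_cast
  rw [mul_div_mul_comm]
  ring

theorem logConv_add (a : ℕ → 𝕜) (ρ τ : ℝ → 𝕜) :
    logConv a (ρ + τ) = logConv a ρ + logConv a τ := by
  ext v
  simp only [logConv, Pi.add_apply, mul_add, sum_add_distrib]

theorem logConv_sub (a : ℕ → 𝕜) (ρ τ : ℝ → 𝕜) :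
    logConv a (ρ - τ) = logConv a ρ - logConv a τ := by
  ext v
  simp only [logConv, Pi.sub_apply, mul_sub, sum_sub_distrib]

theorem logConv_smul (a : ℕ → 𝕜) (c : 𝕜) (ρ : ℝ → 𝕜) :
    logConv a (c • ρ) = c • logConv a ρ := by
  ext v
  simp only [logConv, Pi.smul_apply, smul_eq_mul, mul_sum, mul_left_comm]

theorem ofReal_logConv (a : ℕ → ℝ) (ρ : ℝ → ℝ) (v : ℝ) :
    ((logConv a ρ v : ℝ) : ℂ) = logConv (fun n ↦ (a n : ℂ)) (fun u ↦ (ρ u : ℂ)) v := by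
  simp [logConv]

theorem logConv_of_neg (a : ℕ → 𝕜) (ρ : ℝ → 𝕜) {v : ℝ} (hv : v < 0) : logConv a ρ v = 0 := by
  rw [logConv, Nat.floor_eq_zero.2 (Real.exp_lt_one_iff.2 hv), Icc_eq_empty (by simp), sum_empty]

theorem measurable_logConv {𝕜 : Type*} [RCLike 𝕜] (a : ℕ → 𝕜) {ρ : ℝ → 𝕜} (hρ : Measurable ρ) :
    Measurable (logConv a ρ) := by
  have hsum : Measurable fun q : ℕ × ℝ ↦ ∑ n ∈ Icc 1 q.1, a n / n * ρ (q.2 - Real.log n) :=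
    measurable_from_prod_countable_right fun N ↦
      Finset.measurable_fun_sum (Icc 1 N) fun n _ ↦ by fun_prop
  exact hsum.comp ((Nat.measurable_floor.comp Real.measurable_exp).prodMk measurable_id)

theorem logConv_eq_sum_Icc (a : ℕ → 𝕜) {ρ : ℝ → 𝕜} (h0 : ∀ u < 0, ρ u = 0) {v : ℝ} {N : ℕ}
    (hN : Real.exp v ≤ N) :
    logConv a ρ v = ∑ n ∈ Icc 1 N, a n / n * ρ (v - Real.log n) := by
  refine sum_subset (Icc_subset_Icc_right (Nat.floor_le_of_le hN)) fun n hn hn' ↦ ?_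
  rw [mem_Icc_floor_exp, not_and, not_le] at hn'
  rw [h0 _ (hn' (mem_Icc.1 hn).1), mul_zero]

end LogConv

section LogConvCalculus

open Filter Topology

variable (a : ℕ → ℝ) {ρ ρ' : ℝ → ℝ}

theorem continuous_logConv (hρ : Continuous ρ) (h0 : ∀ u < 0, ρ u = 0) :
    Continuous (logConv a ρ) := by
  refine continuous_iff_continuousAt.2 fun v ↦ ?_
  obtain ⟨N, hN⟩ := exists_nat_gt (Real.exp v)
  have hev : ∀ᶠ w in 𝓝 v, Real.exp w ≤ N :=
    (Real.continuous_exp.tendsto v).eventually (eventually_le_nhds hN)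
  refine ContinuousAt.congr (f := fun w ↦ ∑ n ∈ Icc 1 N, a n / n * ρ (w - Real.log n))
    (by fun_prop) ?_
  filter_upwards [hev] with w hw
  rw [logConv_eq_sum_Icc a h0 hw]

theorem eventually_floor_exp_eq (v : ℝ) :
    ∀ᶠ w in 𝓝[≥] v, ⌊Real.exp w⌋₊ = ⌊Real.exp v⌋₊ := by
  have hlt : ∀ᶠ w in 𝓝 v, Real.exp w < ⌊Real.exp v⌋₊ + 1 :=
    (Real.continuous_exp.tendsto v).eventually (gt_mem_nhds (Nat.lt_floor_add_one _))
  filter_upwards [nhdsWithin_le_nhds hlt, self_mem_nhdsWithin] with w hw hvw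
  rw [Nat.floor_eq_iff (Real.exp_pos w).le]
  exact ⟨(Nat.floor_le (Real.exp_pos v).le).trans (Real.exp_le_exp.2 hvw), hw⟩

theorem hasDerivWithinAt_logConv
    (hρ : ∀ u, 0 ≤ u → HasDerivWithinAt ρ (ρ' u) (Set.Ici u) u) (v : ℝ) :
    HasDerivWithinAt (logConv a ρ) (logConv a ρ' v) (Set.Ici v) v := by
  have hfix : HasDerivWithinAt
      (fun w ↦ ∑ n ∈ Icc 1 ⌊Real.exp v⌋₊, a n / n * ρ (w - Real.log n))
      (logConv a ρ' v) (Set.Ici v) v := by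
    refine HasDerivWithinAt.fun_sum fun n hn ↦ HasDerivWithinAt.const_mul _ ?_
    simpa [Function.comp_def] using (hρ _ (mem_Icc_floor_exp.1 hn).2).comp v
      ((hasDerivWithinAt_id v (Set.Ici v)).sub_const (Real.log n))
      fun w hw ↦ sub_le_sub_right hw (Real.log n)
  refine hfix.congr_of_eventuallyEq ?_ rfl
  filter_upwards [eventually_floor_exp_eq v] with w hw
  rw [logConv, hw]

end LogConvCalculus

/-! ### Laplace transforms -/

section Laplace

open MeasureTheory

variable {ρ τ : ℝ → ℂ} {s : ℂ}

/-- The two-sided Laplace transform; it is applied to functions vanishing on the negative axis. -/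
noncomputable def laplace (ρ : ℝ → ℂ) (s : ℂ) : ℂ :=
  ∫ v : ℝ, ρ v * Complex.exp (-(s * v))

/-- The functions whose Laplace transform is studied on `0 < s.re`: they vanish on the negative axis
and grow at most linearly on the positive one. -/
structure IsCausalOfLinearGrowth (ρ : ℝ → ℂ) : Prop where
  measurable : Measurable ρ
  eq_zero_of_neg : ∀ v < 0, ρ v = 0
  exists_norm_le : ∃ K, ∀ v, 0 ≤ v → ‖ρ v‖ ≤ K * (1 + v)

theorem one_add_mul_exp_neg_mul_le {ε v : ℝ} (hε : 0 < ε) (hv : 0 ≤ v) :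
    (1 + v) * Real.exp (-(ε * v)) ≤ 1 + 1 / ε := by
  have hexp : 1 ≤ Real.exp (ε * v) := Real.one_le_exp (by positivity)
  have hlin : v ≤ 1 / ε * Real.exp (ε * v) := by
    rw [div_mul_eq_mul_div, one_mul, le_div_iff₀ hε, mul_comm]
    linarith [Real.add_one_le_exp (ε * v)]
  rw [Real.exp_neg, ← div_eq_mul_inv, div_le_iff₀ (Real.exp_pos _)]
  linarith

theorem norm_mul_cexp_neg_mul (z s : ℂ) (v : ℝ) :
    ‖z * Complex.exp (-(s * v))‖ = ‖z‖ * Real.exp (-(s.re * v)) := by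
  simp [Complex.norm_exp]

namespace IsCausalOfLinearGrowth

theorem exists_norm_mul_exp_le (h : IsCausalOfLinearGrowth ρ) {ε : ℝ} (hε : 0 < ε) :
    ∃ M, 0 ≤ M ∧ ∀ v, ‖ρ v‖ * Real.exp (-(ε * v)) ≤ M := by
  obtain ⟨K, hK⟩ := h.exists_norm_le
  have hK0 : 0 ≤ K := by simpa using (norm_nonneg _).trans (hK 0 le_rfl)
  refine ⟨K * (1 + 1 / ε), by positivity, fun v ↦ ?_⟩
  rcases lt_or_ge v 0 with hv | hv
  · rw [h.eq_zero_of_neg v hv, norm_zero, zero_mul]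
    positivity
  calc ‖ρ v‖ * Real.exp (-(ε * v)) ≤ K * (1 + v) * Real.exp (-(ε * v)) := by
        gcongr
        exact hK v hv
    _ = K * ((1 + v) * Real.exp (-(ε * v))) := mul_assoc _ _ _
    _ ≤ K * (1 + 1 / ε) := by
        gcongr
        exact one_add_mul_exp_neg_mul_le hε hv

theorem integrable_mul_exp (h : IsCausalOfLinearGrowth ρ) (hs : 0 < s.re) :
    Integrable fun v : ℝ ↦ ρ v * Complex.exp (-(s * v)) := by
  obtain ⟨M, -, hM⟩ := h.exists_norm_mul_exp_le (half_pos hs)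
  have hmeas := h.measurable
  have hIoi : IntegrableOn (fun v : ℝ ↦ ρ v * Complex.exp (-(s * v))) (Set.Ioi 0) := by
    refine Integrable.mono' ((exp_neg_integrableOn_Ioi 0 (half_pos hs)).const_mul M)
      (by fun_prop) (.of_forall fun v ↦ ?_)
    calc ‖ρ v * Complex.exp (-(s * v))‖
        = ‖ρ v‖ * Real.exp (-(s.re / 2 * v)) * Real.exp (-(s.re / 2) * v) := by
          rw [norm_mul_cexp_neg_mul, mul_assoc, ← Real.exp_add]
          ring_nf
      _ ≤ M * Real.exp (-(s.re / 2) * v) := by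
          gcongr
          exact hM v
  rw [← integrableOn_univ]
  refine ((integrableOn_Ici_iff_integrableOn_Ioi (by finiteness)).2 hIoi).of_forall_sdiff_eq_zero
    .univ fun v hv ↦ ?_
  rw [h.eq_zero_of_neg v (by simpa using hv.2), zero_mul]

theorem of_bounded (hm : Measurable ρ) (h0 : ∀ v < 0, ρ v = 0) {K : ℝ}
    (hK : ∀ v, 0 ≤ v → ‖ρ v‖ ≤ K) : IsCausalOfLinearGrowth ρ where
  measurable := hm
  eq_zero_of_neg := h0
  exists_norm_le := by
    have : 0 ≤ K := (norm_nonneg _).trans (hK 0 le_rfl)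
    exact ⟨K, fun v hv ↦ (hK v hv).trans (le_mul_of_one_le_right this (by linarith))⟩

theorem add (h : IsCausalOfLinearGrowth ρ) (h' : IsCausalOfLinearGrowth τ) :
    IsCausalOfLinearGrowth (ρ + τ) where
  measurable := h.measurable.add h'.measurable
  eq_zero_of_neg v hv := by simp [h.eq_zero_of_neg v hv, h'.eq_zero_of_neg v hv]
  exists_norm_le := by
    obtain ⟨K, hK⟩ := h.exists_norm_le
    obtain ⟨L, hL⟩ := h'.exists_norm_le
    refine ⟨K + L, fun v hv ↦ (norm_add_le _ _).trans ?_⟩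
    rw [add_mul]
    exact add_le_add (hK v hv) (hL v hv)

theorem smul (h : IsCausalOfLinearGrowth ρ) (c : ℂ) : IsCausalOfLinearGrowth (c • ρ) where
  measurable := h.measurable.const_smul c
  eq_zero_of_neg v hv := by simp [h.eq_zero_of_neg v hv]
  exists_norm_le := by
    obtain ⟨K, hK⟩ := h.exists_norm_le
    refine ⟨‖c‖ * K, fun v hv ↦ ?_⟩
    rw [Pi.smul_apply, norm_smul, mul_assoc]
    gcongr
    exact hK v hv

theorem sub (h : IsCausalOfLinearGrowth ρ) (h' : IsCausalOfLinearGrowth τ) :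
    IsCausalOfLinearGrowth (ρ - τ) := by
  simpa only [neg_one_smul, ← sub_eq_add_neg] using h.add (h'.smul (-1))

theorem laplace_add (h : IsCausalOfLinearGrowth ρ) (h' : IsCausalOfLinearGrowth τ)
    (hs : 0 < s.re) : laplace (ρ + τ) s = laplace ρ s + laplace τ s := by
  simp only [laplace, Pi.add_apply, add_mul]
  exact integral_add (h.integrable_mul_exp hs) (h'.integrable_mul_exp hs)

theorem laplace_sub (h : IsCausalOfLinearGrowth ρ) (h' : IsCausalOfLinearGrowth τ)
    (hs : 0 < s.re) : laplace (ρ - τ) s = laplace ρ s - laplace τ s := by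
  simp only [laplace, Pi.sub_apply, sub_mul]
  exact integral_sub (h.integrable_mul_exp hs) (h'.integrable_mul_exp hs)

end IsCausalOfLinearGrowth

theorem laplace_smul (c : ℂ) (ρ : ℝ → ℂ) (s : ℂ) : laplace (c • ρ) s = c * laplace ρ s := by
  simp only [laplace, Pi.smul_apply, smul_eq_mul, mul_assoc]
  exact integral_const_mul _ _

theorem term_one_add_eq_mul_exp {a : ℕ → ℂ} {n : ℕ} (hn : n ≠ 0) (s : ℂ) :
    LSeries.term a (1 + s) n = a n / n * Complex.exp (-(s * Real.log n)) := by
  have hn' : (n : ℂ) ≠ 0 := by exact_mod_cast hn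
  rw [LSeries.term_of_ne_zero hn, Complex.cpow_add _ _ hn', Complex.cpow_one,
    Complex.cpow_def_of_ne_zero hn', Complex.exp_neg, Complex.ofReal_log (by positivity),
    Complex.ofReal_natCast, mul_comm s]
  field

theorem tsum_term_mul_eq_logConv_mul (a : ℕ → ℂ) (h0 : ∀ v < 0, ρ v = 0) (s : ℂ) (v : ℝ) :
    ∑' n, LSeries.term a (1 + s) n *
        (ρ (v - Real.log n) * Complex.exp (-(s * (v - Real.log n : ℝ)))) =
      logConv a ρ v * Complex.exp (-(s * v)) := by
  rw [tsum_eq_sum (s := Icc 1 ⌊Real.exp v⌋₊), logConv, sum_mul]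
  · refine sum_congr rfl fun n hn ↦ ?_
    have hexp : Complex.exp (-(s * v)) =
        Complex.exp (-(s * Real.log n)) * Complex.exp (-(s * (v - Real.log n : ℝ))) := by
      rw [← Complex.exp_add]
      push_cast
      ring_nf
    rw [term_one_add_eq_mul_exp (Nat.one_le_iff_ne_zero.1 (mem_Icc.1 hn).1), hexp]
    ring
  · intro n hn
    rw [mem_Icc_floor_exp, not_and, not_le] at hn
    rcases eq_or_ne n 0 with rfl | hn0
    · rw [LSeries.term_zero, zero_mul]
    · rw [h0 _ (hn (Nat.one_le_iff_ne_zero.2 hn0)), zero_mul, mul_zero]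

theorem laplace_logConv {a : ℕ → ℂ} (h : IsCausalOfLinearGrowth ρ) (hs : 0 < s.re)
    (ha : LSeriesSummable a (1 + s)) :
    laplace (logConv a ρ) s = LSeries a (1 + s) * laplace ρ s := by
  have hint := h.integrable_mul_exp hs
  let g : ℝ → ℂ := fun v ↦ ρ v * Complex.exp (-(s * v))
  let F : ℕ → ℝ → ℂ := fun n v ↦ LSeries.term a (1 + s) n * g (v - Real.log n)
  have hFint (n : ℕ) : Integrable (F n) := (hint.comp_sub_right (Real.log n)).const_mul _
  have hFnorm (n : ℕ) : ∫ v, ‖F n v‖ = ‖LSeries.term a (1 + s) n‖ * ∫ v, ‖g v‖ := by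
    simp only [F, norm_mul (LSeries.term a (1 + s) n)]
    rw [integral_const_mul, integral_sub_right_eq_self fun v ↦ ‖g v‖]
  have hF (n : ℕ) : ∫ v, F n v = LSeries.term a (1 + s) n * laplace ρ s := by
    simp only [F]
    rw [integral_const_mul, integral_sub_right_eq_self g, laplace]
  have hsum := hasSum_integral_of_summable_integral_norm hFint <| by
    simpa only [hFnorm] using ha.norm.mul_right _
  simp only [hF, F, g, tsum_term_mul_eq_logConv_mul a h.eq_zero_of_neg] at hsum
  rw [laplace, ← hsum.tsum_eq, tsum_mul_right, LSeries]

end Laplace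

section LaplacePlancherel

open MeasureTheory

variable {Φ : ℝ → ℂ} {σ : ℝ}

namespace IsCausalOfLinearGrowth

theorem integrable_mul_exp_ofReal (h : IsCausalOfLinearGrowth Φ) (hσ : 0 < σ) :
    Integrable fun v : ℝ ↦ Φ v * Complex.exp (-(σ * v)) :=
  h.integrable_mul_exp (by simpa using hσ)

theorem memLp_two_mul_exp (h : IsCausalOfLinearGrowth Φ) (hσ : 0 < σ) :
    MemLp (fun v : ℝ ↦ Φ v * Complex.exp (-(σ * v))) 2 := by
  have hint := h.integrable_mul_exp_ofReal hσ
  obtain ⟨M, -, hM⟩ := h.exists_norm_mul_exp_le hσ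
  refine (memLp_two_iff_integrable_sq_norm hint.1).2 <|
    Integrable.mono' (hint.norm.const_mul M) (hint.1.norm.pow 2) (.of_forall fun v ↦ ?_)
  rw [Real.norm_eq_abs, abs_of_nonneg (by positivity), sq]
  gcongr
  rw [norm_mul_cexp_neg_mul]
  exact hM v

end IsCausalOfLinearGrowth

theorem norm_mul_exp_ofReal_sq (z : ℂ) (σ v : ℝ) :
    ‖z * Complex.exp (-(σ * v))‖ ^ 2 = ‖z‖ ^ 2 * Real.exp (-(2 * σ * v)) := by
  rw [norm_mul_cexp_neg_mul, mul_pow, ← Real.exp_nat_mul, Complex.ofReal_re]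
  push_cast
  ring_nf

theorem laplace_ofReal_add_I_mul (Φ : ℝ → ℂ) (σ t : ℝ) :
    laplace Φ (σ + Complex.I * t) =
      ∫ v : ℝ, Φ v * Complex.exp (-(σ * v)) * Complex.exp (-(Complex.I * t * v)) := by
  refine integral_congr_ae (.of_forall fun v ↦ ?_)
  simp only
  rw [mul_assoc, ← Complex.exp_add]
  ring_nf

namespace IsCausalOfLinearGrowth

theorem integrable_norm_sq_mul_exp (h : IsCausalOfLinearGrowth Φ) (hσ : 0 < σ) :
    Integrable fun v : ℝ ↦ ‖Φ v‖ ^ 2 * Real.exp (-(2 * σ * v)) := by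
  simpa only [norm_mul_exp_ofReal_sq] using
    (h.memLp_two_mul_exp hσ).integrable_norm_pow two_ne_zero

theorem integrable_norm_sq_laplace (h : IsCausalOfLinearGrowth Φ) (hσ : 0 < σ) :
    Integrable fun t : ℝ ↦ ‖laplace Φ (σ + Complex.I * t)‖ ^ 2 := by
  simpa only [laplace_ofReal_add_I_mul] using
    integrable_norm_sq_integral_mul_exp (h.integrable_mul_exp_ofReal hσ) (h.memLp_two_mul_exp hσ)

theorem integral_norm_sq_laplace (h : IsCausalOfLinearGrowth Φ) (hσ : 0 < σ) :
    ∫ t : ℝ, ‖laplace Φ (σ + Complex.I * t)‖ ^ 2 =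
      2 * Real.pi * ∫ v, ‖Φ v‖ ^ 2 * Real.exp (-(2 * σ * v)) := by
  simpa only [laplace_ofReal_add_I_mul, norm_mul_exp_ofReal_sq] using
    integral_norm_sq_integral_mul_exp (h.integrable_mul_exp_ofReal hσ) (h.memLp_two_mul_exp hσ)

end IsCausalOfLinearGrowth

end LaplacePlancherel

/-! ### The smoothing kernel and the remainder -/

section PowerSums

theorem pow_succ_le_add_one_mul_sum_pow (k N : ℕ) :
    (N : ℝ) ^ (k + 1) ≤ (k + 1) * ∑ n ∈ Icc 1 N, (n : ℝ) ^ k := by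
  have hmono : MonotoneOn (fun x : ℝ ↦ x ^ k) (Set.Icc ((0 : ℕ) : ℝ) N) := fun x hx y _ hxy ↦
    pow_le_pow_left₀ (by simpa using hx.1) hxy k
  have hint := hmono.integral_le_sum_Ico N.zero_le
  rw [integral_pow, sum_Ico_add' (fun n : ℕ ↦ (n : ℝ) ^ k) 0 N 1, zero_add,
    Ico_add_one_right_eq_Icc] at hint
  rw [← div_le_iff₀' (by positivity)]
  simpa using hint

theorem add_one_mul_sum_pow_le_pow_succ (k N : ℕ) :
    (k + 1) * ∑ n ∈ Icc 1 N, (n : ℝ) ^ k ≤ (N + 1 : ℝ) ^ (k + 1) := by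
  have hmono : MonotoneOn (fun x : ℝ ↦ x ^ k) (Set.Icc ((1 : ℕ) : ℝ) (N + 1 : ℕ)) :=
    fun x hx y _ hxy ↦ pow_le_pow_left₀ (zero_le_one.trans (by simpa using hx.1)) hxy k
  have hint := hmono.sum_le_integral_Ico (by lia)
  rw [integral_pow, le_div_iff₀' (by positivity), Ico_add_one_right_eq_Icc] at hint
  refine hint.trans ?_
  simp

theorem abs_add_one_mul_sum_pow_sub_pow_le (k : ℕ) {z : ℝ} (hz : 1 ≤ z) :
    |(k + 1) * ∑ n ∈ Icc 1 ⌊z⌋₊, (n : ℝ) ^ k - z ^ (k + 1)| ≤ (k + 1) * (2 * z) ^ k := by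
  have hz0 : 0 ≤ z := by linarith
  have pow_sub_le (x y : ℝ) (hx : 0 ≤ x) (hxy : x ≤ y) (hy : y ≤ x + 1) (hy2 : y ≤ 2 * z) :
      y ^ (k + 1) - x ^ (k + 1) ≤ (k + 1) * (2 * z) ^ k := by
    have hdiff := (le_abs_self _).trans (abs_pow_sub_pow_le y x (k + 1))
    rw [abs_of_nonneg hx, abs_of_nonneg (hx.trans hxy), max_eq_left hxy,
      abs_of_nonneg (sub_nonneg.2 hxy), mul_assoc] at hdiff
    refine hdiff.trans <|
      (mul_le_of_le_one_left (by positivity [hx.trans hxy]) (by linarith)).trans ?_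
    push_cast
    gcongr
    exact hx.trans hxy
  have hfloor := Nat.floor_le hz0
  have hlt := Nat.lt_floor_add_one z
  have hlower := pow_sub_le ⌊z⌋₊ z (by positivity) hfloor hlt.le (by linarith)
  have hupper := pow_sub_le z (z + 1) hz0 (by linarith) le_rfl (by linarith)
  have hpow : (⌊z⌋₊ + 1 : ℝ) ^ (k + 1) ≤ (z + 1) ^ (k + 1) := by gcongr
  rw [abs_le]
  constructor <;>
    linarith [pow_succ_le_add_one_mul_sum_pow k ⌊z⌋₊, add_one_mul_sum_pow_le_pow_succ k ⌊z⌋₊]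

end PowerSums

section CausalExp

open MeasureTheory

/-- The one-sided exponential `e^{-jv} 1_{v ≥ 0}`, from which all kernels are built. -/
noncomputable def causalExp (j : ℕ) (v : ℝ) : ℝ := if 0 ≤ v then Real.exp (-(j * v)) else 0

theorem causalExp_of_nonneg (j : ℕ) {v : ℝ} (hv : 0 ≤ v) : causalExp j v = Real.exp (-(j * v)) :=
  if_pos hv

theorem causalExp_of_neg (j : ℕ) {v : ℝ} (hv : v < 0) : causalExp j v = 0 := if_neg hv.not_ge

theorem measurable_causalExp (j : ℕ) : Measurable (causalExp j) :=
  Measurable.ite measurableSet_Ici (by fun_prop) measurable_const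

theorem continuous_causalExp_sub (i j : ℕ) : Continuous (causalExp i - causalExp j) := by
  have : causalExp i - causalExp j =
      fun v ↦ if 0 ≤ v then Real.exp (-(i * v)) - Real.exp (-(j * v)) else 0 := by
    ext v
    simp only [Pi.sub_apply, causalExp]
    split_ifs <;> simp
  rw [this]
  exact Continuous.if_le (by fun_prop) continuous_const continuous_const continuous_id
    fun v hv ↦ by simp [← hv]

theorem causalExp_anti {i j : ℕ} (hij : i ≤ j) (v : ℝ) : causalExp j v ≤ causalExp i v := by
  unfold causalExp
  split_ifs
  · gcongr
  · rfl

theorem hasDerivWithinAt_causalExp (j : ℕ) {u : ℝ} (hu : 0 ≤ u) :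
    HasDerivWithinAt (causalExp j) (-j * causalExp j u) (Set.Ici u) u := by
  have hexp : HasDerivAt (fun v ↦ Real.exp (-(j * v))) (-j * causalExp j u) u := by
    have := ((hasDerivAt_id u).const_mul (j : ℝ)).neg.exp
    simpa [causalExp_of_nonneg j hu, mul_comm] using this
  exact hexp.hasDerivWithinAt.congr (fun v hv ↦ causalExp_of_nonneg j (hu.trans hv))
    (causalExp_of_nonneg j hu)

theorem logConv_one_causalExp (k : ℕ) (v : ℝ) :
    logConv 1 (causalExp (k + 1)) v =
      (∑ n ∈ Icc 1 ⌊Real.exp v⌋₊, (n : ℝ) ^ k) / Real.exp v ^ (k + 1) := by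
  rw [logConv, sum_div]
  refine sum_congr rfl fun n hn ↦ ?_
  obtain ⟨hn1, hv⟩ := mem_Icc_floor_exp.1 hn
  have hn0 : (0 : ℝ) < n := by exact_mod_cast hn1
  rw [causalExp_of_nonneg _ hv, ← mul_neg, Real.exp_nat_mul, neg_sub, Real.exp_sub,
    Real.exp_log hn0, Pi.one_apply, div_pow, pow_succ (n : ℝ)]
  field

theorem abs_logConv_one_causalExp_sub_le (k : ℕ) {v : ℝ} (hv : 0 ≤ v) :
    |logConv 1 (causalExp (k + 1)) v - 1 / (k + 1)| ≤ 2 ^ k * Real.exp (-v) := by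
  have hsum := abs_add_one_mul_sum_pow_sub_pow_le k (Real.one_le_exp hv)
  have heq : logConv 1 (causalExp (k + 1)) v - 1 / (k + 1) =
      ((k + 1) * ∑ n ∈ Icc 1 ⌊Real.exp v⌋₊, (n : ℝ) ^ k - Real.exp v ^ (k + 1)) /
        ((k + 1) * Real.exp v ^ (k + 1)) := by
    rw [logConv_one_causalExp]
    field
  have hpos : (0 : ℝ) < (k + 1) * Real.exp v ^ (k + 1) := by positivity
  rw [heq, abs_div, abs_of_pos hpos, div_le_iff₀ hpos, Real.exp_neg]
  refine hsum.trans_eq ?_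
  rw [mul_pow]
  field

theorem isCausalOfLinearGrowth_causalExp (j : ℕ) :
    IsCausalOfLinearGrowth fun v ↦ (causalExp j v : ℂ) := by
  refine .of_bounded (K := 1) (Complex.measurable_ofReal.comp (measurable_causalExp j))
    (fun v hv ↦ by simp [causalExp_of_neg j hv]) fun v hv ↦ ?_
  rw [causalExp_of_nonneg j hv, Complex.norm_real, Real.norm_eq_abs, Real.abs_exp,
    Real.exp_le_one_iff, neg_nonpos]
  positivity

theorem laplace_causalExp (j : ℕ) {s : ℂ} (hs : 0 < s.re) :
    laplace (fun v ↦ (causalExp j v : ℂ)) s = 1 / (s + j) := by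
  have hre : 0 < (s + j).re := by
    rw [Complex.add_re, Complex.natCast_re]
    positivity
  have hind : (fun v ↦ (causalExp j v : ℂ) * Complex.exp (-(s * v))) =
      Set.indicator (Set.Ici 0) fun v : ℝ ↦ Complex.exp (-(s + j) * v) := by
    ext v
    by_cases hv : 0 ≤ v
    · rw [Set.indicator_of_mem (Set.mem_Ici.2 hv), causalExp_of_nonneg j hv, Complex.ofReal_exp,
        ← Complex.exp_add]
      push_cast
      ring_nf
    · rw [Set.indicator_of_notMem (by simpa using hv), causalExp_of_neg j (not_le.1 hv),
        Complex.ofReal_zero, zero_mul]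
  rw [laplace, hind, integral_indicator measurableSet_Ici, integral_Ici_eq_integral_Ioi,
    integral_exp_mul_complex_Ioi (by rwa [Complex.neg_re, neg_lt_zero]), Complex.ofReal_zero,
    mul_zero, Complex.exp_zero, neg_div_neg_eq]

end CausalExp

section Kernel

/-- The mixing parameter of `smoothKernel`. It solves `θ (1/2 + 1/3) + (1 - θ) (1/4 + 1/5) = γ`: the
first moment of `smoothKernel` is Euler's constant `γ`, which makes `1/s - ζ(1+s) q̂(s)` vanish at
`s = 0`. -/
noncomputable def mixParam : ℝ := (Real.eulerMascheroniConstant - 9 / 20) / (23 / 60)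

theorem mixParam_pos : 0 < mixParam := by
  rw [mixParam]
  exact div_pos (by linarith [Real.one_half_lt_eulerMascheroniConstant]) (by norm_num)

theorem mixParam_lt_one : mixParam < 1 := by
  rw [mixParam, div_lt_one (by norm_num)]
  linarith [Real.eulerMascheroniConstant_lt_two_thirds]

theorem norm_mixParam_smul_add_le {E : Type*} [SeminormedAddCommGroup E] [NormedSpace ℝ E]
    {x y : E} {A : ℝ} (hx : ‖x‖ ≤ A) (hy : ‖y‖ ≤ A) :
    ‖mixParam • x + (1 - mixParam) • y‖ ≤ A := by
  simpa using convex_closedBall (0 : E) A (by simpa using hx) (by simpa using hy)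
    mixParam_pos.le (sub_nonneg.2 mixParam_lt_one.le) (by ring)

/-- The nonnegative continuous smoothing kernel `q`: it has total mass `1` on `[0, ∞)`, and its
first moment is Euler's constant. -/
noncomputable def smoothKernel : ℝ → ℝ :=
  mixParam • (6 : ℝ) • (causalExp 2 - causalExp 3) +
    (1 - mixParam) • (20 : ℝ) • (causalExp 4 - causalExp 5)

/-- The right derivative of `smoothKernel` on `[0, ∞)`. -/
noncomputable def smoothKernelDeriv : ℝ → ℝ :=
  mixParam • (6 : ℝ) • ((-2 : ℝ) • causalExp 2 - (-3 : ℝ) • causalExp 3) +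
    (1 - mixParam) • (20 : ℝ) • ((-4 : ℝ) • causalExp 4 - (-5 : ℝ) • causalExp 5)

/-- The error `r = 1_{v ≥ 0} - 1 * q` of the smoothing. -/
noncomputable def remainderKernel : ℝ → ℝ := causalExp 0 - logConv 1 smoothKernel

theorem smoothKernel_nonneg (v : ℝ) : 0 ≤ smoothKernel v := by
  have h23 : 0 ≤ causalExp 2 v - causalExp 3 v := sub_nonneg.2 (causalExp_anti (by norm_num) v)
  have h45 : 0 ≤ causalExp 4 v - causalExp 5 v := sub_nonneg.2 (causalExp_anti (by norm_num) v)
  have := mixParam_pos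
  have : 0 < 1 - mixParam := sub_pos.2 mixParam_lt_one
  simp only [smoothKernel, Pi.add_apply, Pi.smul_apply, Pi.sub_apply, smul_eq_mul]
  positivity

theorem smoothKernel_of_neg {v : ℝ} (hv : v < 0) : smoothKernel v = 0 := by
  simp [smoothKernel, causalExp_of_neg _ hv]

theorem continuous_smoothKernel : Continuous smoothKernel :=
  (((continuous_causalExp_sub 2 3).const_smul _).const_smul _).add
    (((continuous_causalExp_sub 4 5).const_smul _).const_smul _)

theorem hasDerivWithinAt_smoothKernel {u : ℝ} (hu : 0 ≤ u) :
    HasDerivWithinAt smoothKernel (smoothKernelDeriv u) (Set.Ici u) u := by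
  have hd (j : ℕ) := hasDerivWithinAt_causalExp j hu
  have hsum := ((((hd 2).sub (hd 3)).const_smul (6 : ℝ)).const_smul mixParam).add
    ((((hd 4).sub (hd 5)).const_smul (20 : ℝ)).const_smul (1 - mixParam))
  push_cast at hsum
  exact hsum

theorem remainderKernel_of_neg {v : ℝ} (hv : v < 0) : remainderKernel v = 0 := by
  rw [remainderKernel, Pi.sub_apply, causalExp_of_neg 0 hv, logConv_of_neg _ _ hv, sub_zero]

theorem measurable_remainderKernel : Measurable remainderKernel :=
  (measurable_causalExp 0).sub (measurable_logConv 1 continuous_smoothKernel.measurable)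

theorem abs_remainderKernel_le {v : ℝ} (hv : 0 ≤ v) :
    |remainderKernel v| ≤ 480 * Real.exp (-v) := by
  have h2 := abs_le.1 (abs_logConv_one_causalExp_sub_le 1 hv)
  have h3 := abs_le.1 (abs_logConv_one_causalExp_sub_le 2 hv)
  have h4 := abs_le.1 (abs_logConv_one_causalExp_sub_le 3 hv)
  have h5 := abs_le.1 (abs_logConv_one_causalExp_sub_le 4 hv)
  norm_num at h2 h3 h4 h5
  have hpos := Real.exp_pos (-v)
  have hmix : remainderKernel v =
      mixParam • (1 - 6 * (logConv 1 (causalExp 2) v - logConv 1 (causalExp 3) v)) +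
      (1 - mixParam) • (1 - 20 * (logConv 1 (causalExp 4) v - logConv 1 (causalExp 5) v)) := by
    simp only [remainderKernel, smoothKernel, logConv_add, logConv_sub, logConv_smul, Pi.sub_apply,
      Pi.add_apply, Pi.smul_apply, smul_eq_mul, causalExp_of_nonneg 0 hv, Nat.cast_zero, zero_mul,
      neg_zero, Real.exp_zero]
    ring
  rw [hmix, ← Real.norm_eq_abs]
  refine norm_mixParam_smul_add_le ?_ ?_ <;> rw [Real.norm_eq_abs, abs_le] <;> constructor <;>
    linarith

theorem abs_logConv_smoothKernelDeriv_le {v : ℝ} (hv : 0 ≤ v) :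
    |logConv 1 smoothKernelDeriv v| ≤ 2240 * Real.exp (-v) := by
  have h2 := abs_le.1 (abs_logConv_one_causalExp_sub_le 1 hv)
  have h3 := abs_le.1 (abs_logConv_one_causalExp_sub_le 2 hv)
  have h4 := abs_le.1 (abs_logConv_one_causalExp_sub_le 3 hv)
  have h5 := abs_le.1 (abs_logConv_one_causalExp_sub_le 4 hv)
  norm_num at h2 h3 h4 h5
  have hpos := Real.exp_pos (-v)
  simp only [smoothKernelDeriv, logConv_add, logConv_sub, logConv_smul, ← Real.norm_eq_abs]
  refine norm_mixParam_smul_add_le ?_ ?_ <;>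
    simp only [Pi.sub_apply, Pi.smul_apply, smul_eq_mul, Real.norm_eq_abs, abs_le] <;>
    constructor <;> linarith

theorem abs_remainderKernel_sub_le {v w : ℝ} (hv : 0 ≤ v) (hvw : v ≤ w) :
    |remainderKernel w - remainderKernel v| ≤ 2240 * Real.exp (-v) * (w - v) := by
  have hconst (u : ℝ) (hu : 0 ≤ u) : causalExp 0 u = 1 := by simp [causalExp_of_nonneg 0 hu]
  have hder (u : ℝ) := hasDerivWithinAt_logConv 1 (fun _ ↦ hasDerivWithinAt_smoothKernel) u
  have hcont := continuous_logConv 1 continuous_smoothKernel fun _ ↦ smoothKernel_of_neg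
  have hmvt := norm_image_sub_le_of_norm_deriv_right_le_segment hcont.continuousOn
    (fun u _ ↦ hder u) (C := 2240 * Real.exp (-v)) (fun u hu ↦ ?_) w ⟨hvw, le_rfl⟩
  · rw [remainderKernel, Pi.sub_apply, Pi.sub_apply, hconst w (hv.trans hvw), hconst v hv,
      sub_sub_sub_cancel_left, abs_sub_comm]
    exact hmvt
  · refine (abs_logConv_smoothKernelDeriv_le (hv.trans hu.1)).trans ?_
    gcongr
    exact hu.1

theorem isCausalOfLinearGrowth_remainderKernel :
    IsCausalOfLinearGrowth fun v ↦ (remainderKernel v : ℂ) := by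
  refine .of_bounded (K := 480) (Complex.measurable_ofReal.comp measurable_remainderKernel)
    (fun v hv ↦ by simp [remainderKernel_of_neg hv]) fun v hv ↦ ?_
  rw [Complex.norm_real]
  refine (abs_remainderKernel_le hv).trans (mul_le_of_le_one_right (by norm_num) ?_)
  rwa [Real.exp_le_one_iff, neg_nonpos]

end Kernel

section KernelTransform

open Complex

/-- The Laplace transform `q̂` of `smoothKernel` in closed form. -/
noncomputable def smoothKernelTransform (s : ℂ) : ℂ :=
  mixParam * (6 / ((s + 2) * (s + 3))) + (1 - mixParam) * (20 / ((s + 4) * (s + 5)))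

/-- The continuation of `1/s - ζ(1+s) q̂(s)` to `-1 < s.re`: the poles at `s = 0` of
`(1 - q̂(s)) / s` and of `ζ(1+s) - 1/s` are removed. -/
noncomputable def remainderTransform (s : ℂ) : ℂ :=
  mixParam * ((s + 5) / ((s + 2) * (s + 3))) + (1 - mixParam) * ((s + 9) / ((s + 4) * (s + 5))) -
    riemannZeta₀ (1 + s) * smoothKernelTransform s

theorem add_natCast_ne_zero {s : ℂ} (hs : -1 < s.re) {j : ℕ} (hj : 1 ≤ j) : s + j ≠ 0 := by
  refine ne_of_apply_ne re ?_
  rw [add_re, natCast_re, zero_re]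
  have : (1 : ℝ) ≤ j := by exact_mod_cast hj
  linarith

theorem add_ofNat_ne_zero {s : ℂ} (hs : -1 < s.re) :
    s + 2 ≠ 0 ∧ s + 3 ≠ 0 ∧ s + 4 ≠ 0 ∧ s + 5 ≠ 0 :=
  ⟨by exact_mod_cast add_natCast_ne_zero hs (j := 2) (by norm_num),
    by exact_mod_cast add_natCast_ne_zero hs (j := 3) (by norm_num),
    by exact_mod_cast add_natCast_ne_zero hs (j := 4) (by norm_num),
    by exact_mod_cast add_natCast_ne_zero hs (j := 5) (by norm_num)⟩

theorem ofReal_smoothKernel :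
    (fun v ↦ (smoothKernel v : ℂ)) =
      (6 * mixParam : ℂ) • ((fun v ↦ (causalExp 2 v : ℂ)) - fun v ↦ (causalExp 3 v : ℂ)) +
        (20 * (1 - mixParam) : ℂ) •
          ((fun v ↦ (causalExp 4 v : ℂ)) - fun v ↦ (causalExp 5 v : ℂ)) := by
  ext v
  simp only [smoothKernel, Pi.add_apply, Pi.sub_apply, Pi.smul_apply, smul_eq_mul]
  push_cast
  ring

theorem isCausalOfLinearGrowth_smoothKernel :
    IsCausalOfLinearGrowth fun v ↦ (smoothKernel v : ℂ) := by
  have hc := isCausalOfLinearGrowth_causalExp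
  rw [ofReal_smoothKernel]
  exact (((hc 2).sub (hc 3)).smul _).add (((hc 4).sub (hc 5)).smul _)

theorem laplace_smoothKernel {s : ℂ} (hs : 0 < s.re) :
    laplace (fun v ↦ (smoothKernel v : ℂ)) s = smoothKernelTransform s := by
  have hc := isCausalOfLinearGrowth_causalExp
  obtain ⟨h2, h3, h4, h5⟩ := add_ofNat_ne_zero (s := s) (by linarith)
  rw [ofReal_smoothKernel,
    (((hc 2).sub (hc 3)).smul _).laplace_add (((hc 4).sub (hc 5)).smul _) hs, laplace_smul,
    laplace_smul, (hc 2).laplace_sub (hc 3) hs, (hc 4).laplace_sub (hc 5) hs]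
  simp only [laplace_causalExp _ hs, smoothKernelTransform]
  push_cast
  field

theorem laplace_remainderKernel {s : ℂ} (hs : 0 < s.re) :
    laplace (fun v ↦ (remainderKernel v : ℂ)) s =
      1 / s - riemannZeta (1 + s) * smoothKernelTransform s := by
  have hs1 : 1 < (1 + s).re := by simpa using hs
  have hconv : logConv 1 (fun v ↦ (smoothKernel v : ℂ)) =
      (fun v ↦ (causalExp 0 v : ℂ)) - fun v ↦ (remainderKernel v : ℂ) := by
    ext v
    have hcast := ofReal_logConv 1 smoothKernel v
    simp only [Pi.one_apply, ofReal_one] at hcast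
    simp only [remainderKernel, Pi.sub_apply, ofReal_sub, hcast]
    rw [sub_sub_cancel]
    rfl
  have htrans := laplace_logConv isCausalOfLinearGrowth_smoothKernel hs
    (LSeriesSummable_one_iff.2 hs1)
  rw [LSeries_one_eq_riemannZeta hs1, laplace_smoothKernel hs, hconv,
    (isCausalOfLinearGrowth_causalExp 0).laplace_sub isCausalOfLinearGrowth_remainderKernel hs,
    laplace_causalExp 0 hs, Nat.cast_zero, add_zero] at htrans
  rw [← htrans, sub_sub_cancel]

theorem laplace_remainderKernel_eq_remainderTransform {s : ℂ} (hs : 0 < s.re) :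
    laplace (fun v ↦ (remainderKernel v : ℂ)) s = remainderTransform s := by
  have hs0 : s ≠ 0 := by
    rintro rfl
    simp at hs
  obtain ⟨h2, h3, h4, h5⟩ := add_ofNat_ne_zero (s := s) (by linarith)
  rw [laplace_remainderKernel hs, riemannZeta_eq_inv_sub_add (by simpa using hs0)]
  simp only [remainderTransform, smoothKernelTransform, add_sub_cancel_left]
  field

theorem remainderTransform_zero : remainderTransform 0 = 0 := by
  have hθ : (mixParam : ℂ) = (Real.eulerMascheroniConstant - 9 / 20) / (23 / 60) := by
    rw [mixParam]
    push_cast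
    rfl
  simp only [remainderTransform, smoothKernelTransform, add_zero, riemannZeta₀_one, hθ]
  ring

theorem differentiableAt_remainderTransform {s : ℂ} (hs : -1 < s.re) :
    DifferentiableAt ℂ remainderTransform s := by
  obtain ⟨h2, h3, h4, h5⟩ := add_ofNat_ne_zero hs
  have := differentiable_riemannZeta₀
  unfold remainderTransform smoothKernelTransform
  fun_prop (disch := exact mul_ne_zero ‹_› ‹_›)

theorem exists_norm_laplace_remainderKernel_le_mul_norm (R : ℝ) :
    ∃ C, 0 < C ∧ ∀ s : ℂ, 0 < s.re → ‖s‖ ≤ R →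
      ‖laplace (fun v ↦ (remainderKernel v : ℂ)) s‖ ≤ C * ‖s‖ := by
  let U : Set ℂ := {s | -1 < s.re}
  have hU : IsOpen U := isOpen_lt continuous_const continuous_re
  have h0 : U ∈ nhds 0 := hU.mem_nhds (by simp [U])
  have hcont : ContinuousOn (dslope remainderTransform 0) U := (continuousOn_dslope h0).2
    ⟨fun s hs ↦ (differentiableAt_remainderTransform hs).continuousAt.continuousWithinAt,
      differentiableAt_remainderTransform (by simp)⟩
  let K : Set ℂ := Metric.closedBall 0 R ∩ {s | 0 ≤ s.re}
  have hK : IsCompact K :=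
    (isCompact_closedBall _ _).inter_right (isClosed_le continuous_const continuous_re)
  have hKU : K ⊆ U := fun s hs ↦ show -1 < s.re from neg_one_lt_zero.trans_le hs.2
  obtain ⟨C, hC⟩ := hK.exists_bound_of_continuousOn (hcont.mono hKU)
  refine ⟨max C 1, by positivity, fun s hs hR ↦ ?_⟩
  have hslope : remainderTransform s = s * dslope remainderTransform 0 s := by
    simpa [remainderTransform_zero] using (sub_smul_dslope remainderTransform 0 s).symm
  rw [laplace_remainderKernel_eq_remainderTransform hs, hslope, norm_mul, mul_comm]
  gcongr
  exact (hC s ⟨by simpa using hR, hs.le⟩).trans (le_max_left _ _)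

theorem norm_smoothKernelTransform_le {s : ℂ} (hs : s.im ≠ 0) :
    ‖smoothKernelTransform s‖ ≤ 20 / s.im ^ 2 := by
  have : 0 < |s.im| := abs_pos.2 hs
  have hterm (c a b : ℝ) (h0 : 0 ≤ c) (hc : c ≤ 20) :
      ‖(c : ℂ) / ((s + a) * (s + b))‖ ≤ 20 / s.im ^ 2 := by
    have hle (a : ℝ) : |s.im| ≤ ‖s + a‖ := by simpa using abs_im_le_norm (s + a)
    rw [norm_div, norm_mul, norm_real, Real.norm_of_nonneg h0, ← sq_abs, sq]
    gcongr <;> apply hle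
  have hmix := norm_mixParam_smul_add_le (hterm 6 2 3 (by norm_num) (by norm_num))
    (hterm 20 4 5 (by norm_num) le_rfl)
  simpa [smoothKernelTransform] using hmix

theorem exists_norm_laplace_remainderKernel_le_div :
    ∃ C, 0 < C ∧ ∀ σ t : ℝ, 0 < σ → σ ≤ 1 → 1 ≤ |t| →
      ‖laplace (fun v ↦ (remainderKernel v : ℂ)) (σ + I * t)‖ ≤ C / |t| := by
  obtain ⟨C, -, hC⟩ := exists_abs_log_norm_riemannZeta_le
  refine ⟨1 + Real.exp C * 20, by positivity, fun σ t h0 h1 ht ↦ ?_⟩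
  have ht0 : 0 < |t| := by linarith
  have hzeta : ‖riemannZeta (1 + (σ + I * t))‖ ≤ Real.exp C * |t| := by
    have hlog := (le_abs_self _).trans (hC σ t h0 h1 (abs_pos.1 ht0))
    have hposLog : Real.posLog (1 / |t|) = 0 := (Real.posLog_eq_zero_iff _).2 <| by
      rwa [abs_of_pos (by positivity), div_le_one ht0]
    rw [Real.posLog_eq_log (x := |t|) (by rwa [abs_abs]), hposLog, add_assoc 1 _] at hlog
    calc ‖riemannZeta (1 + (σ + I * t))‖ ≤ Real.exp (Real.log ‖riemannZeta (1 + (σ + I * t))‖) :=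
          Real.le_exp_log _
      _ ≤ Real.exp (C + Real.log |t|) := Real.exp_le_exp.2 (by linarith [Real.log_nonneg ht])
      _ = Real.exp C * |t| := by rw [Real.exp_add, Real.exp_log ht0]
  have him : (σ + I * t : ℂ).im = t := by simp
  have hkernel := norm_smoothKernelTransform_le (s := σ + I * t) (by simpa using abs_pos.1 ht0)
  have hnorm : |t| ≤ ‖(σ + I * t : ℂ)‖ := by simpa using abs_im_le_norm (σ + I * t : ℂ)
  rw [him] at hkernel
  rw [laplace_remainderKernel (by simpa using h0)]
  calc ‖1 / (σ + I * t) - riemannZeta (1 + (σ + I * t)) * smoothKernelTransform (σ + I * t)‖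
      ≤ 1 / ‖(σ + I * t : ℂ)‖ +
          ‖riemannZeta (1 + (σ + I * t))‖ * ‖smoothKernelTransform (σ + I * t)‖ := by
        simpa only [norm_mul, norm_div, norm_one] using norm_sub_le (1 / (σ + I * t : ℂ))
          (riemannZeta (1 + (σ + I * t)) * smoothKernelTransform (σ + I * t))
    _ ≤ 1 / |t| + Real.exp C * |t| * (20 / t ^ 2) := by gcongr
    _ = (1 + Real.exp C * 20) / |t| := by
        rw [← sq_abs t]
        field

end KernelTransform

section TransformBound

open Complex

theorem one_half_le_one_add_rpow_neg {x β : ℝ} (h0 : 0 ≤ x) (h1 : x ≤ 1) (hβ : β ≤ 1) :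
    1 / 2 ≤ (1 + x) ^ (-β) := by
  rw [Real.rpow_neg (by linarith), one_div]
  refine inv_anti₀ (by positivity) ?_
  calc (1 + x) ^ β ≤ (1 + x) ^ (1 : ℝ) := by
        gcongr
        linarith
    _ ≤ 2 := by
        rw [Real.rpow_one]
        linarith

theorem rpow_neg_le_two_mul_one_add_rpow_neg {x β : ℝ} (hx : 1 ≤ x) (h0 : 0 ≤ β) (h1 : β ≤ 1) :
    x ^ (-β) ≤ 2 * (1 + x) ^ (-β) := by
  have hx0 : 0 ≤ x := by linarith
  have hhalf : 1 / 2 ≤ (2 : ℝ) ^ (-β) := by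
    simpa [one_add_one_eq_two] using one_half_le_one_add_rpow_neg zero_le_one le_rfl h1
  calc x ^ (-β) = 2 * (1 / 2 * x ^ (-β)) := by ring
    _ ≤ 2 * (2 ^ (-β) * x ^ (-β)) := by gcongr
    _ = 2 * (2 * x) ^ (-β) := by rw [Real.mul_rpow zero_le_two hx0]
    _ ≤ 2 * (1 + x) ^ (-β) := by
        gcongr 2 * ?_
        exact Real.rpow_le_rpow_of_nonpos (by linarith) (by linarith) (by linarith)

theorem three_div_two_mul_pi_lt_half : 3 / (2 * Real.pi) < 1 / 2 := by
  rw [div_lt_div_iff₀ (by positivity) two_pos]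
  linarith [Real.pi_gt_three]

theorem exists_norm_LSeries_le_rpow :
    ∃ C, 0 < C ∧ ∀ f : ℕ → ℝ, IsCM f → (∀ n, f n ∈ Set.Icc (-1) 1) → ∀ σ t : ℝ, 0 < σ → σ ≤ 1 →
      (1 ≤ |t| → ‖LSeries (fun n ↦ f n) (1 + σ + I * t)‖ ≤
        C * σ ^ (-(2 / Real.pi)) * |t| ^ (3 / (2 * Real.pi))) ∧
      (t ≠ 0 → |t| ≤ 1 → ‖LSeries (fun n ↦ f n) (1 + σ + I * t)‖ ≤
        C * σ ^ (-(2 / Real.pi)) * |t| ^ (-(2 / Real.pi))) := by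
  obtain ⟨A, -, hA⟩ := exists_norm_LSeries_le_exp
  refine ⟨Real.exp A, Real.exp_pos A, fun f hf hb σ t h0 h1 ↦ ⟨fun ht ↦ ?_, fun ht0 ht ↦ ?_⟩⟩
  · have ht0 : 0 < |t| := by linarith
    have hposLog : Real.posLog (1 / |t|) = 0 := (Real.posLog_eq_zero_iff _).2 <| by
      rwa [abs_of_pos (by positivity), div_le_one ht0]
    refine (hA f hf hb σ t h0 h1 (abs_pos.1 ht0)).trans_eq ?_
    rw [Real.posLog_eq_log (x := |t|) (by rwa [abs_abs]), hposLog, Real.rpow_def_of_pos h0,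
      Real.rpow_def_of_pos ht0, ← Real.exp_add, ← Real.exp_add, one_div, Real.log_inv]
    congr 1
    ring
  · have ht0 : 0 < |t| := abs_pos.2 ht0
    have hposLog : Real.posLog |t| = 0 := (Real.posLog_eq_zero_iff _).2 (by rwa [abs_abs])
    refine (hA f hf hb σ t h0 h1 (abs_pos.1 ht0)).trans_eq ?_
    rw [Real.posLog_eq_log (x := 1 / |t|)
      (by rwa [abs_of_pos (by positivity), le_div_iff₀ ht0, one_mul]), hposLog,
      Real.rpow_def_of_pos h0, Real.rpow_def_of_pos ht0, ← Real.exp_add, ← Real.exp_add, one_div,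
      one_div, Real.log_inv, Real.log_inv]
    congr 1
    ring

theorem exists_norm_LSeries_mul_norm_le :
    ∃ C, 0 < C ∧ ∀ f : ℕ → ℝ, IsCM f → (∀ n, f n ∈ Set.Icc (-1) 1) → ∀ σ t : ℝ, 0 < σ → σ ≤ 1 →
      |t| ≤ 1 → ‖LSeries (fun n ↦ f n) (1 + σ + I * t)‖ * ‖(σ + I * t : ℂ)‖ ≤
        C * σ ^ (-(2 / Real.pi)) := by
  obtain ⟨A, hA, hrpow⟩ := exists_norm_LSeries_le_rpow
  obtain ⟨B, hB, hbdd⟩ := exists_norm_LSeries_le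
  refine ⟨2 * A + 2 * B, by positivity, fun f hf hb σ t h0 h1 ht ↦ ?_⟩
  have hpi : 2 / Real.pi ≤ 1 := (div_le_one Real.pi_pos).2 Real.two_le_pi
  have hσ : 1 ≤ σ ^ (-(2 / Real.pi)) :=
    Real.one_le_rpow_of_pos_of_le_one_of_nonpos h0 h1 (neg_nonpos.2 (by positivity))
  have hnorm : ‖(σ + I * t : ℂ)‖ ≤ σ + |t| :=
    (norm_add_le _ _).trans_eq (by simp [abs_of_pos h0])
  have : 0 ≤ A * σ ^ (-(2 / Real.pi)) := by positivity
  rcases le_total σ |t| with hσt | hσt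
  · have ht0 : 0 < |t| := h0.trans_le hσt
    calc ‖LSeries (fun n ↦ f n) (1 + σ + I * t)‖ * ‖(σ + I * t : ℂ)‖
        ≤ A * σ ^ (-(2 / Real.pi)) * |t| ^ (-(2 / Real.pi)) * (2 * |t|) := by
          gcongr
          · exact (hrpow f hf hb σ t h0 h1).2 (abs_pos.1 ht0) ht
          · linarith
      _ = 2 * (A * σ ^ (-(2 / Real.pi))) * |t| ^ (-(2 / Real.pi) + 1) := by
          rw [Real.rpow_add_one ht0.ne']
          ring
      _ ≤ 2 * (A * σ ^ (-(2 / Real.pi))) * 1 := by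
          gcongr
          exact Real.rpow_le_one ht0.le ht (by linarith)
      _ ≤ (2 * A + 2 * B) * σ ^ (-(2 / Real.pi)) := by nlinarith
  · have hre : (1 + σ + I * t : ℂ).re = 1 + σ := by simp
    have hL := hbdd (fun n ↦ f n) (norm_ofReal_apply_le hb) (1 + σ + I * t)
      (by linarith) (by linarith)
    rw [hre, add_sub_cancel_left] at hL
    calc ‖LSeries (fun n ↦ f n) (1 + σ + I * t)‖ * ‖(σ + I * t : ℂ)‖
        ≤ B / σ * (2 * σ) := by
          gcongr
          linarith
      _ = 2 * B := by field
      _ ≤ (2 * A + 2 * B) * σ ^ (-(2 / Real.pi)) := by nlinarith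

theorem exists_norm_LSeries_mul_laplace_remainderKernel_le :
    ∃ C, 0 < C ∧ ∀ f : ℕ → ℝ, IsCM f → (∀ n, f n ∈ Set.Icc (-1) 1) → ∀ σ t : ℝ, 0 < σ → σ ≤ 1 →
      ‖LSeries (fun n ↦ f n) (1 + σ + I * t) *
        laplace (fun v ↦ (remainderKernel v : ℂ)) (σ + I * t)‖ ≤
        C * σ ^ (-(2 / Real.pi)) * (1 + |t|) ^ (-(1 - 3 / (2 * Real.pi))) := by
  obtain ⟨A, hA, hrpow⟩ := exists_norm_LSeries_le_rpow
  obtain ⟨B, hB, hnear⟩ := exists_norm_LSeries_mul_norm_le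
  obtain ⟨S, hS, hsmall⟩ := exists_norm_laplace_remainderKernel_le_mul_norm 2
  obtain ⟨L, hL, hlarge⟩ := exists_norm_laplace_remainderKernel_le_div
  refine ⟨2 * (A * L) + 2 * (B * S), by positivity, fun f hf hb σ t h0 h1 ↦ ?_⟩
  set β := 1 - 3 / (2 * Real.pi) with hβ
  have hβ0 : 0 ≤ β := by linarith [three_div_two_mul_pi_lt_half]
  have hβ1 : β ≤ 1 := sub_le_self _ (by positivity)
  have hAL : 0 ≤ A * L * σ ^ (-(2 / Real.pi)) * (1 + |t|) ^ (-β) := by positivity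
  have hBS : 0 ≤ B * S * σ ^ (-(2 / Real.pi)) * (1 + |t|) ^ (-β) := by positivity
  rw [norm_mul]
  rcases le_total 1 |t| with ht | ht
  · have ht0 : 0 < |t| := by linarith
    calc _ ≤ A * σ ^ (-(2 / Real.pi)) * |t| ^ (3 / (2 * Real.pi)) * (L / |t|) := by
          gcongr
          · exact (hrpow f hf hb σ t h0 h1).1 ht
          · exact hlarge σ t h0 h1 ht
      _ = A * L * σ ^ (-(2 / Real.pi)) * |t| ^ (-β) := by
          rw [hβ, neg_sub, Real.rpow_sub_one ht0.ne']
          ring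
      _ ≤ A * L * σ ^ (-(2 / Real.pi)) * (2 * (1 + |t|) ^ (-β)) := by
          gcongr
          exact rpow_neg_le_two_mul_one_add_rpow_neg ht hβ0 hβ1
      _ ≤ _ := by linarith
  · have hnorm : ‖(σ + I * t : ℂ)‖ ≤ 2 := by
      calc ‖(σ + I * t : ℂ)‖ ≤ σ + |t| := (norm_add_le _ _).trans_eq (by simp [abs_of_pos h0])
        _ ≤ 2 := by linarith
    calc _ ≤ ‖LSeries (fun n ↦ f n) (1 + σ + I * t)‖ * (S * ‖(σ + I * t : ℂ)‖) := by
          gcongr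
          exact hsmall _ (by simpa using h0) hnorm
      _ = S * (‖LSeries (fun n ↦ f n) (1 + σ + I * t)‖ * ‖(σ + I * t : ℂ)‖) := by ring
      _ ≤ S * (B * σ ^ (-(2 / Real.pi))) :=
          mul_le_mul_of_nonneg_left (hnear f hf hb σ t h0 h1 ht) hS.le
      _ = 2 * (B * S) * σ ^ (-(2 / Real.pi)) * (1 / 2) := by ring
      _ ≤ 2 * (B * S) * σ ^ (-(2 / Real.pi)) * (1 + |t|) ^ (-β) := by
          gcongr
          exact one_half_le_one_add_rpow_neg (abs_nonneg t) ht hβ1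
      _ ≤ _ := by linarith

end TransformBound

/-! ### The smoothed sum -/

section RemainderSum

variable {f : ℕ → ℝ}

theorem IsCM.pow (hf : IsCM f) (p k : ℕ) : f (p ^ k) = f p ^ k := by
  induction k with
  | zero => simpa using hf.1
  | succ k ih => rw [pow_succ, hf.2, ih, pow_succ]

theorem geom_sum_nonneg_of_neg_one_le {r : ℝ} (hr : -1 ≤ r) (k : ℕ) :
    0 ≤ ∑ i ∈ range (k + 1), r ^ i := by
  rcases hr.eq_or_lt with rfl | hr
  · rw [neg_one_geom_sum]
    split_ifs <;> norm_num
  · exact (geom_sum_pos' (by linarith) k.succ_ne_zero).le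

theorem IsCM.sum_divisors_nonneg (hf : IsCM f) (hb : ∀ n, f n ∈ Set.Icc (-1) 1) (n : ℕ) :
    0 ≤ ∑ d ∈ n.divisors, f d := by
  induction n using Nat.recOnPosPrimePosCoprime with
  | zero => simp
  | one => simp [hf.1]
  | prime_pow p k hp _ =>
    rw [Nat.sum_divisors_prime_pow hp]
    simpa only [hf.pow] using geom_sum_nonneg_of_neg_one_le (hb p).1 k
  | coprime a b _ _ hab iha ihb =>
    rw [Nat.divisors_mul, mul_def, sum_image hab.mul_injOn_divisors, sum_product]
    simpa only [hf.2, ← sum_mul_sum] using mul_nonneg iha ihb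

/-- The error `E` made when `Lsum f (exp v)` is replaced by its smoothed version. -/
noncomputable def remainderSum (f : ℕ → ℝ) : ℝ → ℝ := logConv f remainderKernel

-- The difference of the two sides is the convolution of `1 * f ≥ 0` with `smoothKernel ≥ 0`.
theorem IsCM.remainderSum_le_Lsum (hf : IsCM f) (hb : ∀ n, f n ∈ Set.Icc (-1) 1) (v : ℝ) :
    remainderSum f v ≤ Lsum f (Real.exp v) := by
  have hLsum : logConv f (causalExp 0) v = Lsum f (Real.exp v) := by
    refine sum_congr rfl fun n hn ↦ ?_
    rw [causalExp_of_nonneg 0 (mem_Icc_floor_exp.1 hn).2]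
    simp
  have hnonneg : 0 ≤ logConv f (logConv 1 smoothKernel) v := by
    rw [logConv_logConv]
    refine sum_nonneg fun n _ ↦ ?_
    have hdiv := hf.sum_divisors_nonneg hb n
    rw [← Nat.sum_divisorsAntidiagonal fun d _ ↦ f d] at hdiv
    have := smoothKernel_nonneg (v - Real.log n)
    simp only [Pi.one_apply, mul_one]
    positivity
  rw [← hLsum, remainderSum, remainderKernel, logConv_sub, Pi.sub_apply]
  linarith

theorem exp_neg_sub_log_natCast {n : ℕ} (hn : n ≠ 0) (v : ℝ) :
    Real.exp (-(v - Real.log n)) = n / Real.exp v := by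
  rw [Real.exp_neg, exp_sub_log_natCast hn, inv_div]

theorem abs_sum_div_mul_sub_log_le {a : ℕ → ℝ} {ρ : ℝ → ℝ} {K v : ℝ} {s : Finset ℕ}
    (ha : ∀ n, |a n| ≤ 1) (hρ : ∀ u, 0 ≤ u → |ρ u| ≤ K * Real.exp (-u))
    (hs : s ⊆ Icc 1 ⌊Real.exp v⌋₊) :
    |∑ n ∈ s, a n / n * ρ (v - Real.log n)| ≤ #s * (K / Real.exp v) := by
  rw [← nsmul_eq_mul]
  refine (abs_sum_le_sum_abs _ _).trans (sum_le_card_nsmul _ _ _ fun n hn ↦ ?_)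
  obtain ⟨h1, h2⟩ := mem_Icc_floor_exp.1 (hs hn)
  have hn0 : n ≠ 0 := by lia
  have hρn := hρ _ h2
  rw [exp_neg_sub_log_natCast hn0] at hρn
  calc |a n / n * ρ (v - Real.log n)| = |a n| / n * |ρ (v - Real.log n)| := by
        rw [abs_mul, abs_div, Nat.abs_cast]
    _ ≤ 1 / n * (K * (n / Real.exp v)) := by
        gcongr
        exact ha n
    _ = K / Real.exp v := by field

theorem abs_logConv_le_of_abs_le_exp_neg {a : ℕ → ℝ} {ρ : ℝ → ℝ} {K : ℝ} (ha : ∀ n, |a n| ≤ 1)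
    (hρ : ∀ u, 0 ≤ u → |ρ u| ≤ K * Real.exp (-u)) (v : ℝ) : |logConv a ρ v| ≤ K := by
  have hK : 0 ≤ K := by simpa using (abs_nonneg _).trans (hρ 0 le_rfl)
  calc |logConv a ρ v| ≤ #(Icc 1 ⌊Real.exp v⌋₊) * (K / Real.exp v) :=
        abs_sum_div_mul_sub_log_le ha hρ subset_rfl
    _ ≤ Real.exp v * (K / Real.exp v) := by
        rw [Nat.card_Icc, Nat.add_sub_cancel]
        gcongr
        exact Nat.floor_le (Real.exp_pos v).le
    _ = K := by field

theorem logConv_eq_logConv_shift_add_sum_Ioc (a : ℕ → ℝ) (ρ : ℝ → ℝ) {v w : ℝ} (hvw : v ≤ w) :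
    logConv a ρ w = logConv a (fun u ↦ ρ (u + (w - v))) v +
      ∑ n ∈ Ioc ⌊Real.exp v⌋₊ ⌊Real.exp w⌋₊, a n / n * ρ (w - Real.log n) := by
  have hconsec : logConv a ρ w = ∑ n ∈ Icc 1 ⌊Real.exp v⌋₊, a n / n * ρ (w - Real.log n) +
      ∑ n ∈ Ioc ⌊Real.exp v⌋₊ ⌊Real.exp w⌋₊, a n / n * ρ (w - Real.log n) :=
    (sum_Ioc_consecutive _ (Nat.zero_le _)
      (Nat.floor_le_floor (Real.exp_le_exp.2 hvw))).symm
  rw [hconsec, logConv]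
  congr 1
  refine sum_congr rfl fun n _ ↦ ?_
  ring_nf

-- The additional `exp (-w)` is the scale of the jumps of `logConv a ρ`.
theorem abs_logConv_sub_logConv_le {a : ℕ → ℝ} {ρ : ℝ → ℝ} {K L v w : ℝ} (ha : ∀ n, |a n| ≤ 1)
    (hρ : ∀ u, 0 ≤ u → |ρ u| ≤ K * Real.exp (-u))
    (hρ' : ∀ u u', 0 ≤ u → u ≤ u' → |ρ u' - ρ u| ≤ L * Real.exp (-u) * (u' - u)) (hvw : v ≤ w) :
    |logConv a ρ w - logConv a ρ v| ≤ (K + L) * (w - v + Real.exp (-w)) := by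
  have hle : ⌊Real.exp v⌋₊ ≤ ⌊Real.exp w⌋₊ := Nat.floor_le_floor (Real.exp_le_exp.2 hvw)
  have hK : 0 ≤ K := by simpa using (abs_nonneg _).trans (hρ 0 le_rfl)
  have hL : 0 ≤ L := by
    have := (abs_nonneg _).trans (hρ' 0 1 le_rfl zero_le_one)
    simpa using this
  have hsplit : logConv a ρ w - logConv a ρ v =
      logConv a (fun u ↦ ρ (u + (w - v)) - ρ u) v +
        ∑ n ∈ Ioc ⌊Real.exp v⌋₊ ⌊Real.exp w⌋₊, a n / n * ρ (w - Real.log n) := by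
    rw [logConv_eq_logConv_shift_add_sum_Ioc a ρ hvw, add_sub_right_comm]
    simp only [logConv, ← sum_sub_distrib, mul_sub]
  have hcommon : |logConv a (fun u ↦ ρ (u + (w - v)) - ρ u) v| ≤ L * (w - v) := by
    refine abs_logConv_le_of_abs_le_exp_neg ha (fun u hu ↦ ?_) v
    exact (hρ' u _ hu (by linarith)).trans_eq (by ring)
  have hnew : |∑ n ∈ Ioc ⌊Real.exp v⌋₊ ⌊Real.exp w⌋₊, a n / n * ρ (w - Real.log n)| ≤
      K * (w - v + Real.exp (-w)) := by
    calc _ ≤ #(Ioc ⌊Real.exp v⌋₊ ⌊Real.exp w⌋₊) * (K / Real.exp w) :=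
          abs_sum_div_mul_sub_log_le ha hρ (Ioc_subset_Ioc_left (Nat.zero_le _))
      _ ≤ (Real.exp w - Real.exp v + 1) * (K / Real.exp w) := by
          rw [Nat.card_Ioc, Nat.cast_sub hle]
          gcongr
          linarith [Nat.floor_le (Real.exp_pos w).le, Nat.lt_floor_add_one (Real.exp v)]
      _ = K * (1 - Real.exp (v - w) + Real.exp (-w)) := by
          rw [Real.exp_sub, Real.exp_neg]
          field
      _ ≤ K * (w - v + Real.exp (-w)) := by
          refine mul_le_mul_of_nonneg_left ?_ hK
          linarith [Real.add_one_le_exp (v - w)]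
  have : 0 ≤ L * Real.exp (-w) := by positivity
  rw [hsplit]
  linarith [abs_add_le (logConv a (fun u ↦ ρ (u + (w - v)) - ρ u) v)
    (∑ n ∈ Ioc ⌊Real.exp v⌋₊ ⌊Real.exp w⌋₊, a n / n * ρ (w - Real.log n))]

theorem abs_logConv_le_of_abs_le_exp_neg_half {a : ℕ → ℝ} {ρ : ℝ → ℝ} {K : ℝ}
    (ha : ∀ n, |a n| ≤ 1) (hρ : ∀ u, 0 ≤ u → |ρ u| ≤ K * Real.exp (-(u / 2))) (v : ℝ) :
    |logConv a ρ v| ≤ 2 * K := by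
  have hK : 0 ≤ K := by simpa using (abs_nonneg _).trans (hρ 0 le_rfl)
  have hterm (n : ℕ) (hn : n ∈ Icc 1 ⌊Real.exp v⌋₊) :
      |a n / n * ρ (v - Real.log n)| ≤ K / √(Real.exp v) * (1 / √n) := by
    obtain ⟨h1, h2⟩ := mem_Icc_floor_exp.1 hn
    have hn0 : n ≠ 0 := by lia
    have hρn := hρ _ h2
    rw [← neg_div, Real.exp_half, exp_neg_sub_log_natCast hn0, Real.sqrt_div n.cast_nonneg] at hρn
    calc |a n / n * ρ (v - Real.log n)| = |a n| / n * |ρ (v - Real.log n)| := by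
          rw [abs_mul, abs_div, Nat.abs_cast]
      _ ≤ 1 / n * (K * (√n / √(Real.exp v))) := by
          gcongr
          exact ha n
      _ = K / √(Real.exp v) * (√n / n) := by ring
      _ = K / √(Real.exp v) * (1 / √n) := by rw [Real.sqrt_div_self']
  calc |logConv a ρ v| ≤ ∑ n ∈ Icc 1 ⌊Real.exp v⌋₊, K / √(Real.exp v) * (1 / √n) :=
        (abs_sum_le_sum_abs _ _).trans (sum_le_sum hterm)
    _ ≤ K / √(Real.exp v) * (2 * √(Real.exp v)) := by
        rw [← mul_sum]
        gcongr
        refine (sum_one_div_sqrt_le _).trans ?_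
        gcongr
        exact Nat.floor_le (Real.exp_pos v).le
    _ = 2 * K := by field

theorem mul_exp_neg_le (u : ℝ) : u * Real.exp (-u) ≤ 2 * Real.exp (-(u / 2)) := by
  have hexp : Real.exp (-(u / 2)) = Real.exp (u / 2) * Real.exp (-u) := by
    rw [← Real.exp_add]
    ring_nf
  rw [hexp, ← mul_assoc]
  gcongr
  linarith [Real.add_one_le_exp (u / 2)]

theorem abs_remainderSum_le (hb : ∀ n, f n ∈ Set.Icc (-1) 1) (v : ℝ) : |remainderSum f v| ≤ 480 :=
  abs_logConv_le_of_abs_le_exp_neg (fun n ↦ abs_le.2 (hb n)) (fun _ ↦ abs_remainderKernel_le) v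

theorem abs_remainderSum_sub_le (hb : ∀ n, f n ∈ Set.Icc (-1) 1) {v w : ℝ} (hvw : v ≤ w) :
    |remainderSum f w - remainderSum f v| ≤ 2720 * (w - v + Real.exp (-w)) :=
  (abs_logConv_sub_logConv_le (fun n ↦ abs_le.2 (hb n)) (fun _ ↦ abs_remainderKernel_le)
    (fun _ _ ↦ abs_remainderKernel_sub_le) hvw).trans_eq (by norm_num)

theorem abs_logConv_mul_remainderKernel_le (hb : ∀ n, f n ∈ Set.Icc (-1) 1) (v : ℝ) :
    |logConv f (fun u ↦ u * remainderKernel u) v| ≤ 1920 := by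
  refine (abs_logConv_le_of_abs_le_exp_neg_half (K := 960) (fun n ↦ abs_le.2 (hb n))
    (fun u hu ↦ ?_) v).trans_eq (by norm_num)
  calc |u * remainderKernel u| = u * |remainderKernel u| := by rw [abs_mul, abs_of_nonneg hu]
    _ ≤ u * (480 * Real.exp (-u)) := mul_le_mul_of_nonneg_left (abs_remainderKernel_le hu) hu
    _ = 480 * (u * Real.exp (-u)) := by ring
    _ ≤ 480 * (2 * Real.exp (-(u / 2))) := by linarith [mul_exp_neg_le u]
    _ = 960 * Real.exp (-(u / 2)) := by ring

end RemainderSum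

section VonMangoldtSum

open scoped ArithmeticFunction.vonMangoldt

variable {f : ℕ → ℝ}

theorem IsCM.sum_vonMangoldt_mul_mul (hf : IsCM f) (n : ℕ) :
    ∑ p ∈ n.divisorsAntidiagonal, Λ p.1 * f p.1 * f p.2 = f n * Real.log n := by
  rw [← ArithmeticFunction.vonMangoldt_sum, mul_sum,
    ← Nat.sum_divisorsAntidiagonal (fun i _ ↦ f n * Λ i)]
  refine sum_congr rfl fun p hp ↦ ?_
  rw [← (Nat.mem_divisorsAntidiagonal.1 hp).1, hf.2]
  ring

/-- The convolution of `Λ f` with `remainderSum f`: up to a bounded error it is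
`v * remainderSum f v`, see `IsCM.mul_remainderSum`. -/
noncomputable def vonMangoldtRemainderSum (f : ℕ → ℝ) : ℝ → ℝ :=
  logConv (fun n ↦ Λ n * f n) (remainderSum f)

-- Split `v = log n + (v - log n)`.
theorem IsCM.mul_remainderSum (hf : IsCM f) (v : ℝ) :
    v * remainderSum f v =
      vonMangoldtRemainderSum f v + logConv f (fun u ↦ u * remainderKernel u) v := by
  rw [vonMangoldtRemainderSum, remainderSum, logConv_logConv]
  simp only [logConv, hf.sum_vonMangoldt_mul_mul, mul_sum, ← sum_add_distrib]
  refine sum_congr rfl fun n _ ↦ ?_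
  ring

theorem abs_vonMangoldtRemainderSum_le_sum (hb : ∀ n, f n ∈ Set.Icc (-1) 1) (v : ℝ) :
    |vonMangoldtRemainderSum f v| ≤
      ∑ n ∈ Icc 1 ⌊Real.exp v⌋₊, Λ n / n * |remainderSum f (v - Real.log n)| := by
  rw [vonMangoldtRemainderSum, logConv]
  refine (abs_sum_le_sum_abs _ _).trans (sum_le_sum fun n _ ↦ ?_)
  have hΛ : 0 ≤ Λ n := ArithmeticFunction.vonMangoldt_nonneg
  rw [abs_mul, abs_div, abs_mul, Nat.abs_cast, abs_of_nonneg hΛ]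
  gcongr
  exact mul_le_of_le_one_right hΛ (abs_le.2 (hb n))

theorem exists_sum_vonMangoldt_div_le :
    ∃ M, 0 < M ∧ ∀ v : ℝ, 0 ≤ v → ∑ n ∈ Icc 1 ⌊Real.exp v⌋₊, Λ n / n ≤ v + M := by
  obtain ⟨M, hM, hmertens⟩ := exists_abs_sum_vonMangoldt_div_sub_log_le
  refine ⟨M, hM, fun v hv ↦ ?_⟩
  have := (abs_le.1 (hmertens (Real.exp v) (Real.one_le_exp hv))).2
  rw [Real.log_exp] at this
  linarith

theorem exists_abs_vonMangoldtRemainderSum_le :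
    ∃ K, 0 < K ∧ ∀ f : ℕ → ℝ, (∀ n, f n ∈ Set.Icc (-1) 1) → ∀ v, 0 ≤ v →
      |vonMangoldtRemainderSum f v| ≤ K * (1 + v) := by
  obtain ⟨M, hM, hsum⟩ := exists_sum_vonMangoldt_div_le
  refine ⟨480 * (1 + M), by positivity, fun f hb v hv ↦ ?_⟩
  calc |vonMangoldtRemainderSum f v|
      ≤ ∑ n ∈ Icc 1 ⌊Real.exp v⌋₊, Λ n / n * |remainderSum f (v - Real.log n)| :=
        abs_vonMangoldtRemainderSum_le_sum hb v
    _ ≤ ∑ n ∈ Icc 1 ⌊Real.exp v⌋₊, Λ n / n * 480 := by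
        gcongr
        exact abs_remainderSum_le hb _
    _ ≤ (v + M) * 480 := by
        rw [← sum_mul]
        gcongr
        exact hsum v hv
    _ ≤ 480 * (1 + M) * (1 + v) := by nlinarith

end VonMangoldtSum

/-! ### Mean squares -/

section WindowSum

open MeasureTheory

theorem integral_le_tsum_mul_of_forall_le {G : ℝ → ℝ} (hG : Integrable G) {F : ℤ → ℝ → ℝ}
    (hF : ∀ k, Integrable (F k)) (hF0 : ∀ k t, 0 ≤ F k t) {B : ℝ} (hB : ∀ k, ∫ t, F k t ≤ B)
    {w : ℤ → ℝ} (hw0 : ∀ k, 0 ≤ w k) (hw : Summable w)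
    (hGF : ∀ (k : ℤ) (t : ℝ), k ≤ t → t ≤ k + 1 → G t ≤ w k * F k t) :
    ∫ t, G t ≤ (∑' k, w k) * B := by
  refine hasSum_le (fun k ↦ ?_) (hG.hasSum_intervalIntegral 0) (hw.hasSum.mul_right B)
  rw [zero_add]
  calc ∫ t in (k : ℝ)..k + 1, G t ≤ ∫ t in (k : ℝ)..k + 1, w k * F k t :=
        intervalIntegral.integral_mono_on (by linarith) hG.intervalIntegrable
          ((hF k).const_mul _).intervalIntegrable fun t ht ↦ hGF k t ht.1 ht.2
    _ = w k * ∫ t in (k : ℝ)..k + 1, F k t := intervalIntegral.integral_const_mul _ _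
    _ ≤ w k * ∫ t, F k t := by
        rw [intervalIntegral.integral_of_le (by linarith)]
        exact mul_le_mul_of_nonneg_left
          (setIntegral_le_integral (hF k) (.of_forall (hF0 k))) (hw0 k)
    _ ≤ w k * B := mul_le_mul_of_nonneg_left (hB k) (hw0 k)

theorem summable_one_add_abs_intCast_rpow_neg {b : ℝ} (hb : 1 < b) :
    Summable fun k : ℤ ↦ (1 + |(k : ℝ)|) ^ (-b) := by
  have hsum : Summable fun k : ℤ ↦ |(k : ℝ)| ^ (-b) + if k = 0 then (1 : ℝ) else 0 :=
    (Real.summable_abs_int_rpow hb).add (hasSum_ite_eq 0 1).summable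
  refine hsum.of_nonneg_of_le (fun k ↦ by positivity) fun k ↦ ?_
  rcases eq_or_ne k 0 with rfl | hk
  · simp [Real.zero_rpow (by linarith : -b ≠ 0)]
  · rw [if_neg hk, add_zero]
    exact Real.rpow_le_rpow_of_nonpos (abs_pos.2 (by exact_mod_cast hk)) (by linarith)
      (by linarith)

theorem one_add_abs_rpow_neg_sq_le {x y β : ℝ} (hxy : |x - y| ≤ 1) (h0 : 0 ≤ β) (h1 : β ≤ 1) :
    ((1 + |x|) ^ (-β)) ^ 2 ≤ 4 * (1 + |y|) ^ (-(2 * β)) := by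
  have hyx : (1 + |y|) / 2 ≤ 1 + |x| := by
    have := abs_sub_abs_le_abs_sub y x
    rw [abs_sub_comm] at this
    linarith [abs_nonneg x]
  have hle : (1 + |x|) ^ (-β) ≤ 2 * (1 + |y|) ^ (-β) := by
    calc (1 + |x|) ^ (-β) ≤ ((1 + |y|) / 2) ^ (-β) :=
          Real.rpow_le_rpow_of_nonpos (by positivity) hyx (by linarith)
      _ = 2 ^ β * (1 + |y|) ^ (-β) := by
          rw [Real.div_rpow (by positivity) zero_le_two, Real.rpow_neg zero_le_two, div_inv_eq_mul,
            mul_comm]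
      _ ≤ 2 ^ (1 : ℝ) * (1 + |y|) ^ (-β) := by
          gcongr
          exact one_le_two
      _ = 2 * (1 + |y|) ^ (-β) := by rw [Real.rpow_one]
  calc ((1 + |x|) ^ (-β)) ^ 2 ≤ (2 * (1 + |y|) ^ (-β)) ^ 2 := by gcongr
    _ = 4 * (1 + |y|) ^ (-(2 * β)) := by
        rw [mul_pow, ← Real.rpow_natCast ((1 + |y|) ^ (-β)) 2, ← Real.rpow_mul (by positivity)]
        norm_num
        ring_nf

end WindowSum

section LambdaMeanSquare

open Complex MeasureTheory
open scoped ArithmeticFunction.vonMangoldt Chebyshev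

variable {a : ℕ → ℂ} {σ : ℝ}

theorem LSeriesSummable_of_norm_le_vonMangoldt (ha : ∀ n, ‖a n‖ ≤ Λ n) {s : ℂ} (hs : 1 < s.re) :
    LSeriesSummable a s :=
  .of_norm_bounded (ArithmeticFunction.LSeriesSummable_vonMangoldt hs).norm fun _ ↦
    LSeries.norm_term_le s <| by
      simpa [abs_of_nonneg ArithmeticFunction.vonMangoldt_nonneg] using ha _

theorem norm_logConv_causalExp_one_le (ha : ∀ n, ‖a n‖ ≤ Λ n) (v : ℝ) :
    ‖logConv a (fun u ↦ (causalExp 1 u : ℂ)) v‖ ≤ Real.log 4 + 4 := by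
  have hterm (n : ℕ) (hn : n ∈ Icc 1 ⌊Real.exp v⌋₊) :
      ‖a n / n * (causalExp 1 (v - Real.log n) : ℂ)‖ ≤ Λ n / Real.exp v := by
    obtain ⟨h1, h2⟩ := mem_Icc_floor_exp.1 hn
    have hn0 : n ≠ 0 := by lia
    calc ‖a n / n * (causalExp 1 (v - Real.log n) : ℂ)‖ = ‖a n‖ / n * (n / Real.exp v) := by
          rw [causalExp_of_nonneg 1 h2, Nat.cast_one, one_mul, exp_neg_sub_log_natCast hn0,
            norm_mul, norm_div, norm_natCast, norm_real, Real.norm_of_nonneg (by positivity)]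
      _ = ‖a n‖ / Real.exp v := by field
      _ ≤ Λ n / Real.exp v := by
          gcongr
          exact ha n
  calc ‖logConv a (fun u ↦ (causalExp 1 u : ℂ)) v‖
      ≤ ∑ n ∈ Icc 1 ⌊Real.exp v⌋₊, Λ n / Real.exp v := (norm_sum_le _ _).trans (sum_le_sum hterm)
    _ = ψ (Real.exp v) / Real.exp v := (sum_div _ _ _).symm
    _ ≤ Real.log 4 + 4 := by
        rw [div_le_iff₀ (Real.exp_pos v)]
        exact Chebyshev.psi_le_const_mul_self (Real.exp_pos v).le

theorem isCausalOfLinearGrowth_logConv_causalExp_one (ha : ∀ n, ‖a n‖ ≤ Λ n) :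
    IsCausalOfLinearGrowth (logConv a fun u ↦ (causalExp 1 u : ℂ)) :=
  .of_bounded (measurable_logConv _ (Complex.measurable_ofReal.comp (measurable_causalExp 1)))
    (fun _ hv ↦ logConv_of_neg _ _ hv) fun v _ ↦ norm_logConv_causalExp_one_le ha v

theorem laplace_logConv_causalExp_one (ha : ∀ n, ‖a n‖ ≤ Λ n) (hσ : 0 < σ) (t : ℝ) :
    laplace (logConv a fun u ↦ (causalExp 1 u : ℂ)) (σ + I * t) =
      LSeries a (1 + σ + I * t) * (1 / (σ + I * t + 1)) := by
  have hre : 0 < (σ + I * t : ℂ).re := by simpa using hσ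
  rw [laplace_logConv (isCausalOfLinearGrowth_causalExp 1) hre
    (LSeriesSummable_of_norm_le_vonMangoldt ha (by simpa using hσ)), laplace_causalExp 1 hre,
    Nat.cast_one, ← add_assoc (1 : ℂ)]

theorem integral_norm_sq_mul_exp_le {Φ : ℝ → ℂ} {K : ℝ} (hΦ : IsCausalOfLinearGrowth Φ)
    (hK : ∀ v, ‖Φ v‖ ≤ K) (hσ : 0 < σ) :
    ∫ v, ‖Φ v‖ ^ 2 * Real.exp (-(2 * σ * v)) ≤ K ^ 2 / (2 * σ) := by
  have hsupp : ∫ v, ‖Φ v‖ ^ 2 * Real.exp (-(2 * σ * v)) =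
      ∫ v in Set.Ioi 0, ‖Φ v‖ ^ 2 * Real.exp (-(2 * σ * v)) := by
    rw [← integral_Ici_eq_integral_Ioi]
    refine (setIntegral_eq_integral_of_forall_compl_eq_zero fun v hv ↦ ?_).symm
    simp [hΦ.eq_zero_of_neg v (by simpa using hv)]
  rw [hsupp]
  calc ∫ v in Set.Ioi 0, ‖Φ v‖ ^ 2 * Real.exp (-(2 * σ * v))
      ≤ ∫ v in Set.Ioi 0, K ^ 2 * Real.exp (-(2 * σ) * v) := by
        refine setIntegral_mono_on (hΦ.integrable_norm_sq_mul_exp hσ).integrableOn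
          ((integrableOn_exp_mul_Ioi (by linarith) 0).const_mul _) measurableSet_Ioi fun v _ ↦ ?_
        rw [neg_mul]
        gcongr
        exact hK v
    _ = K ^ 2 / (2 * σ) := by
        rw [integral_const_mul, integral_exp_mul_Ioi (by linarith)]
        simp [div_eq_mul_inv]

theorem integrable_norm_LSeries_mul_one_div_sq (ha : ∀ n, ‖a n‖ ≤ Λ n) (hσ : 0 < σ) :
    Integrable fun t : ℝ ↦ ‖LSeries a (1 + σ + I * t) * (1 / (σ + I * t + 1))‖ ^ 2 := by
  simpa only [laplace_logConv_causalExp_one ha hσ] using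
    (isCausalOfLinearGrowth_logConv_causalExp_one ha).integrable_norm_sq_laplace hσ

theorem integral_norm_LSeries_mul_one_div_sq_le (ha : ∀ n, ‖a n‖ ≤ Λ n) (hσ : 0 < σ) :
    ∫ t : ℝ, ‖LSeries a (1 + σ + I * t) * (1 / (σ + I * t + 1))‖ ^ 2 ≤
      Real.pi * (Real.log 4 + 4) ^ 2 / σ := by
  have hcausal := isCausalOfLinearGrowth_logConv_causalExp_one ha
  have hplancherel := hcausal.integral_norm_sq_laplace hσ
  simp only [laplace_logConv_causalExp_one ha hσ] at hplancherel
  calc _ ≤ 2 * Real.pi * ((Real.log 4 + 4) ^ 2 / (2 * σ)) := by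
        rw [hplancherel]
        gcongr
        exact integral_norm_sq_mul_exp_le hcausal (norm_logConv_causalExp_one_le ha) hσ
    _ = Real.pi * (Real.log 4 + 4) ^ 2 / σ := by field

theorem LSeries_mul_cpow_neg (a : ℕ → ℂ) (w s : ℂ) :
    LSeries (fun n ↦ a n * (n : ℂ) ^ (-w)) s = LSeries a (s + w) := by
  refine tsum_congr fun n ↦ ?_
  rcases eq_or_ne n 0 with rfl | hn
  · simp
  · rw [LSeries.term_of_ne_zero hn, LSeries.term_of_ne_zero hn, cpow_neg,
      cpow_add _ _ (by exact_mod_cast hn)]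
    field

theorem norm_mul_natCast_cpow_neg_I_mul_le (ha : ∀ n, ‖a n‖ ≤ Λ n) (y : ℝ) (n : ℕ) :
    ‖a n * (n : ℂ) ^ (-(I * y))‖ ≤ Λ n := by
  rcases n.eq_zero_or_pos with rfl | hn
  · have ha0 : a 0 = 0 := by simpa using ha 0
    simp [ha0]
  · rw [norm_mul, norm_natCast_cpow_of_pos hn]
    simpa using ha n

theorem LSeries_mul_cpow_neg_I_mul (a : ℕ → ℂ) (σ t y : ℝ) :
    LSeries (fun n ↦ a n * (n : ℂ) ^ (-(I * y))) (1 + σ + I * (t - y : ℝ)) =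
      LSeries a (1 + σ + I * t) := by
  rw [LSeries_mul_cpow_neg]
  push_cast
  ring_nf

theorem integrable_norm_LSeries_mul_one_div_sub_sq (ha : ∀ n, ‖a n‖ ≤ Λ n) (hσ : 0 < σ) (y : ℝ) :
    Integrable fun t : ℝ ↦
      ‖LSeries a (1 + σ + I * t) * (1 / (σ + I * (t - y : ℝ) + 1))‖ ^ 2 := by
  simpa only [LSeries_mul_cpow_neg_I_mul] using (integrable_norm_LSeries_mul_one_div_sq
    (norm_mul_natCast_cpow_neg_I_mul_le ha y) hσ).comp_sub_right y

-- Twisting `a n` by `n ^ (-iy)` shifts the Dirichlet series vertically by `y`.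
theorem integral_norm_LSeries_mul_one_div_sub_sq_le (ha : ∀ n, ‖a n‖ ≤ Λ n) (hσ : 0 < σ) (y : ℝ) :
    ∫ t : ℝ, ‖LSeries a (1 + σ + I * t) * (1 / (σ + I * (t - y : ℝ) + 1))‖ ^ 2 ≤
      Real.pi * (Real.log 4 + 4) ^ 2 / σ := by
  have hle := integral_norm_LSeries_mul_one_div_sq_le (norm_mul_natCast_cpow_neg_I_mul_le ha y) hσ
  rw [← integral_sub_right_eq_self _ y] at hle
  simpa only [LSeries_mul_cpow_neg_I_mul] using hle

end LambdaMeanSquare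

section VonMangoldtRemainderMeanSquare

open Complex MeasureTheory
open scoped ArithmeticFunction.vonMangoldt

variable {f : ℕ → ℝ} {σ : ℝ}

theorem measurable_remainderSum (f : ℕ → ℝ) : Measurable (remainderSum f) :=
  measurable_logConv _ measurable_remainderKernel

theorem norm_vonMangoldt_mul_le (hb : ∀ n, f n ∈ Set.Icc (-1) 1) (n : ℕ) :
    ‖((Λ n * f n : ℝ) : ℂ)‖ ≤ Λ n := by
  rw [norm_real, norm_mul, Real.norm_of_nonneg ArithmeticFunction.vonMangoldt_nonneg]
  exact mul_le_of_le_one_right ArithmeticFunction.vonMangoldt_nonneg (abs_le.2 (hb n))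

theorem isCausalOfLinearGrowth_remainderSum (hb : ∀ n, f n ∈ Set.Icc (-1) 1) :
    IsCausalOfLinearGrowth fun v ↦ (remainderSum f v : ℂ) :=
  .of_bounded (measurable_ofReal.comp (measurable_remainderSum f))
    (fun v hv ↦ by rw [remainderSum, logConv_of_neg _ _ hv, ofReal_zero])
    fun v _ ↦ by simpa using abs_remainderSum_le hb v

theorem isCausalOfLinearGrowth_vonMangoldtRemainderSum (hb : ∀ n, f n ∈ Set.Icc (-1) 1) :
    IsCausalOfLinearGrowth fun v ↦ (vonMangoldtRemainderSum f v : ℂ) where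
  measurable := measurable_ofReal.comp (measurable_logConv _ (measurable_remainderSum f))
  eq_zero_of_neg v hv := by rw [vonMangoldtRemainderSum, logConv_of_neg _ _ hv, ofReal_zero]
  exists_norm_le := by
    obtain ⟨K, -, hK⟩ := exists_abs_vonMangoldtRemainderSum_le
    exact ⟨K, fun v hv ↦ by simpa using hK f hb v hv⟩

theorem laplace_vonMangoldtRemainderSum (hb : ∀ n, f n ∈ Set.Icc (-1) 1) (hσ : 0 < σ) (t : ℝ) :
    laplace (fun v ↦ (vonMangoldtRemainderSum f v : ℂ)) (σ + I * t) =
      LSeries (fun n ↦ ((Λ n * f n : ℝ) : ℂ)) (1 + σ + I * t) *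
        (LSeries (fun n ↦ f n) (1 + σ + I * t) *
          laplace (fun v ↦ (remainderKernel v : ℂ)) (σ + I * t)) := by
  have hre : 0 < (σ + I * t : ℂ).re := by simpa using hσ
  have hre' : 1 < (1 + (σ + I * t) : ℂ).re := by simpa using hσ
  have hΛ : LSeriesSummable (fun n ↦ ((Λ n * f n : ℝ) : ℂ)) (1 + (σ + I * t)) :=
    LSeriesSummable_of_norm_le_vonMangoldt (norm_vonMangoldt_mul_le hb) hre'
  have hf : LSeriesSummable (fun n ↦ (f n : ℂ)) (1 + (σ + I * t)) :=
    LSeriesSummable_of_bounded_of_one_lt_re (fun n _ ↦ norm_ofReal_apply_le hb n) hre'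
  simp only [vonMangoldtRemainderSum, ofReal_logConv]
  rw [laplace_logConv (isCausalOfLinearGrowth_remainderSum hb) hre hΛ]
  simp only [remainderSum, ofReal_logConv]
  rw [laplace_logConv isCausalOfLinearGrowth_remainderKernel hre hf, add_assoc 1]

theorem one_div_nine_le_norm_one_div_sq {u : ℝ} (h0 : 0 < σ) (h1 : σ ≤ 1) (hu : |u| ≤ 1) :
    1 / 9 ≤ ‖(1 / (σ + I * u + 1) : ℂ)‖ ^ 2 := by
  have hpos : 0 < ‖(σ + I * u + 1 : ℂ)‖ :=
    (by simp; linarith : 0 < (σ + I * u + 1 : ℂ).re).trans_le (re_le_norm _)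
  have hle : ‖(σ + I * u + 1 : ℂ)‖ ≤ 3 := by
    calc ‖(σ + I * u + 1 : ℂ)‖ ≤ ‖(σ : ℂ)‖ + ‖I * u‖ + ‖(1 : ℂ)‖ := norm_add₃_le
      _ = σ + |u| + 1 := by simp [abs_of_pos h0]
      _ ≤ 3 := by linarith
  rw [norm_div, norm_one, div_pow, one_pow, show (9 : ℝ) = 3 ^ 2 by norm_num]
  gcongr

theorem integrable_vonMangoldtRemainderSum_sq_mul_exp (hb : ∀ n, f n ∈ Set.Icc (-1) 1)
    (hσ : 0 < σ) :
    Integrable fun v ↦ vonMangoldtRemainderSum f v ^ 2 * Real.exp (-(2 * σ * v)) := by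
  simpa using (isCausalOfLinearGrowth_vonMangoldtRemainderSum hb).integrable_norm_sq_mul_exp hσ

theorem exists_norm_laplace_vonMangoldtRemainderSum_sq_le :
    ∃ C, 0 < C ∧ ∀ f : ℕ → ℝ, IsCM f → (∀ n, f n ∈ Set.Icc (-1) 1) → ∀ σ t y : ℝ, 0 < σ → σ ≤ 1 →
      |t - y| ≤ 1 → ‖laplace (fun v ↦ (vonMangoldtRemainderSum f v : ℂ)) (σ + I * t)‖ ^ 2 ≤
        C * σ ^ (-(4 / Real.pi)) * (1 + |y|) ^ (-(2 * (1 - 3 / (2 * Real.pi)))) *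
          ‖LSeries (fun n ↦ ((Λ n * f n : ℝ) : ℂ)) (1 + σ + I * t) *
            (1 / (σ + I * (t - y : ℝ) + 1))‖ ^ 2 := by
  obtain ⟨T, hT, htransform⟩ := exists_norm_LSeries_mul_laplace_remainderKernel_le
  refine ⟨36 * T ^ 2, by positivity, fun f hf hb σ t y h0 h1 hty ↦ ?_⟩
  set β := 1 - 3 / (2 * Real.pi)
  set A := LSeries (fun n ↦ ((Λ n * f n : ℝ) : ℂ)) (1 + σ + I * t)
  have hweight : ((1 + |t|) ^ (-β)) ^ 2 ≤ 4 * (1 + |y|) ^ (-(2 * β)) :=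
    one_add_abs_rpow_neg_sq_le hty (by linarith [three_div_two_mul_pi_lt_half])
      (sub_le_self _ (by positivity))
  have hσ : (σ ^ (-(2 / Real.pi))) ^ 2 = σ ^ (-(4 / Real.pi)) := by
    rw [← Real.rpow_natCast, ← Real.rpow_mul h0.le]
    congr 1
    push_cast
    ring
  rw [laplace_vonMangoldtRemainderSum hb h0, norm_mul A, norm_mul A, mul_pow, mul_pow]
  calc _ ≤ ‖A‖ ^ 2 * (T * σ ^ (-(2 / Real.pi)) * (1 + |t|) ^ (-β)) ^ 2 := by
        gcongr
        exact htransform f hf hb σ t h0 h1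
    _ = ‖A‖ ^ 2 * (T ^ 2 * σ ^ (-(4 / Real.pi)) * ((1 + |t|) ^ (-β)) ^ 2) := by
        rw [← hσ]
        ring
    _ ≤ ‖A‖ ^ 2 * (T ^ 2 * σ ^ (-(4 / Real.pi)) * (4 * (1 + |y|) ^ (-(2 * β)))) := by gcongr
    _ = 36 * T ^ 2 * σ ^ (-(4 / Real.pi)) * (1 + |y|) ^ (-(2 * β)) * (‖A‖ ^ 2 * (1 / 9)) := by ring
    _ ≤ _ := by
        gcongr _ * (_ * ?_)
        exact one_div_nine_le_norm_one_div_sq h0 h1 hty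

theorem exists_integral_vonMangoldtRemainderSum_sq_mul_exp_le :
    ∃ C, 0 < C ∧ ∀ f : ℕ → ℝ, IsCM f → (∀ n, f n ∈ Set.Icc (-1) 1) → ∀ σ : ℝ, 0 < σ → σ ≤ 1 →
      ∫ v, vonMangoldtRemainderSum f v ^ 2 * Real.exp (-(2 * σ * v)) ≤
        C * σ ^ (-(4 / Real.pi) - 1) := by
  obtain ⟨T, hT, hpointwise⟩ := exists_norm_laplace_vonMangoldtRemainderSum_sq_le
  have hsum : Summable fun k : ℤ ↦ (1 + |(k : ℝ)|) ^ (-(2 * (1 - 3 / (2 * Real.pi)))) :=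
    summable_one_add_abs_intCast_rpow_neg (by linarith [three_div_two_mul_pi_lt_half])
  set S := ∑' k : ℤ, (1 + |(k : ℝ)|) ^ (-(2 * (1 - 3 / (2 * Real.pi))))
  have hS : 0 < S := hsum.tsum_pos (fun k ↦ by positivity) 0 (by simp)
  refine ⟨T * S * (Real.log 4 + 4) ^ 2 / 2, by positivity, fun f hf hb σ h0 h1 ↦ ?_⟩
  have hcausal := isCausalOfLinearGrowth_vonMangoldtRemainderSum hb
  have hΛf := norm_vonMangoldt_mul_le hb
  have hmean := integral_le_tsum_mul_of_forall_le (hcausal.integrable_norm_sq_laplace h0)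
    (fun k : ℤ ↦ integrable_norm_LSeries_mul_one_div_sub_sq hΛf h0 k) (fun k t ↦ by positivity)
    (fun k ↦ integral_norm_LSeries_mul_one_div_sub_sq_le hΛf h0 k) (fun k ↦ by positivity)
    (hsum.mul_left (T * σ ^ (-(4 / Real.pi)))) fun k t hkt htk ↦
      hpointwise f hf hb σ t k h0 h1 (by rw [abs_of_nonneg] <;> linarith)
  rw [hcausal.integral_norm_sq_laplace h0, tsum_mul_left] at hmean
  simp only [norm_real, Real.norm_eq_abs, sq_abs] at hmean
  calc ∫ v, vonMangoldtRemainderSum f v ^ 2 * Real.exp (-(2 * σ * v))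
      = 2 * Real.pi * (∫ v, vonMangoldtRemainderSum f v ^ 2 * Real.exp (-(2 * σ * v))) /
          (2 * Real.pi) := by field
    _ ≤ T * σ ^ (-(4 / Real.pi)) * S * (Real.pi * (Real.log 4 + 4) ^ 2 / σ) / (2 * Real.pi) := by
        gcongr
    _ = T * S * (Real.log 4 + 4) ^ 2 / 2 * σ ^ (-(4 / Real.pi) - 1) := by
        rw [Real.rpow_sub_one h0.ne']
        field

end VonMangoldtRemainderMeanSquare

/-! ### First moment of the smoothed sum -/

section FirstMoment

open MeasureTheory

theorem intervalIntegral_abs_le {g : ℝ → ℝ} {a b l : ℝ} (hab : a ≤ b) (hl : 0 < l)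
    (hg : IntervalIntegrable (fun v ↦ |g v|) volume a b)
    (hg2 : IntervalIntegrable (fun v ↦ g v ^ 2) volume a b) :
    ∫ v in a..b, |g v| ≤ l * (∫ v in a..b, g v ^ 2) + (b - a) / l := by
  have hAMGM (v : ℝ) : |g v| ≤ l * g v ^ 2 + 1 / l := by
    have hexpand : l * g v ^ 2 + 1 / l - |g v| =
        ((l * |g v| - 1) ^ 2 + l * |g v|) / l := by
      rw [← sq_abs (g v)]
      field
    have : 0 ≤ ((l * |g v| - 1) ^ 2 + l * |g v|) / l := by positivity
    linarith
  calc ∫ v in a..b, |g v| ≤ ∫ v in a..b, (l * g v ^ 2 + 1 / l) :=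
        intervalIntegral.integral_mono hab hg ((hg2.const_mul l).add intervalIntegrable_const) hAMGM
    _ = l * (∫ v in a..b, g v ^ 2) + (b - a) / l := by
        rw [intervalIntegral.integral_add (hg2.const_mul l) intervalIntegrable_const,
          intervalIntegral.integral_const_mul, intervalIntegral.integral_const, smul_eq_mul,
          mul_one_div]

theorem intervalIntegral_zero_le_mul_rpow_of_dyadic {g : ℝ → ℝ} {C K α : ℝ} (hC : 0 ≤ C)
    (hK : 0 ≤ K) (hα : 1 / 2 ≤ α) (hg : ∀ a b, IntervalIntegrable g volume a b)
    (hgK : ∀ v, g v ≤ K) (hdyadic : ∀ V, 1 ≤ V → ∫ v in V..2 * V, g v ≤ C * V ^ α)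
    {X : ℝ} (hX : 1 ≤ X) :
    ∫ v in (0 : ℝ)..X, g v ≤ (3 * C + 2 * K) * X ^ α := by
  have hbase (X : ℝ) (h1 : 1 ≤ X) (h2 : X ≤ 2) :
      ∫ v in (0 : ℝ)..X, g v ≤ (3 * C + 2 * K) * X ^ α := by
    calc ∫ v in (0 : ℝ)..X, g v ≤ ∫ _ in (0 : ℝ)..X, K :=
          intervalIntegral.integral_mono (by linarith) (hg _ _) intervalIntegrable_const hgK
      _ = X * K := by rw [intervalIntegral.integral_const, smul_eq_mul, sub_zero]
      _ ≤ (3 * C + 2 * K) * 1 := by nlinarith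
      _ ≤ (3 * C + 2 * K) * X ^ α := by
          gcongr
          exact Real.one_le_rpow h1 (by linarith)
  have htwo : 4 / 3 ≤ (2 : ℝ) ^ α := by
    calc (4 / 3 : ℝ) ≤ √2 := Real.le_sqrt_of_sq_le (by norm_num)
      _ = 2 ^ (1 / 2 : ℝ) := Real.sqrt_eq_rpow 2
      _ ≤ 2 ^ α := Real.rpow_le_rpow_of_exponent_le one_le_two hα
  obtain ⟨n, hn⟩ := pow_unbounded_of_one_lt X one_lt_two
  induction n generalizing X with
  | zero => exact hbase X hX (by linarith [pow_zero (2 : ℝ)])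
  | succ n ih =>
    rcases le_total X 2 with h2 | h2
    · exact hbase X hX h2
    have hhalf := ih (X := X / 2) (by linarith) (by rw [pow_succ] at hn; linarith)
    have hblock := hdyadic (X / 2) (by linarith)
    rw [mul_div_cancel₀ X two_ne_zero] at hblock
    calc ∫ v in (0 : ℝ)..X, g v = (∫ v in (0 : ℝ)..X / 2, g v) + ∫ v in X / 2..X, g v :=
          (intervalIntegral.integral_add_adjacent_intervals (hg _ _) (hg _ _)).symm
      _ ≤ (3 * C + 2 * K) * (X / 2) ^ α + C * (X / 2) ^ α := add_le_add hhalf hblock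
      _ ≤ (3 * C + 2 * K) * (4 / 3 * (X / 2) ^ α) := by
          have : 0 ≤ K * (X / 2) ^ α := by positivity
          linarith
      _ ≤ (3 * C + 2 * K) * (2 ^ α * (X / 2) ^ α) := by gcongr
      _ = (3 * C + 2 * K) * X ^ α := by
          rw [← Real.mul_rpow zero_le_two (by linarith), mul_div_cancel₀ X two_ne_zero]

variable {f : ℕ → ℝ}

theorem integrableOn_abs_remainderSum (hb : ∀ n, f n ∈ Set.Icc (-1) 1) (a b : ℝ) :
    IntegrableOn (fun v ↦ |remainderSum f v|) (Set.Ioc a b) :=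
  .of_bound measure_Ioc_lt_top (measurable_remainderSum f).abs.aestronglyMeasurable 480
    (.of_forall fun v ↦ by simpa using abs_remainderSum_le hb v)

theorem intervalIntegrable_abs_remainderSum (hb : ∀ n, f n ∈ Set.Icc (-1) 1) (a b : ℝ) :
    IntervalIntegrable (fun v ↦ |remainderSum f v|) volume a b :=
  ⟨integrableOn_abs_remainderSum hb a b, integrableOn_abs_remainderSum hb b a⟩

theorem intervalIntegrable_remainderSum_sq (hb : ∀ n, f n ∈ Set.Icc (-1) 1) (a b : ℝ) :
    IntervalIntegrable (fun v ↦ remainderSum f v ^ 2) volume a b := by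
  have hbdd (v : ℝ) : ‖remainderSum f v ^ 2‖ ≤ 480 ^ 2 := by
    rw [norm_pow]
    gcongr
    exact abs_remainderSum_le hb v
  have hint (a b : ℝ) : IntegrableOn (fun v ↦ remainderSum f v ^ 2) (Set.Ioc a b) :=
    .of_bound measure_Ioc_lt_top ((measurable_remainderSum f).pow_const 2).aestronglyMeasurable _
      (.of_forall hbdd)
  exact ⟨hint a b, hint b a⟩

theorem intervalIntegrable_vonMangoldtRemainderSum_sq (hb : ∀ n, f n ∈ Set.Icc (-1) 1) (a b : ℝ) :
    IntervalIntegrable (fun v ↦ vonMangoldtRemainderSum f v ^ 2) volume a b := by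
  have hint := integrable_vonMangoldtRemainderSum_sq_mul_exp hb one_pos
  refine (hint.intervalIntegrable.mul_continuousOn (g := fun v ↦ Real.exp (2 * 1 * v))
    (by fun_prop)).congr fun v _ ↦ ?_
  simp only [mul_assoc, ← Real.exp_add, neg_add_cancel, Real.exp_zero, mul_one]

theorem exists_intervalIntegral_vonMangoldtRemainderSum_sq_le :
    ∃ C, 0 < C ∧ ∀ f : ℕ → ℝ, IsCM f → (∀ n, f n ∈ Set.Icc (-1) 1) → ∀ V, 1 ≤ V →
      ∫ v in V..2 * V, vonMangoldtRemainderSum f v ^ 2 ≤ C * V ^ (4 / Real.pi + 1) := by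
  obtain ⟨C, hC, hmean⟩ := exists_integral_vonMangoldtRemainderSum_sq_mul_exp_le
  refine ⟨Real.exp 4 * C, by positivity, fun f hf hb V hV ↦ ?_⟩
  have hV0 : 0 < V := by linarith
  have hint := integrable_vonMangoldtRemainderSum_sq_mul_exp hb (inv_pos.2 hV0)
  have hpt (v : ℝ) (hv : v ∈ Set.Icc V (2 * V)) : vonMangoldtRemainderSum f v ^ 2 ≤
      Real.exp 4 * (vonMangoldtRemainderSum f v ^ 2 * Real.exp (-(2 * V⁻¹ * v))) := by
    have hweight : 1 ≤ Real.exp 4 * Real.exp (-(2 * V⁻¹ * v)) := by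
      rw [← Real.exp_add]
      refine Real.one_le_exp ?_
      have : V⁻¹ * v ≤ 2 := by
        rw [inv_mul_le_iff₀ hV0]
        linarith [hv.2]
      linarith
    rw [mul_left_comm]
    exact le_mul_of_one_le_right (sq_nonneg _) hweight
  calc ∫ v in V..2 * V, vonMangoldtRemainderSum f v ^ 2
      ≤ ∫ v in V..2 * V,
          Real.exp 4 * (vonMangoldtRemainderSum f v ^ 2 * Real.exp (-(2 * V⁻¹ * v))) :=
        intervalIntegral.integral_mono_on (by linarith)
          (intervalIntegrable_vonMangoldtRemainderSum_sq hb _ _)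
          (hint.const_mul _).intervalIntegrable hpt
    _ ≤ Real.exp 4 * ∫ v, vonMangoldtRemainderSum f v ^ 2 * Real.exp (-(2 * V⁻¹ * v)) := by
        rw [intervalIntegral.integral_const_mul, intervalIntegral.integral_of_le (by linarith)]
        gcongr ?_ * ?_
        exact setIntegral_le_integral hint (.of_forall fun v ↦ by positivity)
    _ ≤ Real.exp 4 * (C * V⁻¹ ^ (-(4 / Real.pi) - 1)) := by
        gcongr
        exact hmean f hf hb V⁻¹ (by positivity) (inv_le_one_of_one_le₀ hV)
    _ = Real.exp 4 * C * V ^ (4 / Real.pi + 1) := by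
        rw [Real.inv_rpow hV0.le, ← Real.rpow_neg hV0.le, neg_sub', neg_neg, sub_neg_eq_add,
          mul_assoc]

theorem IsCM.mul_remainderSum_sq_le (hf : IsCM f) (hb : ∀ n, f n ∈ Set.Icc (-1) 1) (v : ℝ) :
    (v * remainderSum f v) ^ 2 ≤ 2 * vonMangoldtRemainderSum f v ^ 2 + 2 * 1920 ^ 2 := by
  rw [hf.mul_remainderSum v]
  have hsq : logConv f (fun u ↦ u * remainderKernel u) v ^ 2 ≤ 1920 ^ 2 := by
    rw [← sq_abs]
    gcongr
    exact abs_logConv_mul_remainderKernel_le hb v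
  linarith [add_sq_le (a := vonMangoldtRemainderSum f v)
    (b := logConv f (fun u ↦ u * remainderKernel u) v)]

theorem IsCM.sq_mul_intervalIntegral_remainderSum_sq_le (hf : IsCM f)
    (hb : ∀ n, f n ∈ Set.Icc (-1) 1) {V : ℝ} (hV : 0 ≤ V) :
    V ^ 2 * ∫ v in V..2 * V, remainderSum f v ^ 2 ≤
      2 * (∫ v in V..2 * V, vonMangoldtRemainderSum f v ^ 2) + 2 * 1920 ^ 2 * V := by
  have hint := (intervalIntegrable_vonMangoldtRemainderSum_sq hb V (2 * V)).const_mul 2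
  have hpt (v : ℝ) (hv : v ∈ Set.Icc V (2 * V)) :
      V ^ 2 * remainderSum f v ^ 2 ≤ 2 * vonMangoldtRemainderSum f v ^ 2 + 2 * 1920 ^ 2 := by
    calc V ^ 2 * remainderSum f v ^ 2 ≤ v ^ 2 * remainderSum f v ^ 2 := by
          gcongr
          exact hv.1
      _ = (v * remainderSum f v) ^ 2 := (mul_pow _ _ _).symm
      _ ≤ _ := hf.mul_remainderSum_sq_le hb v
  calc V ^ 2 * ∫ v in V..2 * V, remainderSum f v ^ 2
      = ∫ v in V..2 * V, V ^ 2 * remainderSum f v ^ 2 :=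
        (intervalIntegral.integral_const_mul _ _).symm
    _ ≤ ∫ v in V..2 * V, (2 * vonMangoldtRemainderSum f v ^ 2 + 2 * 1920 ^ 2) :=
        intervalIntegral.integral_mono_on (by linarith)
          ((intervalIntegrable_remainderSum_sq hb _ _).const_mul _)
          (hint.add intervalIntegrable_const) hpt
    _ = 2 * (∫ v in V..2 * V, vonMangoldtRemainderSum f v ^ 2) + 2 * 1920 ^ 2 * V := by
        rw [intervalIntegral.integral_add hint intervalIntegrable_const,
          intervalIntegral.integral_const_mul, intervalIntegral.integral_const, smul_eq_mul]
        ring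

theorem exists_intervalIntegral_remainderSum_sq_le :
    ∃ C, 0 < C ∧ ∀ f : ℕ → ℝ, IsCM f → (∀ n, f n ∈ Set.Icc (-1) 1) → ∀ V, 1 ≤ V →
      ∫ v in V..2 * V, remainderSum f v ^ 2 ≤ C * V ^ (4 / Real.pi - 1) := by
  obtain ⟨C, hC, hmean⟩ := exists_intervalIntegral_vonMangoldtRemainderSum_sq_le
  refine ⟨2 * C + 2 * 1920 ^ 2, by positivity, fun f hf hb V hV ↦ ?_⟩
  have hV0 : 0 < V := by linarith
  have hpow : V ^ 2 * V ^ (4 / Real.pi - 1) = V ^ (4 / Real.pi + 1) := by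
    rw [← Real.rpow_two, ← Real.rpow_add hV0]
    congr 1
    ring
  refine le_of_mul_le_mul_left ?_ (pow_pos hV0 2)
  calc V ^ 2 * ∫ v in V..2 * V, remainderSum f v ^ 2
      ≤ 2 * (∫ v in V..2 * V, vonMangoldtRemainderSum f v ^ 2) + 2 * 1920 ^ 2 * V :=
        hf.sq_mul_intervalIntegral_remainderSum_sq_le hb hV0.le
    _ ≤ 2 * (C * V ^ (4 / Real.pi + 1)) + 2 * 1920 ^ 2 * V ^ (4 / Real.pi + 1) := by
        gcongr
        · exact hmean f hf hb V hV
        · exact Real.self_le_rpow_of_one_le hV (le_add_of_nonneg_left (by positivity))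
    _ = V ^ 2 * ((2 * C + 2 * 1920 ^ 2) * V ^ (4 / Real.pi - 1)) := by
        rw [← hpow]
        ring

theorem exists_intervalIntegral_abs_remainderSum_le :
    ∃ C, 0 < C ∧ ∀ f : ℕ → ℝ, IsCM f → (∀ n, f n ∈ Set.Icc (-1) 1) → ∀ V, 1 ≤ V →
      ∫ v in V..2 * V, |remainderSum f v| ≤ C * V ^ (2 / Real.pi) := by
  obtain ⟨C, hC, hmean⟩ := exists_intervalIntegral_remainderSum_sq_le
  refine ⟨C + 1, by positivity, fun f hf hb V hV ↦ ?_⟩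
  have hV0 : 0 < V := by linarith
  have hsq : V ^ (1 - 2 / Real.pi) * V ^ (4 / Real.pi - 1) = V ^ (2 / Real.pi) := by
    rw [← Real.rpow_add hV0]
    congr 1
    ring
  have hlen : V / V ^ (1 - 2 / Real.pi) = V ^ (2 / Real.pi) := by
    rw [← Real.rpow_one_sub' hV0.le (by simp [Real.pi_ne_zero]), sub_sub_cancel]
  calc ∫ v in V..2 * V, |remainderSum f v|
      ≤ V ^ (1 - 2 / Real.pi) * (∫ v in V..2 * V, remainderSum f v ^ 2) +
          (2 * V - V) / V ^ (1 - 2 / Real.pi) :=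
        intervalIntegral_abs_le (by linarith) (by positivity)
          (intervalIntegrable_abs_remainderSum hb _ _) (intervalIntegrable_remainderSum_sq hb _ _)
    _ ≤ V ^ (1 - 2 / Real.pi) * (C * V ^ (4 / Real.pi - 1)) +
          (2 * V - V) / V ^ (1 - 2 / Real.pi) := by
        gcongr
        exact hmean f hf hb V hV
    _ = (C + 1) * V ^ (2 / Real.pi) := by
        rw [mul_left_comm, hsq, two_mul, add_sub_cancel_right, hlen, add_one_mul]

theorem one_half_lt_two_div_pi : 1 / 2 < 2 / Real.pi := by
  rw [div_lt_div_iff₀ two_pos Real.pi_pos]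
  linarith [Real.pi_lt_four]

theorem exists_intervalIntegral_zero_abs_remainderSum_le :
    ∃ C, 0 < C ∧ ∀ f : ℕ → ℝ, IsCM f → (∀ n, f n ∈ Set.Icc (-1) 1) → ∀ X, 1 ≤ X →
      ∫ v in (0 : ℝ)..X, |remainderSum f v| ≤ C * X ^ (2 / Real.pi) := by
  obtain ⟨C, hC, hdyadic⟩ := exists_intervalIntegral_abs_remainderSum_le
  exact ⟨3 * C + 2 * 480, by positivity, fun f hf hb X hX ↦
    intervalIntegral_zero_le_mul_rpow_of_dyadic hC.le (by norm_num) one_half_lt_two_div_pi.le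
      (intervalIntegrable_abs_remainderSum hb) (abs_remainderSum_le hb) (hdyadic f hf hb) hX⟩

end FirstMoment

/-! ### Pointwise decay -/

section WindowAverage

open MeasureTheory

theorem sum_mul_setIntegral_le_mul_setIntegral {α ι : Type*} [MeasurableSpace α] {μ : Measure α}
    {A : Set α} {s : ι → Set α} [∀ x, DecidablePred fun i ↦ x ∈ s i] {S : Finset ι} {c : ι → ℝ}
    {g : α → ℝ} {B : ℝ} (hs : ∀ i, MeasurableSet (s i)) (hsA : ∀ i ∈ S, s i ⊆ A)
    (hg : IntegrableOn g A μ) (hg0 : ∀ x, 0 ≤ g x) (hB : ∀ x, ∑ i ∈ S with x ∈ s i, c i ≤ B) :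
    ∑ i ∈ S, c i * ∫ x in s i, g x ∂μ ≤ B * ∫ x in A, g x ∂μ := by
  have hint (i : ι) : Integrable (fun x ↦ c i * (s i).indicator g x) (μ.restrict A) :=
    (hg.indicator (hs i)).const_mul _
  have hrestrict (i : ι) (hi : i ∈ S) :
      c i * ∫ x in s i, g x ∂μ = ∫ x in A, c i * (s i).indicator g x ∂μ := by
    rw [integral_const_mul, setIntegral_indicator (hs i), Set.inter_eq_right.2 (hsA i hi)]
  calc ∑ i ∈ S, c i * ∫ x in s i, g x ∂μ
      = ∫ x in A, ∑ i ∈ S, c i * (s i).indicator g x ∂μ := by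
        rw [sum_congr rfl hrestrict, integral_finsetSum _ fun i _ ↦ hint i]
    _ ≤ ∫ x in A, B * g x ∂μ := by
        refine integral_mono (integrable_finsetSum _ fun i _ ↦ hint i) (hg.const_mul B) fun x ↦ ?_
        calc ∑ i ∈ S, c i * (s i).indicator g x = (∑ i ∈ S with x ∈ s i, c i) * g x := by
              simp only [Set.indicator_apply, mul_ite, mul_zero, ← sum_filter, sum_mul]
          _ ≤ B * g x := mul_le_mul_of_nonneg_right (hB x) (hg0 x)
    _ = B * ∫ x in A, g x ∂μ := integral_const_mul _ _

theorem abs_remainderSum_le_average_add {f : ℕ → ℝ} (hb : ∀ n, f n ∈ Set.Icc (-1) 1) (u : ℝ)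
    {η : ℝ} (hη : 0 < η) :
    |remainderSum f u| ≤
      1 / η * (∫ v in Set.Ioc u (u + η), |remainderSum f v|) + 2720 * (η + Real.exp (-u)) := by
  have hlip (v : ℝ) (hv : v ∈ Set.Ioc u (u + η)) :
      |remainderSum f u| ≤ |remainderSum f v| + 2720 * (η + Real.exp (-u)) := by
    have hsub := abs_remainderSum_sub_le hb hv.1.le
    have hexp : Real.exp (-v) ≤ Real.exp (-u) := Real.exp_le_exp.2 (by linarith [hv.1])
    have htriangle := abs_sub_abs_le_abs_sub (remainderSum f u) (remainderSum f v)
    rw [abs_sub_comm] at htriangle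
    linarith [hv.2]
  have hmono := setIntegral_mono_on (integrableOn_const (μ := volume) (by simp))
    ((integrableOn_abs_remainderSum hb u (u + η)).add (integrableOn_const (by simp)))
    measurableSet_Ioc hlip
  rw [Pi.add_def, integral_add (integrableOn_abs_remainderSum hb _ _)
    (integrableOn_const (by simp))] at hmono
  simp only [setIntegral_const, Real.volume_real_Ioc, add_sub_cancel_left, max_eq_left hη.le,
    smul_eq_mul] at hmono
  refine le_of_mul_le_mul_left (hmono.trans_eq ?_) hη
  field

end WindowAverage

section Decay

open MeasureTheory
open scoped ArithmeticFunction.vonMangoldt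

theorem vonMangoldt_div_natCast_nonneg (d : ℕ) : 0 ≤ Λ d / d :=
  div_nonneg ArithmeticFunction.vonMangoldt_nonneg d.cast_nonneg

-- The condition on `v` places `d` in the interval `(exp (X - v), exp (X - v + η)]`.
theorem exists_sum_vonMangoldt_div_mem_window_le :
    ∃ C, 0 < C ∧ ∀ X W η : ℝ, 1 ≤ W → 1 / W ≤ η → η ≤ 1 → ∀ v,
      ∑ d ∈ Icc 1 ⌊Real.exp X⌋₊ with
        W + 1 < Real.log (d : ℕ) ∧ v ∈ Set.Ioc (X - Real.log d) (X - Real.log d + η), Λ d / d ≤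
          C * η := by
  obtain ⟨C, hC, hshort⟩ := exists_sum_Ioc_vonMangoldt_div_le
  refine ⟨C, hC, fun X W η hW hWη hη v ↦ ?_⟩
  rcases lt_or_ge (X - v) W with hlt | hge
  · have : 0 ≤ η := le_trans (by positivity) hWη
    rw [filter_false_of_mem, sum_empty]
    · positivity
    · rintro d - ⟨hd, -, hv⟩
      linarith
  have hD : 1 < Real.exp (X - v) := Real.one_lt_exp_iff.2 (by linarith)
  have hlog : 1 / Real.log (Real.exp (X - v)) ≤ η := by
    rw [Real.log_exp]
    exact (one_div_le_one_div_of_le (by linarith) hge).trans hWη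
  refine (sum_le_sum_of_subset_of_nonneg (fun d hd ↦ ?_)
    fun d _ _ ↦ vonMangoldt_div_natCast_nonneg d).trans (hshort _ η hD hlog hη)
  obtain ⟨hd1, -, hv1, hv2⟩ := mem_filter.1 hd
  have hd0 : (0 : ℝ) < d := by exact_mod_cast (mem_Icc.1 hd1).1
  rw [mem_Ioc, Nat.floor_lt (Real.exp_pos _).le, ← Real.exp_add,
    Nat.le_floor_iff (Real.exp_pos _).le, ← Real.lt_log_iff_exp_lt hd0,
    ← Real.log_le_iff_le_exp hd0]
  constructor <;> linarith

theorem exists_sum_vonMangoldt_div_mul_window_integral_le :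
    ∃ C, 0 < C ∧ ∀ f : ℕ → ℝ, IsCM f → (∀ n, f n ∈ Set.Icc (-1) 1) → ∀ X W η : ℝ, 1 ≤ X →
      1 ≤ W → 1 / W ≤ η → η ≤ 1 →
      ∑ d ∈ Icc 1 ⌊Real.exp X⌋₊ with W + 1 < Real.log (d : ℕ),
        Λ d / d * ∫ v in Set.Ioc (X - Real.log d) (X - Real.log d + η), |remainderSum f v| ≤
          C * η * X ^ (2 / Real.pi) := by
  obtain ⟨B, hB, hwindow⟩ := exists_sum_vonMangoldt_div_mem_window_le
  obtain ⟨L, hL, hmoment⟩ := exists_intervalIntegral_zero_abs_remainderSum_le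
  refine ⟨B * L, by positivity, fun f hf hb X W η hX hW hWη hη ↦ ?_⟩
  have : 0 ≤ η := le_trans (by positivity) hWη
  calc _ ≤ B * η * ∫ v in Set.Ioc 0 X, |remainderSum f v| := by
        refine sum_mul_setIntegral_le_mul_setIntegral (fun _ ↦ measurableSet_Ioc) (fun d hd ↦ ?_)
          (integrableOn_abs_remainderSum hb 0 X) (fun _ ↦ abs_nonneg _) fun v ↦ ?_
        · obtain ⟨hd1, hd2⟩ := mem_filter.1 hd
          have hdX := (mem_Icc_floor_exp.1 hd1).2
          exact Set.Ioc_subset_Ioc hdX (by linarith)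
        · rw [filter_filter]
          exact hwindow X W η hW hWη hη v
    _ ≤ B * η * (L * X ^ (2 / Real.pi)) := by
        rw [← intervalIntegral.integral_of_le (by linarith)]
        gcongr
        exact hmoment f hf hb X hX
    _ = B * L * η * X ^ (2 / Real.pi) := by ring

theorem exists_sum_vonMangoldt_div_mul_add_exp_le :
    ∃ C, 0 < C ∧ ∀ X η : ℝ, 0 ≤ X → 0 ≤ η →
      ∑ d ∈ Icc 1 ⌊Real.exp X⌋₊, Λ d / d * (η + Real.exp (-(X - Real.log d))) ≤
        η * (X + C) + C := by
  obtain ⟨M, hM, hmertens⟩ := exists_sum_vonMangoldt_div_le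
  have : 0 < Real.log 4 := Real.log_pos (by norm_num)
  refine ⟨M + (Real.log 4 + 4), by positivity, fun X η hX hη ↦ ?_⟩
  have hψ : (∑ d ∈ Icc 1 ⌊Real.exp X⌋₊, Λ d) / Real.exp X ≤ Real.log 4 + 4 := by
    rw [div_le_iff₀ (Real.exp_pos X)]
    exact Chebyshev.psi_le_const_mul_self (Real.exp_pos X).le
  calc ∑ d ∈ Icc 1 ⌊Real.exp X⌋₊, Λ d / d * (η + Real.exp (-(X - Real.log d)))
      = η * ∑ d ∈ Icc 1 ⌊Real.exp X⌋₊, Λ d / d +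
          (∑ d ∈ Icc 1 ⌊Real.exp X⌋₊, Λ d) / Real.exp X := by
        rw [mul_sum, sum_div, ← sum_add_distrib]
        refine sum_congr rfl fun d hd ↦ ?_
        have hd0 : d ≠ 0 := by linarith [(mem_Icc.1 hd).1]
        rw [exp_neg_sub_log_natCast hd0]
        field
    _ ≤ η * (X + M) + (Real.log 4 + 4) := by
        gcongr
        exact hmertens X hX
    _ ≤ η * (X + (M + (Real.log 4 + 4))) + (M + (Real.log 4 + 4)) := by
        have : 0 ≤ η * (Real.log 4 + 4) := by positivity
        linarith

theorem exists_sum_log_gt_vonMangoldt_div_mul_abs_remainderSum_le :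
    ∃ C, 0 < C ∧ ∀ f : ℕ → ℝ, IsCM f → (∀ n, f n ∈ Set.Icc (-1) 1) → ∀ X W η : ℝ, 1 ≤ X →
      1 ≤ W → 1 / W ≤ η → η ≤ 1 →
      ∑ d ∈ Icc 1 ⌊Real.exp X⌋₊ with W + 1 < Real.log (d : ℕ),
        Λ d / d * |remainderSum f (X - Real.log d)| ≤ C * (X ^ (2 / Real.pi) + η * X + 1) := by
  obtain ⟨A, hA, haverage⟩ := exists_sum_vonMangoldt_div_mul_window_integral_le
  obtain ⟨M, hM, herror⟩ := exists_sum_vonMangoldt_div_mul_add_exp_le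
  refine ⟨A + 2720 * (1 + 2 * M), by positivity, fun f hf hb X W η hX hW hWη hη ↦ ?_⟩
  have hX0 : 0 ≤ X := by linarith
  have hη0 : 0 < η := lt_of_lt_of_le (by positivity) hWη
  set S := {d ∈ Icc 1 ⌊Real.exp X⌋₊ | W + 1 < Real.log (d : ℕ)}
  have herrorS : ∑ d ∈ S, Λ d / d * (η + Real.exp (-(X - Real.log d))) ≤ η * (X + M) + M :=
    (sum_le_sum_of_subset_of_nonneg (filter_subset _ _) fun d _ _ ↦
      mul_nonneg (vonMangoldt_div_natCast_nonneg d) (by positivity)).trans (herror X η hX0 hη0.le)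
  calc ∑ d ∈ S, Λ d / d * |remainderSum f (X - Real.log d)|
      ≤ ∑ d ∈ S, Λ d / d *
          (1 / η * (∫ v in Set.Ioc (X - Real.log d) (X - Real.log d + η), |remainderSum f v|) +
            2720 * (η + Real.exp (-(X - Real.log d)))) :=
        sum_le_sum fun d _ ↦ mul_le_mul_of_nonneg_left (abs_remainderSum_le_average_add hb _ hη0)
          (vonMangoldt_div_natCast_nonneg d)
    _ = 1 / η * (∑ d ∈ S, Λ d / d *
            ∫ v in Set.Ioc (X - Real.log d) (X - Real.log d + η), |remainderSum f v|) +
          2720 * ∑ d ∈ S, Λ d / d * (η + Real.exp (-(X - Real.log d))) := by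
        rw [mul_sum, mul_sum, ← sum_add_distrib]
        refine sum_congr rfl fun d _ ↦ ?_
        ring
    _ ≤ 1 / η * (A * η * X ^ (2 / Real.pi)) + 2720 * (η * (X + M) + M) := by
        gcongr
        exact haverage f hf hb X W η hX hW hWη hη
    _ = A * X ^ (2 / Real.pi) + 2720 * (η * (X + M) + M) := by field
    _ ≤ (A + 2720 * (1 + 2 * M)) * (X ^ (2 / Real.pi) + η * X + 1) := by
        have : 0 ≤ X ^ (2 / Real.pi) := by positivity
        have : η * M ≤ 1 * M := by gcongr
        have : 0 ≤ A * (η * X + 1) := by positivity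
        have : 0 ≤ (1 + 2 * M) * X ^ (2 / Real.pi) + 2 * M * (η * X) + 1 := by positivity
        linarith

theorem exists_sum_log_le_vonMangoldt_div_mul_abs_remainderSum_le :
    ∃ C, 0 < C ∧ ∀ f : ℕ → ℝ, (∀ n, f n ∈ Set.Icc (-1) 1) → ∀ X W : ℝ, 1 ≤ W →
      ∑ d ∈ Icc 1 ⌊Real.exp X⌋₊ with ¬W + 1 < Real.log (d : ℕ),
        Λ d / d * |remainderSum f (X - Real.log d)| ≤ C * W := by
  obtain ⟨M, hM, hmertens⟩ := exists_sum_vonMangoldt_div_le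
  refine ⟨480 * (2 + M), by positivity, fun f hb X W hW ↦ ?_⟩
  calc ∑ d ∈ Icc 1 ⌊Real.exp X⌋₊ with ¬W + 1 < Real.log (d : ℕ),
        Λ d / d * |remainderSum f (X - Real.log d)|
      ≤ ∑ d ∈ Icc 1 ⌊Real.exp X⌋₊ with ¬W + 1 < Real.log (d : ℕ), Λ d / d * 480 :=
        sum_le_sum fun d _ ↦ mul_le_mul_of_nonneg_left (abs_remainderSum_le hb _)
          (vonMangoldt_div_natCast_nonneg d)
    _ ≤ ∑ d ∈ Icc 1 ⌊Real.exp (W + 1)⌋₊, Λ d / d * 480 := by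
        refine sum_le_sum_of_subset_of_nonneg (fun d hd ↦ ?_) fun d _ _ ↦
          mul_nonneg (vonMangoldt_div_natCast_nonneg d) (by norm_num)
        obtain ⟨hd1, hd2⟩ := mem_filter.1 hd
        exact mem_Icc_floor_exp.2 ⟨(mem_Icc.1 hd1).1, by linarith⟩
    _ ≤ (W + 1 + M) * 480 := by
        rw [← sum_mul]
        gcongr
        exact hmertens _ (by linarith)
    _ ≤ 480 * (2 + M) * W := by nlinarith

theorem exists_abs_vonMangoldtRemainderSum_le_rpow :
    ∃ C, 0 < C ∧ ∀ f : ℕ → ℝ, IsCM f → (∀ n, f n ∈ Set.Icc (-1) 1) → ∀ X, 1 ≤ X →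
      |vonMangoldtRemainderSum f X| ≤ C * X ^ (2 / Real.pi) := by
  obtain ⟨A, hA, hsmall⟩ := exists_sum_log_le_vonMangoldt_div_mul_abs_remainderSum_le
  obtain ⟨B, hB, hlarge⟩ := exists_sum_log_gt_vonMangoldt_div_mul_abs_remainderSum_le
  refine ⟨A + B * 3, by positivity, fun f hf hb X hX ↦ ?_⟩
  have hX0 : 0 < X := by linarith
  set W := X ^ (2 / Real.pi) with hW
  have hW1 : 1 ≤ W := Real.one_le_rpow hX (by positivity)
  have hη : W / X = X ^ (2 / Real.pi - 1) := (Real.rpow_sub_one hX0.ne' _).symm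
  have hη1 : W / X ≤ 1 := by
    rw [hη]
    refine Real.rpow_le_one_of_one_le_of_nonpos hX ?_
    rw [sub_nonpos, div_le_one Real.pi_pos]
    linarith [Real.pi_gt_three]
  have hWη : 1 / W ≤ W / X := by
    rw [hη, hW, one_div, ← Real.rpow_neg hX0.le]
    exact Real.rpow_le_rpow_of_exponent_le hX (by linarith [one_half_lt_two_div_pi])
  calc |vonMangoldtRemainderSum f X|
      ≤ ∑ d ∈ Icc 1 ⌊Real.exp X⌋₊, Λ d / d * |remainderSum f (X - Real.log d)| :=
        abs_vonMangoldtRemainderSum_le_sum hb X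
    _ ≤ B * (W + W / X * X + 1) + A * W := by
        rw [← sum_filter_add_sum_filter_not _ fun d : ℕ ↦ W + 1 < Real.log d]
        exact add_le_add (hlarge f hf hb X W (W / X) hX hW1 hWη hη1) (hsmall f hb X W hW1)
    _ ≤ (A + B * 3) * W := by
        rw [div_mul_cancel₀ W hX0.ne']
        nlinarith

theorem exists_mul_abs_remainderSum_le_rpow :
    ∃ C, 0 < C ∧ ∀ f : ℕ → ℝ, IsCM f → (∀ n, f n ∈ Set.Icc (-1) 1) → ∀ X, 1 ≤ X →
      X * |remainderSum f X| ≤ C * X ^ (2 / Real.pi) := by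
  obtain ⟨C, hC, hdecay⟩ := exists_abs_vonMangoldtRemainderSum_le_rpow
  refine ⟨C + 1920, by positivity, fun f hf hb X hX ↦ ?_⟩
  have hone : 1 ≤ X ^ (2 / Real.pi) := Real.one_le_rpow hX (by positivity)
  calc X * |remainderSum f X|
      = |vonMangoldtRemainderSum f X + logConv f (fun u ↦ u * remainderKernel u) X| := by
        rw [← hf.mul_remainderSum, abs_mul, abs_of_pos (by linarith : 0 < X)]
    _ ≤ |vonMangoldtRemainderSum f X| + |logConv f (fun u ↦ u * remainderKernel u) X| :=
        abs_add_le _ _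
    _ ≤ C * X ^ (2 / Real.pi) + 1920 :=
        add_le_add (hdecay f hf hb X hX) (abs_logConv_mul_remainderKernel_le hb X)
    _ ≤ (C + 1920) * X ^ (2 / Real.pi) := by linarith

end Decay

theorem stmt5 :
    ∃ c : ℝ, 0 < c ∧
      ∀ f : ℕ → ℝ, (∀ n, f n ∈ Set.Icc (-1 : ℝ) 1) → IsCM f →
        ∀ x : ℝ, 3 ≤ x →
          -(c / (Real.log x) ^ ((1 : ℝ) - 2 / Real.pi)) ≤ Lsum f x := by
  obtain ⟨C, hC, hdecay⟩ := exists_mul_abs_remainderSum_le_rpow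
  refine ⟨C, hC, fun f hb hf x hx ↦ ?_⟩
  have hx0 : 0 < x := by linarith
  have hlog : 1 ≤ Real.log x := by
    rw [Real.le_log_iff_exp_le hx0]
    linarith [Real.exp_one_lt_three]
  have hlog0 : 0 < Real.log x := by linarith
  have habs : |remainderSum f (Real.log x)| ≤ C / Real.log x ^ (1 - 2 / Real.pi) := by
    rw [Real.rpow_sub hlog0, Real.rpow_one, div_div_eq_mul_div, le_div_iff₀ hlog0, mul_comm]
    exact hdecay f hf hb (Real.log x) hlog
  calc -(C / Real.log x ^ (1 - 2 / Real.pi)) ≤ remainderSum f (Real.log x) := (abs_le.1 habs).1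
    _ ≤ Lsum f (Real.exp (Real.log x)) := hf.remainderSum_le_Lsum hb _
    _ = Lsum f x := by rw [Real.exp_log hx0]
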